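/- arXiv:2006.14134 — 6 statements merged into one kernel-verified Lean document; each statement's English description precedes it below -/
import Mathlib

section
/- Let M be a finitely generated Λ-module. Then there exist non-negative integers r, s, t, positive integers n_1,…,n_s and m_1,…,m_t, and irreducible distinguished polynomials f_1,…,f_t ∈ ℤ_p[T], together with a Λ-module homomorphism from M to Λ^r ⊕ (⊕_{i=1}^{s} Λ/p^{n_i}Λ) ⊕ (⊕_{j=1}^{t} Λ/f_j^{m_j}Λ) whose kernel and cokernel are both finite (i.e., a pseudo-isomorphism from M to this elementary module). -/
/-!
The proof localizes so as to apply the structure theorem over a principal ideal domain, and then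
corrects the free part by passing to the bidual.

Let `R` be a Noetherian unique factorization domain and `a ≠ 0`. Inverting the nonzero elements
relatively prime to `a` gives a principal ideal domain whose nonzero primes are generated by prime
factors of `a` (`prime_ideal_eq_span`, by prime avoidance). Clearing denominators in the structure
theorem over this ring gives maps `α : M → E` and `β : E → M`, with `E` the sum of a free module
`R^n` and of modules `R ⧸ (q ^ e)` with `q ∣ a`, such that `β ∘ α` and `α ∘ β` are multiplication by
an element `s` relatively prime to `a` (`exists_maps_elementary`).

With `a = 1` this yields `g ≠ 0` killing the kernel and the cokernel of `M → M**`. With `a = g` it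
yields `E = R^n × E_tors` and `s` relatively prime to `g`. The map `M → M** × E_tors` given by
evaluation and by the torsion component of `α` has kernel and cokernel killed both by a power of `g`
and by a power of `s` (`exists_pseudoIso`). Over a regular local ring of dimension two duals are
free (`free_dual`), so the target is elementary.

For `R = ℤ_p[[T]]`, Weierstrass preparation shows that the primes are `p` and the irreducible
distinguished polynomials (`prime_classification`), and that two relatively prime elements lie
together in no prime ideal except the maximal ideal `(T, p)` (`eq_maximalIdeal_of_mem`). As the
quotients by powers of this ideal are finite, so is every finitely generated module killed by two
relatively prime elements (`finite_of_smul_eq_zero`).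
-/

/-- A polynomial over `ℤ_[p]` is *distinguished* if it is monic and all of its
coefficients other than the leading one are divisible by `p`. -/
def IsDistinguished (p : ℕ) [Fact p.Prime] (f : Polynomial ℤ_[p]) : Prop :=
  f.Monic ∧ ∀ i < f.natDegree, (p : ℤ_[p]) ∣ f.coeff i

/-- The elementary module `Λ^r ⊕ (⊕_{i} Λ/p^{n_i}Λ) ⊕ (⊕_{j} Λ/f_j^{m_j}Λ)` over
`Λ = ℤ_p[[T]]`. -/
abbrev ElementaryModule (p : ℕ) [Fact p.Prime] (r s t : ℕ)
    (n : Fin s → ℕ+) (m : Fin t → ℕ+) (f : Fin t → Polynomial ℤ_[p]) : Type :=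
  (Fin r → PowerSeries ℤ_[p]) ×
    ((i : Fin s) → PowerSeries ℤ_[p] ⧸
      Ideal.span {(p : PowerSeries ℤ_[p]) ^ (n i : ℕ)}) ×
    ((j : Fin t) → PowerSeries ℤ_[p] ⧸
      Ideal.span {((f j : Polynomial ℤ_[p]) : PowerSeries ℤ_[p]) ^ (m j : ℕ)})

universe u v
open scoped DirectSum TensorProduct

/-! ### Localization of a unique factorization domain away from finitely many primes -/

section General

variable {R : Type u} [CommRing R] [IsDomain R] [UniqueFactorizationMonoid R]

/-- The multiplicative set of nonzero elements of `R` having no common factor with `a`. -/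
def coprimeTo (a : R) : Submonoid R where
  carrier := {x | x ≠ 0 ∧ IsRelPrime x a}
  one_mem' := ⟨one_ne_zero, isRelPrime_one_left⟩
  mul_mem' hx hy := ⟨mul_ne_zero hx.1 hy.1, hx.2.mul_left hy.2⟩

lemma mem_coprimeTo {a x : R} : x ∈ coprimeTo a ↔ x ≠ 0 ∧ IsRelPrime x a := Iff.rfl

lemma coprimeTo_le (a : R) : coprimeTo a ≤ nonZeroDivisors R :=
  fun _ hx => mem_nonZeroDivisors_of_ne_zero hx.1

/-- The witness is the product of those prime factors of `a` that do not divide `y`. -/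
lemma exists_dvd_iff_not_dvd {a : R} (ha : a ≠ 0) (y : R) :
    ∃ z : R, ∀ r, Prime r → r ∣ a → (r ∣ z ↔ ¬ r ∣ y) := by
  classical
  obtain ⟨f, hf, hfa⟩ := UniqueFactorizationMonoid.exists_prime_factors a ha
  refine ⟨(f.filter (fun r => ¬ r ∣ y)).prod, fun r hr hra => ⟨fun h => ?_, fun h => ?_⟩⟩
  · obtain ⟨b, hb, hrb⟩ := hr.exists_mem_multiset_dvd h
    rw [Multiset.mem_filter] at hb
    have := hr.associated_of_dvd (hf b hb.1) hrb
    rw [this.dvd_iff_dvd_left]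
    exact hb.2
  · obtain ⟨b, hb, hrb⟩ := hr.exists_mem_multiset_dvd (hfa.symm.dvd_iff_dvd_right.1 hra)
    have := hr.associated_of_dvd (hf b hb) hrb
    refine hrb.trans (Multiset.dvd_prod (Multiset.mem_filter.2 ⟨hb, ?_⟩))
    rwa [← this.dvd_iff_dvd_left]

/-- Prime avoidance: if `q ∣ a` is a prime not dividing `y`, the class of `y` modulo `q` contains
an element divisible by no prime factor of `a`. -/
lemma exists_add_mul_mem_coprimeTo {a q y : R} (ha : a ≠ 0) (hq : Prime q) (hqa : q ∣ a)
    (hy : ¬ q ∣ y) : ∃ z, y + q * z ∈ coprimeTo a := by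
  obtain ⟨z, hz⟩ := exists_dvd_iff_not_dvd ha y
  have key : ∀ r, Prime r → r ∣ a → ¬ r ∣ y + q * z := by
    intro r hr hra h
    by_cases hry : r ∣ y
    · have h1 : r ∣ q * z := (dvd_add_right hry).1 h
      rcases hr.dvd_or_dvd h1 with h2 | h2
      · exact hy ((hr.associated_of_dvd hq h2).dvd_iff_dvd_left.1 hry)
      · exact (hz r hr hra).1 h2 hry
    · exact hry ((dvd_add_left (((hz r hr hra).2 hry).mul_left q)).1 h)
  refine ⟨z, fun h0 => key q hq hqa (h0 ▸ dvd_zero _), ?_⟩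
  exact ((UniqueFactorizationMonoid.isRelPrime_iff_no_prime_factors ha).2
    fun r hra hr hrp => key r hrp hra hr).symm

lemma Prime.mem_coprimeTo_iff {a q : R} (hq : Prime q) : q ∈ coprimeTo a ↔ ¬ q ∣ a := by
  rw [mem_coprimeTo, hq.irreducible.isRelPrime_iff_not_dvd]
  exact ⟨fun h => h.2, fun h => ⟨hq.ne_zero, h⟩⟩

/-- The nonzero primes of the semilocal ring obtained by inverting `coprimeTo a` are generated by
the prime factors of `a`; by Cohen's criterion this ring is therefore principal. -/
lemma prime_ideal_eq_span {a : R} (ha : a ≠ 0) (P : Ideal (Localization (coprimeTo a)))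
    [hP : P.IsPrime] (hP0 : P ≠ ⊥) :
    ∃ q : R, Prime q ∧ q ∣ a ∧ P = Ideal.span {algebraMap R _ q} := by
  have hdisj : ∀ x ∈ coprimeTo a, algebraMap R (Localization (coprimeTo a)) x ∉ P :=
    fun x hx h => hP.ne_top (Ideal.eq_top_of_isUnit_mem _ h (IsLocalization.map_units _ ⟨x, hx⟩))
  set P' := P.comap (algebraMap R (Localization (coprimeTo a)))
  have hP'0 : P' ≠ ⊥ := by
    intro h
    apply hP0
    rw [← IsLocalization.map_under (coprimeTo a) _ P]
    change P'.map _ = ⊥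
    rw [h, Ideal.map_bot]
  have : P'.IsPrime := Ideal.IsPrime.comap _
  obtain ⟨q, hqP, hq⟩ := Ideal.IsPrime.exists_mem_prime_of_ne_bot this hP'0
  have hqa : q ∣ a := by
    by_contra h
    exact hdisj q (hq.mem_coprimeTo_iff.2 h) hqP
  refine ⟨q, hq, hqa, le_antisymm ?_ ((Ideal.span_singleton_le_iff_mem _).2 hqP)⟩
  rw [← IsLocalization.map_under (coprimeTo a) _ P, Ideal.map_le_iff_le_comap]
  intro y hy
  rw [Ideal.mem_comap, Ideal.mem_span_singleton]
  apply map_dvd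
  by_contra hqy
  obtain ⟨z, hz⟩ := exists_add_mul_mem_coprimeTo ha hq hqa hqy
  exact hdisj _ hz (P'.add_mem hy (P'.mul_mem_right _ hqP))

instance isDomain_coprimeTo (a : R) : IsDomain (Localization (coprimeTo a)) :=
  IsLocalization.isDomain_localization (coprimeTo_le a)

lemma isPrincipalIdealRing_coprimeTo {a : R} (ha : a ≠ 0) :
    IsPrincipalIdealRing (Localization (coprimeTo a)) := by
  refine IsPrincipalIdealRing.of_prime_ne_bot fun P hP hP0 => ?_
  obtain ⟨q, -, -, h⟩ := prime_ideal_eq_span ha P hP0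
  exact ⟨⟨_, h⟩⟩

end General

/-! ### Maps to elementary modules, up to multiplication by an element prime to `a` -/

section Denominators

variable {R : Type u} [CommRing R]

/-- Clearing denominators: an isomorphism between localizations of finite modules comes, up to
elements of `S`, from a pair of linear maps which are inverse to each other up to a common
element of `S`. -/
lemma exists_maps_of_localized_equiv [IsNoetherianRing R] (S : Submonoid R)
    {M E M' E' : Type*} [AddCommGroup M] [Module R M] [Module.Finite R M] [AddCommGroup E]
    [Module R E] [Module.Finite R E] [AddCommGroup M'] [Module R M'] [AddCommGroup E'] [Module R E']
    (f : M →ₗ[R] M') [IsLocalizedModule S f] (g : E →ₗ[R] E') [IsLocalizedModule S g]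
    (θ : M' ≃ₗ[R] E') :
    ∃ s ∈ S, ∃ (α : M →ₗ[R] E) (β : E →ₗ[R] M),
      (∀ x, β (α x) = s • x) ∧ ∀ x, α (β x) = s • x := by
  have := Module.finitePresentation_of_finite R M
  have := Module.finitePresentation_of_finite R E
  obtain ⟨α, s₁, hα⟩ := Module.FinitePresentation.exists_lift_of_isLocalizedModule S g
    (θ.toLinearMap ∘ₗ f)
  obtain ⟨β, s₂, hβ⟩ := Module.FinitePresentation.exists_lift_of_isLocalizedModule S f
    (θ.symm.toLinearMap ∘ₗ g)
  have hα' : ∀ x, g (α x) = (s₁ : R) • θ (f x) := fun x => LinearMap.congr_fun hα x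
  have hβ' : ∀ x, f (β x) = (s₂ : R) • θ.symm (g x) := fun x => LinearMap.congr_fun hβ x
  obtain ⟨s₃, h₃⟩ := Module.Finite.exists_smul_of_comp_eq_of_isLocalizedModule S f
    (β ∘ₗ α) ((s₁ * s₂ : R) • LinearMap.id) (by
      ext x; simp [hα', hβ', mul_smul, smul_comm (s₁ : R)])
  obtain ⟨s₄, h₄⟩ := Module.Finite.exists_smul_of_comp_eq_of_isLocalizedModule S g
    (α ∘ₗ β) ((s₁ * s₂ : R) • LinearMap.id) (by
      ext x; simp [hα', hβ', mul_smul])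
  have h₃' : ∀ x, (s₃ : R) • β (α x) = (s₃ : R) • (s₁ * s₂ : R) • x :=
    fun x => LinearMap.congr_fun h₃ x
  have h₄' : ∀ x, (s₄ : R) • α (β x) = (s₄ : R) • (s₁ * s₂ : R) • x :=
    fun x => LinearMap.congr_fun h₄ x
  refine ⟨s₃ * s₄ * (s₁ * s₂), (s₃ * s₄ * (s₁ * s₂)).2, α, (s₃ * s₄ : R) • β, fun x => ?_,
    fun x => ?_⟩
  · rw [LinearMap.smul_apply, mul_comm (s₃ : R), mul_smul, h₃']
    simp only [smul_smul]; ring_nf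
  · rw [LinearMap.smul_apply, map_smul, mul_smul, h₄']
    simp only [smul_smul]; ring_nf

/-- The localization of `R ⧸ (x)` is the quotient of the localization by `(x)`, for any ideal `I`
of the localization known to be generated by the image of `x`. -/
lemma exists_localizedModule_quotient (S : Submonoid R) (x : R) (I : Ideal (Localization S))
    (hI : I = Ideal.span {algebraMap R (Localization S) x}) :
    ∃ f : (R ⧸ Ideal.span {x}) →ₗ[R] (Localization S ⧸ I), IsLocalizedModule S f := by
  have : I = (Ideal.span {x}).localized' (Localization S) S (Algebra.linearMap R (Localization S)) := by
    rw [hI, Ideal.span, Ideal.span, Submodule.localized'_span]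
    simp
  subst this
  exact ⟨Submodule.toLocalizedQuotient' (Localization S) S (Algebra.linearMap R (Localization S)) _,
    inferInstance⟩

/-- Every finite module `M` becomes, after inverting `coprimeTo a`, a direct sum of a free module
and of modules `R ⧸ (q ^ e)` with `q` a prime factor of `a`: this is the structure theorem over the
principal ideal domain `Localization (coprimeTo a)`, with denominators cleared. -/
theorem exists_maps_elementary [IsDomain R] [UniqueFactorizationMonoid R] [IsNoetherianRing R]
    (M : Type v) [AddCommGroup M] [Module R M] [Module.Finite R M] {a : R} (ha : a ≠ 0) :
    ∃ (n : ℕ) (ι : Type u) (_ : Fintype ι) (q : ι → R) (e : ι → ℕ) (s : R)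
      (α : M →ₗ[R] (Fin n → R) × ((i : ι) → R ⧸ Ideal.span {q i ^ e i}))
      (β : ((Fin n → R) × ((i : ι) → R ⧸ Ideal.span {q i ^ e i})) →ₗ[R] M),
      (∀ i, Prime (q i) ∧ q i ∣ a) ∧ s ≠ 0 ∧ IsRelPrime s a ∧
      (∀ x, β (α x) = s • x) ∧ ∀ x, α (β x) = s • x := by
  have := isPrincipalIdealRing_coprimeTo ha
  set K := Localization (coprimeTo a)
  obtain ⟨n, ι, _, π, hπ, e, ⟨θ⟩⟩ :=
    Module.equiv_free_prod_directSum K (LocalizedModule (coprimeTo a) M)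
  have hq : ∀ i, ∃ q : R, Prime q ∧ q ∣ a ∧ Ideal.span {π i} = Ideal.span {algebraMap R K q} := by
    intro i
    have : (Ideal.span {π i}).IsPrime := 
      (Ideal.span_singleton_prime (hπ i).ne_zero).2 (hπ i).prime
    exact prime_ideal_eq_span ha _ (by simpa using (hπ i).ne_zero)
  choose q hqp hqa hqπ using hq
  have hf : ∀ i, ∃ f : (R ⧸ Ideal.span {q i ^ e i}) →ₗ[R] (K ⧸ Ideal.span {π i ^ e i}),
      IsLocalizedModule (coprimeTo a) f := fun i =>
    exists_localizedModule_quotient _ _ _ (by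
      rw [map_pow, ← Ideal.span_singleton_pow, ← Ideal.span_singleton_pow, hqπ])
  choose f hf using hf
  let θ' : LocalizedModule (coprimeTo a) M ≃ₗ[K]
      (Fin n → K) × ((i : ι) → K ⧸ Ideal.span {π i ^ e i}) := θ.trans
    ((Finsupp.linearEquivFunOnFinite K K (Fin n)).prodCongr
      (DirectSum.linearEquivFunOnFintype K ι _))
  let g₁ : (Fin n → R) →ₗ[R] (Fin n → K) :=
    .pi fun i => Algebra.linearMap R K ∘ₗ .proj i
  let g₂ : ((i : ι) → R ⧸ Ideal.span {q i ^ e i}) →ₗ[R] ((i : ι) → K ⧸ Ideal.span {π i ^ e i}) :=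
    .pi fun i => f i ∘ₗ .proj i
  obtain ⟨s, hs, α, β, h1, h2⟩ := exists_maps_of_localized_equiv (coprimeTo a)
    (LocalizedModule.mkLinearMap (coprimeTo a) M) (g₁.prodMap g₂) (θ'.restrictScalars R)
  exact ⟨n, ι, inferInstance, q, e, s, α, β, fun i => ⟨hqp i, hqa i⟩, hs.1, hs.2, h1, h2⟩

end Denominators

/-! ### Duality and the pseudo-isomorphism -/

section Duality

variable {R : Type u} [CommRing R]

lemma pow_smul_eq_zero_of_dvd {ι : Type*} [Fintype ι] {a : R} {q : ι → R} {e : ι → ℕ}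
    (hq : ∀ i, q i ∣ a) (v : (i : ι) → R ⧸ Ideal.span {q i ^ e i}) :
    a ^ (∑ i, e i) • v = 0 := by
  ext i
  obtain ⟨r, hr⟩ := Ideal.Quotient.mk_surjective (v i)
  rw [Pi.smul_apply, ← hr, Pi.zero_apply, ← Ideal.Quotient.mk_eq_mk, ← Submodule.Quotient.mk_smul,
    Submodule.Quotient.mk_eq_zero, Ideal.mem_span_singleton, smul_eq_mul]
  refine Dvd.dvd.mul_right ((pow_dvd_pow_of_dvd (hq i) _).trans (pow_dvd_pow a ?_)) r
  exact Finset.single_le_sum (f := e) (fun _ _ => Nat.zero_le _) (Finset.mem_univ i)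

variable [IsDomain R]

/-- If `β ∘ α = s` for maps between `M` and the sum of a free module and a torsion module, then `s`
kills the cokernel of `M → M**`. A functional on the middle module only sees the free part, so
`s • l` is an explicit combination of the coordinates of `α`, which gives a preimage
of `s • ψ`. -/
lemma smul_mem_range_eval {M T : Type*} [AddCommGroup M] [Module R M] [AddCommGroup T] [Module R T]
    {n : ℕ} {c s : R} (hc : c ≠ 0) (hT : ∀ t : T, c • t = 0)
    (α : M →ₗ[R] (Fin n → R) × T) (β : ((Fin n → R) × T) →ₗ[R] M)
    (h : ∀ x, β (α x) = s • x) (ψ : Module.Dual R (Module.Dual R M)) :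
    ∃ m, Module.Dual.eval R M m = s • ψ := by
  let pr : Fin n → Module.Dual R M := fun i => LinearMap.proj i ∘ₗ LinearMap.fst R _ _ ∘ₗ α
  have hβ : ∀ (l : Module.Dual R M) (y : Fin n → R) (t : T),
      l (β (y, t)) = ∑ i, y i * l (β (fun j => if i = j then 1 else 0, 0)) := by
    intro l y t
    have ht : l (β (0, t)) = 0 := by
      have : c • l (β (0, t)) = 0 := by
        rw [← map_smul, ← map_smul, Prod.smul_mk, hT, smul_zero, Prod.mk_zero_zero, map_zero,
          map_zero]
      exact (smul_eq_zero.1 this).resolve_left hc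
    have hy := LinearMap.pi_apply_eq_sum_univ (l ∘ₗ β ∘ₗ LinearMap.inl R (Fin n → R) T) y
    simp only [LinearMap.comp_apply, LinearMap.inl_apply, smul_eq_mul] at hy
    have : (y, t) = (y, (0 : T)) + (0, t) := by simp
    rw [this, map_add, map_add, ht, add_zero, hy]
  refine ⟨β (fun i => ψ (pr i), 0), ?_⟩
  ext l
  have hl : s • l = ∑ i, l (β (fun j => if i = j then 1 else 0, 0)) • pr i := by
    ext x
    rw [LinearMap.smul_apply, ← map_smul, ← h, ← Prod.mk.eta (p := α x), hβ]
    simp [LinearMap.sum_apply, pr, mul_comm]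
  rw [Module.Dual.eval_apply, hβ, LinearMap.smul_apply, ← map_smul, hl, map_sum]
  simp [mul_comm]

/-- The dual of a finite module over a regular local ring of dimension two, with maximal ideal
`(x, y)`, is free. By the local criterion it suffices that `𝔪 ⊗ M* → M*` is injective.
An element `x ⊗ d₁ + y ⊗ d₂` of the kernel satisfies `x * d₁ m = - y * d₂ m` for all `m`; since `x`
is prime and does not divide `y`, `d₂ = x • W` and `d₁ = - y • W` for a functional `W`, and then
the element vanishes. -/
lemma free_dual [IsLocalRing R] [IsNoetherianRing R] {x y : R}
    (hm : IsLocalRing.maximalIdeal R = Ideal.span {x, y}) (hx : Prime x) (hxy : ¬ x ∣ y)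
    (M : Type v) [AddCommGroup M] [Module R M] [Module.Finite R M] :
    Module.Free R (Module.Dual R M) := by
  have : Module.FinitePresentation R (Module.Dual R M) := by
    have : Module.Finite R (Module.Dual R M) := by infer_instance
    exact Module.finitePresentation_of_finite R _
  apply Module.free_of_maximalIdeal_rTensor_injective
  rw [injective_iff_map_eq_zero]
  intro z hz
  let x' : IsLocalRing.maximalIdeal R := ⟨x, hm ▸ Ideal.subset_span (by simp)⟩
  let y' : IsLocalRing.maximalIdeal R := ⟨y, hm ▸ Ideal.subset_span (by simp)⟩
  obtain ⟨d₁, d₂, rfl⟩ : ∃ d₁ d₂ : Module.Dual R M, z = x' ⊗ₜ[R] d₁ + y' ⊗ₜ[R] d₂ := by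
    clear hz
    induction z with
    | zero => exact ⟨0, 0, by simp⟩
    | add a b ha hb =>
      obtain ⟨a₁, a₂, rfl⟩ := ha
      obtain ⟨b₁, b₂, rfl⟩ := hb
      exact ⟨a₁ + b₁, a₂ + b₂, by simp only [TensorProduct.tmul_add]; abel⟩
    | tmul r d =>
      obtain ⟨u, v, huv⟩ := Ideal.mem_span_pair.1 (show (r : R) ∈ Ideal.span {x, y} by rw [← hm]; exact r.2)
      refine ⟨u • d, v • d, ?_⟩
      rw [← TensorProduct.smul_tmul, ← TensorProduct.smul_tmul, ← TensorProduct.add_tmul]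
      congr 1
      exact Subtype.ext huv.symm
  have hd : ∀ m, x * d₁ m + y * d₂ m = 0 := by
    intro m
    simp only [map_add, LinearMap.rTensor_tmul] at hz
    have := LinearMap.congr_fun (congrArg (TensorProduct.lid R (Module.Dual R M)) hz) m
    simpa [x', y'] using this
  have hdvd : ∀ m, ∃ c, d₂ m = x * c := fun m =>
    (hx.dvd_or_dvd (show x ∣ y * d₂ m from ⟨- d₁ m, by linear_combination hd m⟩)).resolve_left hxy
  choose w hw using hdvd
  let W : Module.Dual R M :=
    { toFun := w
      map_add' := fun a b => mul_left_cancel₀ hx.ne_zero (by rw [← hw, map_add, hw, hw]; ring)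
      map_smul' := fun r a => mul_left_cancel₀ hx.ne_zero (by
        rw [← hw, map_smul, hw]; simp; ring) }
  have h₂ : d₂ = x • W := by ext m; exact hw m
  have h₁ : d₁ = - (y • W) := by
    ext m
    apply mul_left_cancel₀ hx.ne_zero
    simp only [LinearMap.neg_apply, LinearMap.smul_apply, smul_eq_mul, W, LinearMap.coe_mk,
      AddHom.coe_mk]
    linear_combination hd m - y * hw m
  rw [h₁, h₂, TensorProduct.tmul_neg, TensorProduct.tmul_smul, TensorProduct.tmul_smul,
    TensorProduct.smul_tmul', TensorProduct.smul_tmul']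
  have : y • x' = x • y' := Subtype.ext (mul_comm _ _)
  rw [this, neg_add_cancel]

variable [UniqueFactorizationMonoid R] [IsNoetherianRing R]

/-- If `M*` is free (hence so is `M**`), `M` maps to an elementary module with kernel and cokernel killed by
two relatively prime elements `x` and `y`. The map is `M → M**` together with the torsion component
of the map of `exists_maps_elementary`, taken for an element `g` killing the kernel and the cokernel
of `M → M**`; `x` is a power of `g` and `y` is the square of the denominator. -/
theorem exists_pseudoIso (M : Type v) [AddCommGroup M] [Module R M] [Module.Finite R M]
    [Module.Free R (Module.Dual R M)] :
    ∃ (n : ℕ) (ι : Type u) (_ : Fintype ι) (q : ι → R) (e : ι → ℕ)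
      (φ : M →ₗ[R] (Fin n → R) × ((i : ι) → R ⧸ Ideal.span {q i ^ e i})) (x y : R),
      (∀ i, Prime (q i)) ∧ x ≠ 0 ∧ IsRelPrime y x ∧
      (∀ m, φ m = 0 → x • m = 0 ∧ y • m = 0) ∧
      ∀ v : (Fin n → R) × ((i : ι) → R ⧸ Ideal.span {q i ^ e i}),
        x • v ∈ LinearMap.range φ ∧ y • v ∈ LinearMap.range φ := by
  obtain ⟨n₀, ι₀, _, q₀, e₀, g, α₀, β₀, hq₀, hg0, -, hβα₀, -⟩ :=
    exists_maps_elementary M (one_ne_zero : (1 : R) ≠ 0)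
  have hι₀ : IsEmpty ι₀ := ⟨fun i => (hq₀ i).1.not_isUnit (isUnit_of_dvd_one (hq₀ i).2)⟩
  have hker : ∀ m, Module.Dual.eval R M m = 0 → g • m = 0 := by
    intro m hm
    have : α₀ m = 0 := by
      refine Prod.ext (funext fun i => ?_) (Subsingleton.elim _ _)
      exact LinearMap.congr_fun hm (LinearMap.proj i ∘ₗ LinearMap.fst R _ _ ∘ₗ α₀)
    rw [← hβα₀, this, map_zero]
  -- Here `a = 1`, so the torsion part is zero and is killed by `c = 1`.
  have hcoker₀ := smul_mem_range_eval (c := 1) one_ne_zero (fun t => Subsingleton.elim _ _)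
    α₀ β₀ hβα₀
  obtain ⟨n₁, ι, _, q, e, s, α, β, hq, hs0, hsg, hβα, hαβ⟩ := exists_maps_elementary M hg0
  set N := ∑ i, e i
  have hN : ∀ v : (i : ι) → R ⧸ Ideal.span {q i ^ e i}, g ^ N • v = 0 :=
    pow_smul_eq_zero_of_dvd fun i => (hq i).2
  have hcoker := smul_mem_range_eval (pow_ne_zero N hg0) hN α β hβα
  let ε := (Module.finBasis R (Module.Dual R (Module.Dual R M))).equivFun
  let φ := (ε.toLinearMap ∘ₗ Module.Dual.eval R M).prod (LinearMap.snd R _ _ ∘ₗ α)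
  have hφ : ∀ m, φ m = (ε (Module.Dual.eval R M m), (α m).2) := fun m => rfl
  -- The image of `φ` contains `s • E_tors`: torsion elements of `M` vanish in the bidual.
  have htors : ∀ v, ∃ m, φ m = (0, s • v) := by
    intro v
    refine ⟨β (0, v), ?_⟩
    rw [hφ, hαβ]
    have : Module.Dual.eval R M (β (0, v)) = 0 := by
      have h0 : g ^ N • Module.Dual.eval R M (β (0, v)) = 0 := by
        rw [← map_smul, ← map_smul, Prod.smul_mk, hN, smul_zero, Prod.mk_zero_zero, map_zero,
          map_zero]
      exact (smul_eq_zero.1 h0).resolve_left (pow_ne_zero N hg0)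
    rw [this, map_zero]
    rfl
  have hfree : ∀ {c : R}, (∀ ψ, ∃ m, Module.Dual.eval R M m = c • ψ) → ∀ v w,
      ∃ m w', φ m = c • (v, w) + (0, w') := by
    intro c hc v w
    obtain ⟨m, hm⟩ := hc (ε.symm v)
    refine ⟨m, (α m).2 - c • w, ?_⟩
    rw [hφ, hm]
    simp
  refine ⟨_, ι, inferInstance, q, e, φ, g ^ (N + 1), s ^ 2, fun i => (hq i).1,
    pow_ne_zero _ hg0, hsg.pow, fun m hm => ?_, fun ⟨v, w⟩ => ⟨?_, ?_⟩⟩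
  · have h1 : Module.Dual.eval R M m = 0 := by
      exact (LinearEquiv.map_eq_zero_iff ε).1 (congrArg Prod.fst hm)
    have h2 : (α m).2 = 0 := congrArg Prod.snd hm
    have hg := hker m h1
    refine ⟨by rw [pow_succ, mul_smul, hg, smul_zero], ?_⟩
    have h3 : α m = 0 := by
      refine Prod.ext (funext fun i => ?_) h2
      exact LinearMap.congr_fun h1 (LinearMap.proj i ∘ₗ LinearMap.fst R _ _ ∘ₗ α)
    rw [pow_two, mul_smul, ← hβα m, h3, map_zero, smul_zero]
  · obtain ⟨m, w', hm⟩ := hfree hcoker₀ v w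
    refine ⟨g ^ N • m, ?_⟩
    rw [map_smul, hm, smul_add, smul_smul, ← pow_succ, Prod.smul_mk _ 0 w', hN, smul_zero,
      Prod.mk_zero_zero, add_zero]
  · obtain ⟨m, w', hm⟩ := hfree hcoker v w
    obtain ⟨m', hm'⟩ := htors w'
    refine ⟨s • m - m', ?_⟩
    rw [map_sub, map_smul, hm, hm', smul_add, smul_smul, ← pow_two, Prod.smul_mk _ 0 w', smul_zero,
      add_sub_cancel_right]

end Duality

/-! ### Primes and finiteness over the Iwasawa algebra -/

section Iwasawa

open PowerSeries

variable (p : ℕ) [Fact p.Prime]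

lemma natCast_dvd_iff_map_residue (g : PowerSeries ℤ_[p]) :
    (p : PowerSeries ℤ_[p]) ∣ g ↔ g.map (IsLocalRing.residue ℤ_[p]) = 0 := by
  have hcast : (p : PowerSeries ℤ_[p]) = C (p : ℤ_[p]) := by simp
  have hmem : ∀ x : ℤ_[p], IsLocalRing.residue ℤ_[p] x = 0 ↔ (p : ℤ_[p]) ∣ x := fun x => by
    rw [IsLocalRing.residue_eq_zero_iff, PadicInt.maximalIdeal_eq_span_p, Ideal.mem_span_singleton]
  constructor
  · rintro ⟨h, rfl⟩
    ext n
    rw [hcast, coeff_map, coeff_C_mul, map_zero, hmem]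
    exact dvd_mul_right _ _
  · intro h
    have : ∀ n, ∃ c, coeff n g = p * c := fun n => by
      have := congrArg (coeff n) h
      rw [coeff_map, map_zero] at this
      exact (hmem _).1 this
    choose c hc using this
    refine ⟨mk c, ?_⟩
    ext n
    rw [hcast, coeff_C_mul, coeff_mk, hc]

lemma isDistinguished_iff (f : Polynomial ℤ_[p]) :
    IsDistinguished p f ↔ f.IsDistinguishedAt (IsLocalRing.maximalIdeal ℤ_[p]) := by
  have : ∀ x : ℤ_[p], x ∈ IsLocalRing.maximalIdeal ℤ_[p] ↔ (p : ℤ_[p]) ∣ x := fun x => by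
    rw [PadicInt.maximalIdeal_eq_span_p, Ideal.mem_span_singleton]
  exact ⟨fun h => ⟨⟨fun hn => (this _).2 (h.2 _ hn)⟩, h.1⟩,
    fun h => ⟨h.monic, fun i hi => (this _).1 (h.mem hi)⟩⟩

/-- Weierstrass preparation, for a power series not divisible by `p`. -/
lemma exists_associated_distinguished {g : PowerSeries ℤ_[p]}
    (hg : ¬ (p : PowerSeries ℤ_[p]) ∣ g) :
    ∃ f : Polynomial ℤ_[p], IsDistinguished p f ∧ Associated (f : PowerSeries ℤ_[p]) g := by
  rw [natCast_dvd_iff_map_residue] at hg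
  obtain ⟨f, h, H⟩ := exists_isWeierstrassFactorization hg
  exact ⟨f, (isDistinguished_iff p f).2 H.isDistinguishedAt, H.isUnit.unit, H.eq_mul.symm⟩

lemma not_X_dvd_p : ¬ (X : PowerSeries ℤ_[p]) ∣ (p : PowerSeries ℤ_[p]) := by
  rw [X_dvd_iff, map_natCast]
  exact PadicInt.prime_p.ne_zero

lemma not_isUnit_p : ¬ IsUnit (p : PowerSeries ℤ_[p]) := by
  rw [isUnit_iff_constantCoeff, map_natCast]
  exact PadicInt.prime_p.not_isUnit

/-- Up to units, the primes of `ℤ_p[[T]]` are `p` and the irreducible distinguished polynomials.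
Irreducibility in `ℤ_p[T]` holds because `ℤ_p[T] ⧸ (f) ≃ ℤ_p[[T]] ⧸ (f)` for `f` distinguished. -/
lemma prime_classification {q : PowerSeries ℤ_[p]} (hq : Prime q) :
    Associated (p : PowerSeries ℤ_[p]) q ∨ ∃ f : Polynomial ℤ_[p], IsDistinguished p f ∧
      Irreducible f ∧ Associated (f : PowerSeries ℤ_[p]) q := by
  by_cases h : (p : PowerSeries ℤ_[p]) ∣ q
  · left
    obtain ⟨u, hu⟩ := h
    have := (hq.irreducible.isUnit_or_isUnit hu).resolve_left (not_isUnit_p p)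
    exact ⟨this.unit, hu.symm⟩
  · right
    obtain ⟨f, hf, hfq⟩ := exists_associated_distinguished p h
    refine ⟨f, hf, ?_, hfq⟩
    have hfp : Prime (f : PowerSeries ℤ_[p]) := hfq.symm.prime hq
    have hf0 : f ≠ 0 := hf.1.ne_zero
    have e := ((isDistinguished_iff p f).1 hf).algEquivQuotient
    have : (Ideal.span {(f : PowerSeries ℤ_[p])}).IsPrime :=
      (Ideal.span_singleton_prime hfp.ne_zero).2 hfp
    have : IsDomain (PowerSeries ℤ_[p] ⧸ Ideal.span {(f : PowerSeries ℤ_[p])}) := inferInstance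
    have : IsDomain (Polynomial ℤ_[p] ⧸ Ideal.span {f}) := e.toMulEquiv.isDomain _
    exact ((Ideal.span_singleton_prime hf0).1
      ((Ideal.Quotient.isDomain_iff_prime _).1 this)).irreducible

lemma ker_toZMod_constantCoeff :
    RingHom.ker ((PadicInt.toZMod (p := p)).comp (constantCoeff (R := ℤ_[p]))) =
      Ideal.span {X, (p : PowerSeries ℤ_[p])} := by
  ext g
  rw [RingHom.mem_ker, RingHom.comp_apply, ← RingHom.mem_ker, PadicInt.ker_toZMod,
    PadicInt.maximalIdeal_eq_span_p, Ideal.mem_span_singleton, Ideal.mem_span_pair]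
  constructor
  · rintro ⟨c, hc⟩
    obtain ⟨h, hh⟩ := X_dvd_iff.2 (show constantCoeff (g - C (constantCoeff g)) = 0 by simp)
    refine ⟨h, C c, ?_⟩
    have : C (constantCoeff g) = C c * (p : PowerSeries ℤ_[p]) := by
      rw [hc, map_mul, map_natCast, mul_comm]
    rw [← this, mul_comm h, ← hh, sub_add_cancel]
  · rintro ⟨a, b, rfl⟩
    simp

lemma maximalIdeal_powerSeries :
    IsLocalRing.maximalIdeal (PowerSeries ℤ_[p]) = Ideal.span {X, (p : PowerSeries ℤ_[p])} := by
  rw [← ker_toZMod_constantCoeff]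
  exact (IsLocalRing.ker_eq_maximalIdeal _ (ZMod.ringHom_surjective _)).symm

instance finite_quotient_maximalIdeal_powerSeries :
    Finite (PowerSeries ℤ_[p] ⧸ IsLocalRing.maximalIdeal (PowerSeries ℤ_[p])) := by
  rw [maximalIdeal_powerSeries, ← ker_toZMod_constantCoeff]
  exact Finite.of_equiv _ (RingHom.quotientKerEquivOfSurjective
    (f := (PadicInt.toZMod (p := p)).comp (constantCoeff (R := ℤ_[p])))
    (ZMod.ringHom_surjective _)).symm.toEquiv

variable {p}

/-- A prime ideal `P` containing two relatively prime elements, one of them nonzero, contains the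
maximal ideal `(T, p)`. It contains `p`: a prime factor of `x` in `P` is, up to a unit, `p` or a
distinguished polynomial `f`, and in the second case `ℤ_p[[T]] ⧸ (f)` is integral over `ℤ_p`, so
that `P`, which contains `y ∉ (f)`, meets `ℤ_p` nontrivially. It also contains an element prime to
`p`, hence a distinguished polynomial, which is a power of `T` modulo `p`. -/
lemma eq_maximalIdeal_of_mem {x y : PowerSeries ℤ_[p]} (hx0 : x ≠ 0) (hyx : IsRelPrime y x)
    {P : Ideal (PowerSeries ℤ_[p])} [hP : P.IsPrime] (hx : x ∈ P) (hy : y ∈ P) :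
    IsLocalRing.maximalIdeal (PowerSeries ℤ_[p]) ≤ P := by
  have hpP : (p : PowerSeries ℤ_[p]) ∈ P := by
    obtain ⟨s, hs, hsx⟩ := UniqueFactorizationMonoid.exists_prime_factors x hx0
    obtain ⟨q, hqs, hqP⟩ := (hP.multiset_prod_mem_iff_exists_mem s).1
      ((P.mem_iff_of_associated hsx).2 hx)
    have hq := hs q hqs
    have hqx : q ∣ x := (Multiset.dvd_prod hqs).trans hsx.dvd
    have hqy : ¬ q ∣ y := fun h => hq.not_isUnit (hyx h hqx)
    rcases prime_classification p hq with h | ⟨f, hf, -, hfq⟩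
    · exact (P.mem_iff_of_associated h).2 hqP
    · have hfP : (f : PowerSeries ℤ_[p]) ∈ P := (P.mem_iff_of_associated hfq).2 hqP
      let I := Ideal.span {(f : PowerSeries ℤ_[p])}
      have hfp : Prime (f : PowerSeries ℤ_[p]) := hfq.symm.prime hq
      have hI : I.IsPrime := (Ideal.span_singleton_prime hfp.ne_zero).2 hfp
      have hIP : I ≤ P := (Ideal.span_singleton_le_iff_mem _).2 hfP
      have hfin : Module.Finite ℤ_[p] (PowerSeries ℤ_[p] ⧸ I) := by
        have := hf.1.finite_quotient
        exact Module.Finite.equiv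
          ((isDistinguished_iff p f).1 hf).algEquivQuotient.toLinearEquiv
      have hint : Algebra.IsIntegral ℤ_[p] (PowerSeries ℤ_[p] ⧸ I) := inferInstance
      let P' := P.map (Ideal.Quotient.mk I)
      have hP'c : P'.comap (Ideal.Quotient.mk I) = P := by
        rw [Ideal.comap_map_of_surjective _ Ideal.Quotient.mk_surjective, ← RingHom.ker_eq_comap_bot,
          Ideal.mk_ker, sup_eq_left.2 hIP]
      have hy0 : Ideal.Quotient.mk I y ≠ 0 := by
        rw [Ne, Ideal.Quotient.eq_zero_iff_mem, Ideal.mem_span_singleton, hfq.dvd_iff_dvd_left]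
        exact hqy
      have hne := Ideal.comap_ne_bot_of_integral_mem (R := ℤ_[p]) hy0
        (Ideal.mem_map_of_mem (Ideal.Quotient.mk I) hy) (hint.isIntegral _)
      have hprime : (P.comap (C (R := ℤ_[p]))).IsPrime := Ideal.IsPrime.comap _
      have hne' : P.comap (C (R := ℤ_[p])) ≠ ⊥ := by
        rw [← hP'c, Ideal.comap_comap]
        exact hne
      have hmax := (IsLocalRing.eq_maximalIdeal (hprime.isMaximal hne'))
      have : (p : ℤ_[p]) ∈ P.comap (C (R := ℤ_[p])) := by
        rw [hmax, PadicInt.maximalIdeal_eq_span_p]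
        exact Ideal.mem_span_singleton_self _
      simpa using this
  have hXP : (X : PowerSeries ℤ_[p]) ∈ P := by
    obtain ⟨z, hzP, hz⟩ : ∃ z ∈ P, ¬ (p : PowerSeries ℤ_[p]) ∣ z := by
      by_contra! h
      exact not_isUnit_p p (hyx (h y hy) (h x hx))
    obtain ⟨f, hf, hfz⟩ := exists_associated_distinguished p hz
    have hfP : (f : PowerSeries ℤ_[p]) ∈ P := (P.mem_iff_of_associated hfz).2 hzP
    have hdvd : (p : PowerSeries ℤ_[p]) ∣ (f : PowerSeries ℤ_[p]) - X ^ f.natDegree := by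
      rw [natCast_dvd_iff_map_residue, map_sub, sub_eq_zero]
      have := congrArg (Polynomial.toPowerSeries (R := ℤ_[p] ⧸ IsLocalRing.maximalIdeal ℤ_[p]))
        ((isDistinguished_iff p f).1 hf).map_eq_X_pow
      have h : map (Ideal.Quotient.mk (IsLocalRing.maximalIdeal ℤ_[p])) (f : PowerSeries ℤ_[p]) =
          X ^ f.natDegree := by
        simpa [Polynomial.polynomial_map_coe] using this
      have h' : map (IsLocalRing.residue ℤ_[p]) (f : PowerSeries ℤ_[p]) = X ^ f.natDegree := h
      rw [h', map_pow, map_X]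
    have := P.sub_mem hfP (P.mem_of_dvd hdvd hpP)
    rw [sub_sub_cancel] at this
    exact hP.mem_of_pow_mem _ this
  rw [maximalIdeal_powerSeries, Ideal.span_le]
  rintro z (rfl | rfl)
  exacts [hXP, hpP]

/-- A power of the maximal ideal `𝔪` lies in `(x, y)`, so `N` is a quotient of a finite sum of
copies of the finite ring `ℤ_p[[T]] ⧸ 𝔪 ^ k`. -/
lemma finite_of_smul_eq_zero {N : Type*} [AddCommGroup N] [Module (PowerSeries ℤ_[p]) N]
    [Module.Finite (PowerSeries ℤ_[p]) N] {x y : PowerSeries ℤ_[p]} (hx0 : x ≠ 0)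
    (hyx : IsRelPrime y x) (h : ∀ n : N, x • n = 0 ∧ y • n = 0) : Finite N := by
  set m := IsLocalRing.maximalIdeal (PowerSeries ℤ_[p])
  have hm : m.FG := IsNoetherian.noetherian m
  have hrad : m ≤ (Ideal.span {x, y}).radical := by
    rw [Ideal.radical_eq_sInf]
    refine le_sInf fun P ⟨hP, hPp⟩ => ?_
    exact eq_maximalIdeal_of_mem hx0 hyx (hP (Ideal.subset_span (by simp)))
      (hP (Ideal.subset_span (by simp)))
  obtain ⟨k, hk⟩ := Ideal.exists_pow_le_of_le_radical_of_fg hrad hm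
  have h1 : Finite (PowerSeries ℤ_[p] ⧸ m ^ k) := Ideal.finite_quotient_pow hm k
  have h2 : Finite (N ⧸ (⊤ : Submodule (PowerSeries ℤ_[p]) N)) := inferInstance
  have h3 := Submodule.finite_quotient_smul (m ^ k) (N := (⊤ : Submodule (PowerSeries ℤ_[p]) N))
    Module.Finite.fg_top
  have h4 : m ^ k • (⊤ : Submodule (PowerSeries ℤ_[p]) N) = ⊥ := by
    rw [eq_bot_iff, Submodule.smul_le]
    intro r hr n _
    obtain ⟨u, v, rfl⟩ := Ideal.mem_span_pair.1 (hk hr)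
    simp [add_smul, mul_smul, h n]
  rw [h4] at h3
  exact Finite.of_equiv _ (Submodule.quotEquivOfEqBot (⊥ : Submodule (PowerSeries ℤ_[p]) N) rfl).toEquiv

end Iwasawa

/-! ### Elementary modules -/

section Assembly

/-- Reindexing a product of quotients along an injection, when the omitted factors are zero. -/
lemma nonempty_piQuotientEquiv {R ι κ : Type*} [CommRing R] (I : ι → Ideal R) (J : κ → Ideal R)
    (c : κ → ι) (hc : Function.Injective c) (hJ : ∀ k, J k = I (c k))
    (hI : ∀ i, i ∉ Set.range c → I i = ⊤) :
    Nonempty (((i : ι) → R ⧸ I i) ≃ₗ[R] ((k : κ) → R ⧸ J k)) := by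
  obtain rfl : J = fun k => I (c k) := funext hJ
  let ρ : ((i : ι) → R ⧸ I i) →ₗ[R] ((k : κ) → R ⧸ I (c k)) :=
    .pi fun k => .proj (c k)
  refine ⟨LinearEquiv.ofBijective ρ ⟨?_, fun w => ?_⟩⟩
  · intro v w hvw
    ext i
    by_cases hi : i ∈ Set.range c
    · obtain ⟨k, rfl⟩ := hi
      exact congrFun hvw k
    · have := Ideal.Quotient.subsingleton_iff.2 (hI i hi)
      exact Subsingleton.elim _ _
  · choose r hr using fun k => Ideal.Quotient.mk_surjective (w k)
    refine ⟨fun i => Ideal.Quotient.mk _ (Function.extend c r 0 i), funext fun k => ?_⟩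
    rw [← hr]
    exact congrArg _ (hc.extend_apply r 0 k)

lemma span_pow_eq_of_associated {R : Type*} [CommRing R] [IsDomain R] {a b : R}
    (h : Associated a b) (n : ℕ) : Ideal.span {a ^ n} = Ideal.span {b ^ n} :=
  Ideal.span_singleton_eq_span_singleton.2 (h.pow_pow)

variable (p : ℕ) [Fact p.Prime]

/-- Sorting the cyclic factors: exponents `0` give zero modules and are dropped, and the remaining
primes are split into those associated to `p` and those associated to a distinguished polynomial. -/
lemma nonempty_equiv_elementaryModule {r : ℕ} {ι : Type*} [Fintype ι]
    (q : ι → PowerSeries ℤ_[p]) (hq : ∀ i, Prime (q i)) (e : ι → ℕ) :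
    ∃ (s t : ℕ) (n : Fin s → ℕ+) (m : Fin t → ℕ+) (f : Fin t → Polynomial ℤ_[p]),
      (∀ j, Irreducible (f j)) ∧ (∀ j, IsDistinguished p (f j)) ∧
      Nonempty (((Fin r → PowerSeries ℤ_[p]) ×
        ((i : ι) → PowerSeries ℤ_[p] ⧸ Ideal.span {q i ^ e i})) ≃ₗ[PowerSeries ℤ_[p]]
          ElementaryModule p r s t n m f) := by
  classical
  let A := {i // e i ≠ 0 ∧ Associated (p : PowerSeries ℤ_[p]) (q i)}
  let B := {i // e i ≠ 0 ∧ ¬ Associated (p : PowerSeries ℤ_[p]) (q i)}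
  let a : Fin (Fintype.card A) ≃ A := (Fintype.equivFin A).symm
  let b : Fin (Fintype.card B) ≃ B := (Fintype.equivFin B).symm
  have hB : ∀ i : B, ∃ f : Polynomial ℤ_[p], IsDistinguished p f ∧
      Irreducible f ∧ Associated (f : PowerSeries ℤ_[p]) (q i) := fun i =>
    (prime_classification p (hq i)).resolve_left i.2.2
  choose f hfd hfi hfq using hB
  let n : Fin (Fintype.card A) → ℕ+ := fun k => ⟨e (a k), Nat.pos_of_ne_zero (a k).2.1⟩
  let m : Fin (Fintype.card B) → ℕ+ := fun k => ⟨e (b k), Nat.pos_of_ne_zero (b k).2.1⟩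
  let I₁ : Fin (Fintype.card A) → Ideal (PowerSeries ℤ_[p]) := fun k =>
    Ideal.span {(p : PowerSeries ℤ_[p]) ^ (n k : ℕ)}
  let I₂ : Fin (Fintype.card B) → Ideal (PowerSeries ℤ_[p]) := fun k =>
    Ideal.span {(f (b k) : PowerSeries ℤ_[p]) ^ (m k : ℕ)}
  let c : Fin (Fintype.card A) ⊕ Fin (Fintype.card B) → ι :=
    Sum.elim (fun k => (a k).1) (fun k => (b k).1)
  have hc : Function.Injective c :=
    (Subtype.val_injective.comp a.injective).sumElim (Subtype.val_injective.comp b.injective)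
      fun k l h => (b l).2.2 (h ▸ (a k).2.2)
  obtain ⟨ρ⟩ := nonempty_piQuotientEquiv (fun i => Ideal.span {q i ^ e i}) (Sum.elim I₁ I₂) c hc
    (by
      rintro (k | k)
      · exact span_pow_eq_of_associated (a k).2.2 _
      · exact span_pow_eq_of_associated (hfq (b k)) _)
    (by
      intro i hi
      suffices h : e i = 0 by rw [h, pow_zero, Ideal.span_singleton_one]
      by_contra h
      apply hi
      by_cases hA : Associated (p : PowerSeries ℤ_[p]) (q i)
      · exact ⟨Sum.inl (a.symm ⟨i, h, hA⟩), by simp [c]⟩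
      · exact ⟨Sum.inr (b.symm ⟨i, h, hA⟩), by simp [c]⟩)
  exact ⟨_, _, n, m, fun k => f (b k), fun k => hfi _, fun k => hfd _,
    ⟨(LinearEquiv.refl _ _).prodCongr (ρ.trans
      (LinearEquiv.sumPiEquivProdPi (PowerSeries ℤ_[p]) _ _
        fun k => PowerSeries ℤ_[p] ⧸ Sum.elim I₁ I₂ k))⟩⟩

end Assembly

/-- **Structure theorem for finitely generated `ℤ_p[[T]]`-modules** (existence part):
every finitely generated module over `Λ = ℤ_p[[T]]` admits a pseudo-isomorphism (a
`Λ`-linear map with finite kernel and cokernel) to an elementary module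
`Λ^r ⊕ (⊕_{i=1}^{s} Λ/p^{n_i}Λ) ⊕ (⊕_{j=1}^{t} Λ/f_j^{m_j}Λ)` where the `f_j` are
irreducible distinguished polynomials. -/
theorem structure_theorem_existence (p : ℕ) [Fact p.Prime]
    (M : Type*) [AddCommGroup M] [Module (PowerSeries ℤ_[p]) M]
    [Module.Finite (PowerSeries ℤ_[p]) M] :
    ∃ (r s t : ℕ) (n : Fin s → ℕ+) (m : Fin t → ℕ+) (f : Fin t → Polynomial ℤ_[p])
      (φ : M →ₗ[PowerSeries ℤ_[p]] ElementaryModule p r s t n m f),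
      (∀ j, Irreducible (f j)) ∧
      (∀ j, IsDistinguished p (f j)) ∧
      Finite (LinearMap.ker φ) ∧
      Finite (ElementaryModule p r s t n m f ⧸ LinearMap.range φ) := by
  have := free_dual (maximalIdeal_powerSeries p) PowerSeries.X_prime (not_X_dvd_p p) M
  obtain ⟨r, ι, _, q, e, φ, x, y, hq, hx0, hyx, hker, hcoker⟩ :=
    exists_pseudoIso (R := PowerSeries ℤ_[p]) M
  obtain ⟨s, t, n, m, f, hfi, hfd, ⟨ρ⟩⟩ := nonempty_equiv_elementaryModule p (r := r) q hq e
  refine ⟨r, s, t, n, m, f, ρ.toLinearMap ∘ₗ φ, hfi, hfd, ?_, ?_⟩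
  · refine finite_of_smul_eq_zero hx0 hyx fun z => ?_
    have hz : φ z = 0 := (LinearEquiv.map_eq_zero_iff ρ).1 z.2
    exact ⟨Subtype.ext (hker z hz).1, Subtype.ext (hker z hz).2⟩
  · refine finite_of_smul_eq_zero hx0 hyx fun z => ?_
    obtain ⟨v, rfl⟩ := Submodule.Quotient.mk_surjective _ z
    obtain ⟨w, rfl⟩ := ρ.surjective v
    have key : ∀ c : PowerSeries ℤ_[p], c • w ∈ LinearMap.range φ →
        c • ρ w ∈ LinearMap.range (ρ.toLinearMap ∘ₗ φ) := by
      rintro c ⟨u, hu⟩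
      exact ⟨u, by rw [LinearMap.comp_apply, hu]; exact map_smul ρ c w⟩
    simp only [← Submodule.Quotient.mk_smul, Submodule.Quotient.mk_eq_zero]
    exact ⟨key x (hcoker w).1, key y (hcoker w).2⟩
end

section
/- Let M be a finitely generated Λ-module and suppose there are Λ-module homomorphisms with finite kernel and cokernel from M to Λ^r ⊕ (⊕_{i=1}^{s} Λ/p^{n_i}Λ) ⊕ (⊕_{j=1}^{t} Λ/f_j^{m_j}Λ) and from M to Λ^{r'} ⊕ (⊕_{i=1}^{s'} Λ/p^{n'_i}Λ) ⊕ (⊕_{j=1}^{t'} Λ/(f'_j)^{m'_j}Λ), where all n_i, m_j, n'_i, m'_j are positive integers and all f_j, f'_j ∈ ℤ_p[T] are irreducible distinguished polynomials. Then r = r', s = s', t = t', the tuple (n_1,…,n_s) is a permutation of (n'_1,…,n'_{s'}), and there is a permutation σ of {1,…,t} with f_j = f'_{σ(j)} and m_j = m'_{σ(j)} for all j. -/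
namespace IwasawaUniqueness

/-! ### Families in `π ^ k N ∩ N[π]` -/
section Family

variable {R : Type*} [CommRing R]

/-- The submodule `π ^ k N ∩ N[π]` contains `d` elements that are linearly independent over
`R / π`. The elements are `π ^ k • z i`, presented through the `z i`, and independence is expressed
with coefficients lifted to `R`. -/
def HasFamily (R : Type*) [CommRing R] (π : R) (k d : ℕ) (N : Type*) [AddCommGroup N]
    [Module R N] : Prop :=
  ∃ z : Fin d → N, (∀ i, π ^ (k + 1) • z i = 0) ∧
    ∀ a : Fin d → R, ∑ i, a i • π ^ k • z i = 0 → ∀ i, π ∣ a i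

/-- The rank of `π ^ k N ∩ N[π]` over `R / π` does not change under a map whose kernel and
cokernel are killed by an element `g` prime to `π`. -/
theorem hasFamily_congr {M N : Type*} [AddCommGroup M] [Module R M] [AddCommGroup N] [Module R N]
    {π g : R} (hπ : Prime π) (hg : ¬ π ∣ g) (φ : M →ₗ[R] N) (hker : ∀ x, φ x = 0 → g • x = 0)
    (hcok : ∀ y, ∃ x, φ x = g • y) (k d : ℕ) :
    HasFamily R π k d M ↔ HasFamily R π k d N := by
  constructor
  · rintro ⟨z, hz, hind⟩
    refine ⟨fun i => φ (z i), fun i => by rw [← map_smul, hz, map_zero], fun a ha i => ?_⟩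
    have h1 : φ (∑ i, a i • π ^ k • z i) = 0 := by
      rw [← ha]; simp [map_sum]
    have h2 := hind (fun i => g * a i) (by
      simpa [Finset.smul_sum, smul_smul, mul_assoc] using hker _ h1) i
    exact (hπ.dvd_or_dvd h2).resolve_left hg
  · rintro ⟨z, hz, hind⟩
    choose w hw using fun i => hcok (z i)
    refine ⟨fun i => g • w i, fun i => ?_, fun a ha i => ?_⟩
    · have : φ (π ^ (k + 1) • w i) = 0 := by
        rw [map_smul, hw, smul_comm, hz, smul_zero]
      rw [smul_comm, hker _ this]
    · have h1 := congrArg φ ha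
      have h2 := hind (fun i => g * g * a i) (by
        rw [map_zero, map_sum] at h1
        rw [← h1]
        refine Finset.sum_congr rfl fun j _ => ?_
        simp only [map_smul, hw, smul_smul]
        congr 1; ring) i
      rcases hπ.dvd_or_dvd h2 with h | h
      · exact absurd ((hπ.dvd_or_dvd h).elim id id) hg
      · exact h

/-- The rank of `π ^ k N ∩ N[π]` over `R / π` when `N` is the sum of the `R / π ^ n i`, with
standard generators `e i` and projections `pr i`, and of a module without `π`-torsion: it is the
number of `i` with `k < n i`. The `c i` are only propositionally equal to `π ^ n i`, so that the
summands `R / f j ^ m j` with `f j = π` can be used without transport along `f j = π`. -/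
theorem hasFamily_iff [IsDomain R] {π : R} (hπ : Prime π) {ι : Type*} [Finite ι] (n : ι → ℕ)
    (hn : ∀ i, 0 < n i)
    (c : ι → R) (hc : ∀ i, c i = π ^ n i) {N : Type*} [AddCommGroup N] [Module R N]
    (pr : ∀ i, N →ₗ[R] R ⧸ Ideal.span {c i})
    (hpr : ∀ x : N, π • x = 0 → (∀ i, pr i x = 0) → x = 0)
    (e : ι → N) (hne : ∀ i j, i ≠ j → pr j (e i) = 0) (he : ∀ i, pr i (e i) = 1)
    (hce : ∀ i, c i • e i = 0) (k d : ℕ) :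
    HasFamily R π k d N ↔ d ≤ Nat.card {i // k < n i} := by
  classical
  have := Fintype.ofFinite ι
  have hmk : ∀ i (x : R), (Ideal.Quotient.mk (Ideal.span {c i}) x = 0) ↔ π ^ n i ∣ x := by
    intro i x
    rw [Ideal.Quotient.eq_zero_iff_mem, Ideal.mem_span_singleton, hc]
  constructor
  · rintro ⟨z, hz, hind⟩
    choose y hy using fun (l : Fin d) (i : ι) => Ideal.Quotient.mk_surjective (pr i (z l))
    have hpk : ∀ l i, ∀ t : ℕ, pr i (π ^ t • z l) =
        Ideal.Quotient.mk (Ideal.span {c i}) (π ^ t * y l i) := by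
      intro l i t
      rw [map_smul, ← hy, Algebra.smul_def, map_mul]; rfl
    have hdiv : ∀ (l : Fin d) (i : {i // k < n i}), ∃ v, π ^ k * y l i = π ^ (n i - 1) * v := by
      rintro l ⟨i, hi⟩
      have h := hpk l i (k + 1)
      rw [hz, map_zero, eq_comm, hmk] at h
      obtain ⟨v, hv⟩ := h
      refine ⟨v, mul_left_cancel₀ hπ.ne_zero ?_⟩
      obtain ⟨t, ht⟩ : ∃ t, n i = t + 1 := ⟨n i - 1, by have := hn i; omega⟩
      simp only [ht, Nat.add_sub_cancel] at hv ⊢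
      linear_combination hv
    choose v hv using hdiv
    let Q := R ⧸ Ideal.span {π}
    have : Nontrivial Q := Ideal.Quotient.nontrivial_iff.2
      (by rw [Ne, Ideal.span_singleton_eq_top]; exact hπ.not_isUnit)
    -- `π ^ k • z l` has coordinate `π ^ (n i - 1) * v l i` at `i` if `k < n i`, and `0` otherwise,
    -- so the vectors `v l` modulo `π` inherit independence.
    have hli : LinearIndependent Q
        (fun (l : Fin d) (i : {i // k < n i}) =>
          (Ideal.Quotient.mk (Ideal.span {π}) (v l i) : Q)) := by
      rw [Fintype.linearIndependent_iff]
      intro a ha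
      choose b hb using fun l => Ideal.Quotient.mk_surjective (a l)
      have key : ∑ l, b l • π ^ k • z l = 0 := by
        apply hpr
        · rw [Finset.smul_sum]
          refine Finset.sum_eq_zero fun l _ => ?_
          rw [smul_comm π, smul_smul π, ← pow_succ', hz, smul_zero]
        · intro i
          have h1 : pr i (∑ l, b l • π ^ k • z l) =
              Ideal.Quotient.mk (Ideal.span {c i}) (∑ l, b l * (π ^ k * y l i)) := by
            rw [map_sum, map_sum]
            refine Finset.sum_congr rfl fun l _ => ?_
            rw [map_smul, hpk, Algebra.smul_def, map_mul]; rfl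
          rw [h1, hmk]
          by_cases hi : k < n i
          · have h2 := congrFun ha ⟨i, hi⟩
            have h3 : Ideal.Quotient.mk (Ideal.span {π}) (∑ l, b l * v l ⟨i, hi⟩) = 0 := by
              rw [map_sum]
              simpa [← hb] using h2
            rw [Ideal.Quotient.eq_zero_iff_mem, Ideal.mem_span_singleton] at h3
            obtain ⟨u, hu⟩ := h3
            refine ⟨u, ?_⟩
            calc ∑ l, b l * (π ^ k * y l i) = π ^ (n i - 1) * ∑ l, b l * v l ⟨i, hi⟩ := by
                  rw [Finset.mul_sum]
                  refine Finset.sum_congr rfl fun l _ => ?_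
                  rw [hv l ⟨i, hi⟩]; ring
              _ = π ^ (n i - 1 + 1) * u := by rw [hu]; ring
              _ = _ := by rw [Nat.sub_add_cancel (hn i)]
          · exact Finset.dvd_sum fun l _ => Dvd.dvd.mul_left
              (Dvd.dvd.mul_right (pow_dvd_pow _ (not_lt.1 hi)) _) _
      intro l
      rw [← hb, Ideal.Quotient.eq_zero_iff_mem, Ideal.mem_span_singleton]
      exact hind b key l
    have h := hli.fintype_card_le_finrank
    rw [Module.finrank_fintype_fun_eq_card] at h
    simpa [Nat.card_eq_fintype_card] using h
  · intro hd
    rw [Nat.card_eq_fintype_card] at hd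
    obtain ⟨j⟩ : Nonempty (Fin d ↪ {i // k < n i}) :=
      Function.Embedding.nonempty_of_card_le (by simpa using hd)
    have hk : ∀ l, k + (n (j l) - 1 - k) = n (j l) - 1 := fun l => by
      have := (j l).2; omega
    -- The family is `π ^ (n i - 1) • e i`, for `d` of the indices with `k < n i`.
    refine ⟨fun l => π ^ (n (j l) - 1 - k) • e (j l), fun l => ?_, fun a ha l => ?_⟩
    · have h1 := hk l
      have h2 := hn (j l)
      rw [smul_smul, ← pow_add, show k + 1 + (n (j l) - 1 - k) = n (j l) by omega, ← hc]
      exact hce _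
    · have h := congrArg (pr (j l)) ha
      rw [map_zero, map_sum, Finset.sum_eq_single l] at h
      · have h1 : Ideal.Quotient.mk (Ideal.span {c (j l)}) (a l * π ^ (n (j l) - 1)) = 0 := by
          rw [← h, smul_smul (π ^ k), ← pow_add, hk, smul_smul, map_smul, he,
            Algebra.smul_def, mul_one]; rfl
        rw [hmk] at h1
        obtain ⟨t, ht⟩ : ∃ t, n (j l) = t + 1 := ⟨n (j l) - 1, by have := hn (j l); omega⟩
        rw [ht, Nat.add_sub_cancel, pow_succ',
          mul_dvd_mul_iff_right (pow_ne_zero _ hπ.ne_zero)] at h1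
        exact h1
      · intro b _ hb
        have : ((j b : {i // k < n i}) : ι) ≠ j l := fun h => hb (j.injective (Subtype.ext h))
        simp only [map_smul, hne _ _ this, smul_zero]
      · simp

/-- The rank does not change under a map whose kernel and cokernel are killed by a nonzero
scalar. -/
theorem finrank_eq_of_kernel_cokernel [IsDomain R] {X Y : Type*} [AddCommGroup X] [Module R X]
    [AddCommGroup Y] [Module R Y] [Module.Finite R X] [Module.Finite R Y] (φ : X →ₗ[R] Y)
    {g : R} (hg : g ≠ 0) (hker : ∀ x, φ x = 0 → g • x = 0) (hcok : ∀ y, ∃ x, φ x = g • y) :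
    Module.finrank R X = Module.finrank R Y := by
  have key : Module.finrank R X = Module.finrank R (LinearMap.range φ) := by
    rw [← φ.quotKerEquivRange.finrank_eq, finrank_quotient_eq_of_le_torsion]
    intro x hx
    exact ⟨⟨g, mem_nonZeroDivisors_of_ne_zero hg⟩, hker x hx⟩
  rw [key]
  refine le_antisymm (Submodule.finrank_le _) ?_
  -- Multiplication by `g` on `Y` lands in the range of `φ` and has torsion kernel.
  let ψ : Y →ₗ[R] LinearMap.range φ := (LinearMap.lsmul R Y g).codRestrict _ fun y => hcok y
  rw [← finrank_quotient_eq_of_le_torsion (M' := LinearMap.ker ψ), ψ.quotKerEquivRange.finrank_eq]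
  · exact Submodule.finrank_le _
  · intro y hy
    refine ⟨⟨g, mem_nonZeroDivisors_of_ne_zero hg⟩, ?_⟩
    simpa [ψ, LinearMap.codRestrict] using congrArg Subtype.val (LinearMap.mem_ker.1 hy)


theorem card_fiber_add {α X : Type*} [Finite α] (F : α → X) (n : α → ℕ) (x : X) (k : ℕ) :
    Nat.card {a // (F a, n a) = (x, k + 1)} + Nat.card {a // F a = x ∧ k + 1 < n a} =
      Nat.card {a // F a = x ∧ k < n a} := by
  classical
  have := Fintype.ofFinite α
  simp only [Nat.card_eq_fintype_card, Fintype.card_subtype]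
  rw [← Finset.card_union_of_disjoint]
  · congr 1
    ext a
    simp only [Finset.mem_union, Finset.mem_filter, Finset.mem_univ, true_and, Prod.mk.injEq,
      ← and_or_left]
    refine and_congr_right fun _ => ?_
    omega
  · rw [Finset.disjoint_filter]
    rintro a - h1 h2
    rw [Prod.mk.injEq] at h1
    omega

/-- Two finite families of labelled positive integers agree up to reindexing as soon as, for each
label `x` and each `k`, they have the same number of members labelled `x` and larger than `k`. -/
theorem exists_equiv_of_card {α β X : Type*} [Finite α] [Finite β] (F : α → X) (n : α → ℕ)
    (F' : β → X) (n' : β → ℕ) (hn : ∀ a, 0 < n a) (hn' : ∀ b, 0 < n' b)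
    (h : ∀ x k, Nat.card {a // F a = x ∧ k < n a} = Nat.card {b // F' b = x ∧ k < n' b}) :
    ∃ e : α ≃ β, ∀ a, F a = F' (e a) ∧ n a = n' (e a) := by
  have hfib : ∀ v : X × ℕ, Nat.card {a // (F a, n a) = v} = Nat.card {b // (F' b, n' b) = v} := by
    rintro ⟨x, k⟩
    cases k with
    | zero =>
      have : IsEmpty {a // (F a, n a) = (x, 0)} :=
        ⟨fun a => (hn a).ne' (Prod.ext_iff.1 a.2).2⟩
      have : IsEmpty {b // (F' b, n' b) = (x, 0)} :=
        ⟨fun b => (hn' b).ne' (Prod.ext_iff.1 b.2).2⟩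
      rw [Nat.card_of_isEmpty, Nat.card_of_isEmpty]
    | succ k =>
      have h1 := card_fiber_add F n x k
      have h2 := card_fiber_add F' n' x k
      have := h x k
      have := h x (k + 1)
      omega
  let E := fun v => (Finite.card_eq.1 (hfib v)).some
  refine ⟨Equiv.ofFiberEquiv E, fun a => ?_⟩
  have := Equiv.ofFiberEquiv_map E a
  simpa [Prod.ext_iff, eq_comm] using this

/-- Multiplication by a prime `π ∤ q` is injective on `R / q ^ n`. -/
theorem eq_zero_of_smul_eq_zero {π q : R} [IsDomain R] (hπ : Prime π) (hq : ¬ π ∣ q) (n : ℕ)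
    (x : R ⧸ Ideal.span {q ^ n}) (h : π • x = 0) : x = 0 := by
  obtain ⟨y, rfl⟩ := Ideal.Quotient.mk_surjective x
  have h1 : Ideal.Quotient.mk (Ideal.span {q ^ n}) (π * y) = 0 := by
    rw [← h, Algebra.smul_def, map_mul]; rfl
  rw [Ideal.Quotient.eq_zero_iff_mem, Ideal.mem_span_singleton] at h1 ⊢
  obtain ⟨u, hu⟩ := h1
  have : π ∣ q ^ n * u := ⟨y, hu.symm⟩
  obtain ⟨w, rfl⟩ := (hπ.dvd_or_dvd this).resolve_left fun h => hq (hπ.dvd_of_dvd_pow h)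
  exact ⟨w, mul_left_cancel₀ hπ.ne_zero (by rw [hu]; ring)⟩

theorem smul_quotient_eq_zero {c : R} (x : R ⧸ Ideal.span {c}) : c • x = 0 := by
  have : (Ideal.Quotient.mk (Ideal.span {c}) c) = 0 := by
    rw [Ideal.Quotient.eq_zero_iff_mem]; exact Ideal.mem_span_singleton_self c
  rw [Algebra.smul_def, Ideal.Quotient.algebraMap_eq, this, zero_mul]

theorem smul_single_eq_zero {ι : Type*} [DecidableEq ι] (c : ι → R) (i : ι) :
    c i • (Pi.single i 1 : (j : ι) → R ⧸ Ideal.span {c j}) = 0 := by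
  rw [← Pi.single_smul, smul_quotient_eq_zero, Pi.single_zero]

end Family

/-! ### Arithmetic of `ℤ_[p]⟦T⟧` -/

section Iwasawa

variable {p : ℕ} [Fact p.Prime]

open PowerSeries

local notation "Λ" => PowerSeries ℤ_[p]

theorem p_dvd_iff (x : Λ) : (p : Λ) ∣ x ↔ ∀ i, (p : ℤ_[p]) ∣ coeff i x := by
  have hp : (p : Λ) = C (p : ℤ_[p]) := by simp
  rw [hp]
  constructor
  · rintro ⟨y, rfl⟩ i
    rw [coeff_C_mul]
    exact dvd_mul_right _ _
  · intro h
    choose y hy using h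
    exact ⟨PowerSeries.mk y, by ext i; rw [coeff_C_mul, hy, coeff_mk]⟩

theorem prime_p : Prime (p : Λ) := by
  have hp : (p : Λ) ≠ 0 := fun h => (PadicInt.prime_p (p := p)).ne_zero (by
    simpa using congrArg constantCoeff h)
  rw [← Ideal.span_singleton_prime hp]
  have : Ideal.span {(p : Λ)} = RingHom.ker (PowerSeries.map (PadicInt.toZMod (p := p))) := by
    ext x
    rw [Ideal.mem_span_singleton, p_dvd_iff, RingHom.mem_ker, PowerSeries.ext_iff]
    refine forall_congr' fun i => ?_
    rw [coeff_map, map_zero, ← RingHom.mem_ker, PadicInt.ker_toZMod,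
      PadicInt.maximalIdeal_eq_span_p, Ideal.mem_span_singleton]
  rw [this]
  exact RingHom.ker_isPrime _

theorem not_p_dvd_X : ¬ (p : Λ) ∣ X := by
  rw [p_dvd_iff]
  intro h
  have h1 := h 1
  rw [coeff_one_X] at h1
  exact PadicInt.prime_p.not_isUnit (isUnit_of_dvd_one h1)

/-- On a finite module two powers `x ^ i` and `x ^ j` with `i < j` act alike, and
`1 - x ^ (j - i)` is a unit for `x` in the maximal ideal, so `x ^ i` acts as zero. -/
theorem exists_pow_smul_eq_zero {N : Type*} [AddCommGroup N] [Module Λ N] [Finite N] (x : Λ)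
    (hx : ¬ IsUnit (constantCoeff x)) : ∃ i : ℕ, ∀ y : N, x ^ i • y = 0 := by
  obtain ⟨i, j, hij, h⟩ := Finite.exists_ne_map_eq_of_infinite (fun (i : ℕ) (y : N) => x ^ i • y)
  wlog hlt : i < j generalizing i j
  · exact this j i hij.symm h.symm (by omega)
  obtain ⟨t, rfl⟩ := Nat.exists_eq_add_of_lt hlt
  have hu : IsUnit (1 - x ^ (t + 1)) := by
    rw [isUnit_iff_constantCoeff, map_sub, map_one, map_pow]
    apply IsLocalRing.isUnit_one_sub_self_of_mem_nonunits
    rw [mem_nonunits_iff, isUnit_pow_succ_iff]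
    exact hx
  refine ⟨i, fun y => ?_⟩
  have h1 : (1 - x ^ (t + 1)) • x ^ i • y = 0 := by
    have h2 : x ^ i • y = x ^ (i + t + 1) • y := congrFun h y
    rw [sub_smul, one_smul, smul_smul, ← pow_add, show t + 1 + i = i + t + 1 by omega, ← h2,
      sub_self]
  exact (hu.smul_eq_zero).1 h1

theorem exists_pow_kernel_cokernel {M N : Type*} [AddCommGroup M] [Module Λ M] [AddCommGroup N]
    [Module Λ N] (φ : M →ₗ[Λ] N) (hk : Finite (LinearMap.ker φ))
    (hc : Finite (N ⧸ LinearMap.range φ)) (x : Λ) (hx : ¬ IsUnit (constantCoeff x)) :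
    ∃ i : ℕ, (∀ y, φ y = 0 → x ^ i • y = 0) ∧ ∀ y, ∃ z, φ z = x ^ i • y := by
  obtain ⟨i, hi⟩ := exists_pow_smul_eq_zero (N := LinearMap.ker φ) x hx
  obtain ⟨j, hj⟩ := exists_pow_smul_eq_zero (N := N ⧸ LinearMap.range φ) x hx
  refine ⟨i + j, fun y hy => ?_, fun y => ?_⟩
  · have := congrArg Subtype.val (hi ⟨y, hy⟩)
    rw [add_comm, pow_add, ← smul_smul]
    rw [show x ^ i • y = 0 from this, smul_zero]
  · have h1 : x ^ j • y ∈ LinearMap.range φ := by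
      rw [← Submodule.Quotient.mk_eq_zero, Submodule.Quotient.mk_smul]
      exact hj _
    rw [pow_add, ← smul_smul]
    exact (LinearMap.range φ).smul_mem _ h1

theorem not_isUnit_constantCoeff_p : ¬ IsUnit (constantCoeff (p : Λ)) := by
  rw [map_natCast]; exact PadicInt.prime_p.not_isUnit

theorem not_isUnit_constantCoeff_X : ¬ IsUnit (constantCoeff (X : Λ)) := by simp

theorem isDistinguishedAt {f : Polynomial ℤ_[p]} (hf : IsDistinguished p f) :
    f.IsDistinguishedAt (IsLocalRing.maximalIdeal ℤ_[p]) where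
  monic := hf.1
  mem := fun {i} hi => by
    rw [PadicInt.maximalIdeal_eq_span_p, Ideal.mem_span_singleton]; exact hf.2 i hi

/-- Weierstrass division: a divisibility between polynomials with distinguished divisor may be
tested in power series. -/
theorem coe_dvd_coe_iff {f : Polynomial ℤ_[p]} (hf : IsDistinguished p f) (g : Polynomial ℤ_[p]) :
    (f : Λ) ∣ (g : Λ) ↔ f ∣ g := by
  rw [← Ideal.mem_span_singleton, ← Ideal.mem_span_singleton, ← Ideal.Quotient.eq_zero_iff_mem,
    ← Ideal.Quotient.eq_zero_iff_mem]
  rw [← map_eq_zero_iff _ (isDistinguishedAt hf).algEquivQuotient.injective]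
  rfl

theorem prime_coe {f : Polynomial ℤ_[p]} (hf : Irreducible f ∧ IsDistinguished p f) :
    Prime (f : Λ) := by
  have h0 : (f : Λ) ≠ 0 := by simpa using hf.1.ne_zero
  have h1 := (Ideal.span_singleton_prime hf.1.ne_zero).2 hf.1.prime
  rw [← Ideal.span_singleton_prime h0, ← Ideal.Quotient.isDomain_iff_prime]
  rw [← Ideal.Quotient.isDomain_iff_prime] at h1
  exact ((isDistinguishedAt hf.2).algEquivQuotient.toMulEquiv.isDomain_iff).1 h1

theorem not_p_dvd_coe {f : Polynomial ℤ_[p]} (hf : IsDistinguished p f) : ¬ (p : Λ) ∣ (f : Λ) := by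
  rw [p_dvd_iff]
  intro h
  have h1 := h f.natDegree
  rw [Polynomial.coeff_coe, hf.1.coeff_natDegree] at h1
  exact PadicInt.prime_p.not_isUnit (isUnit_of_dvd_one h1)

theorem not_coe_dvd_p {f : Polynomial ℤ_[p]} (hf : Irreducible f ∧ IsDistinguished p f) :
    ¬ (f : Λ) ∣ (p : Λ) := fun h =>
  not_p_dvd_coe hf.2 ((prime_coe hf).associated_of_dvd prime_p h).symm.dvd

theorem eq_of_coe_dvd_coe {f g : Polynomial ℤ_[p]} (hf : Irreducible f ∧ IsDistinguished p f)
    (hg : Irreducible g ∧ IsDistinguished p g) (h : (f : Λ) ∣ (g : Λ)) : f = g :=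
  Polynomial.eq_of_monic_of_associated hf.2.1 hg.2.1
    (hf.1.associated_of_dvd hg.1 ((coe_dvd_coe_iff hf.2 g).1 h))

/-! ### Invariants of elementary modules -/

section Elementary

variable {r s t : ℕ} {n : Fin s → ℕ+} {m : Fin t → ℕ+} {f : Fin t → Polynomial ℤ_[p]}

theorem elementary_hasFamily_p (hf : ∀ j, Irreducible (f j) ∧ IsDistinguished p (f j)) (k d : ℕ) :
    HasFamily Λ (p : Λ) k d (ElementaryModule p r s t n m f) ↔
      d ≤ Nat.card {i // k < (n i : ℕ)} := by
  refine hasFamily_iff prime_p (fun i => (n i : ℕ)) (fun i => (n i).pos)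
    (fun i => (p : Λ) ^ (n i : ℕ)) (fun _ => rfl)
    (fun i => LinearMap.proj i ∘ₗ LinearMap.fst Λ _ _ ∘ₗ LinearMap.snd Λ _ _) ?_
    (fun i => (0, Pi.single i 1, 0)) ?_ ?_ ?_ k d
  · rintro ⟨a, b, c⟩ h h0
    obtain ⟨ha, -, hc⟩ : (p : Λ) • a = 0 ∧ (p : Λ) • b = 0 ∧ (p : Λ) • c = 0 := by
      simpa only [Prod.smul_mk, Prod.mk_eq_zero] using h
    refine Prod.ext ?_ (Prod.ext (funext h0) (funext fun j => ?_))
    · exact (smul_eq_zero.1 ha).resolve_left prime_p.ne_zero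
    · exact eq_zero_of_smul_eq_zero prime_p (not_p_dvd_coe (hf j).2) _ _ (congrFun hc j)
  · intro i j hij
    exact Pi.single_eq_of_ne hij.symm _
  · intro i
    exact Pi.single_eq_same _ _
  · intro i
    exact Prod.ext (smul_zero _)
      (Prod.ext (smul_single_eq_zero (fun i => (p : Λ) ^ (n i : ℕ)) i) (smul_zero _))

theorem elementary_hasFamily_coe (hf : ∀ j, Irreducible (f j) ∧ IsDistinguished p (f j))
    {f₀ : Polynomial ℤ_[p]} (hf₀ : Irreducible f₀ ∧ IsDistinguished p f₀) (k d : ℕ) :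
    HasFamily Λ (f₀ : Λ) k d (ElementaryModule p r s t n m f) ↔
      d ≤ Nat.card {j // f j = f₀ ∧ k < (m j : ℕ)} := by
  rw [← Nat.card_congr (Equiv.subtypeSubtypeEquivSubtypeInter (fun j => f j = f₀)
    (fun j => k < (m j : ℕ)))]
  refine hasFamily_iff (ι := {j // f j = f₀}) (prime_coe hf₀) (fun i => (m i : ℕ))
    (fun i => (m i).pos) (fun i => (f i : Λ) ^ (m i : ℕ)) (fun i => by rw [i.2])
    (fun i => LinearMap.proj i.1 ∘ₗ LinearMap.snd Λ _ _ ∘ₗ LinearMap.snd Λ _ _) ?_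
    (fun i => (0, 0, Pi.single i.1 1)) ?_ ?_ ?_ k d
  · rintro ⟨a, b, c⟩ h h0
    obtain ⟨ha, hb, hc⟩ : (f₀ : Λ) • a = 0 ∧ (f₀ : Λ) • b = 0 ∧ (f₀ : Λ) • c = 0 := by
      simpa only [Prod.smul_mk, Prod.mk_eq_zero] using h
    refine Prod.ext ?_ (Prod.ext (funext fun i => ?_) (funext fun j => ?_))
    · exact (smul_eq_zero.1 ha).resolve_left (prime_coe hf₀).ne_zero
    · exact eq_zero_of_smul_eq_zero (prime_coe hf₀) (not_coe_dvd_p hf₀) _ _ (congrFun hb i)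
    · by_cases hj : f j = f₀
      · exact h0 ⟨j, hj⟩
      · exact eq_zero_of_smul_eq_zero (prime_coe hf₀)
          (fun h => hj (eq_of_coe_dvd_coe hf₀ (hf j) h).symm) _ _ (congrFun hc j)
  · intro i j hij
    exact Pi.single_eq_of_ne (fun h => hij (Subtype.ext h.symm)) _
  · intro i
    exact Pi.single_eq_same _ _
  · intro i
    exact Prod.ext (smul_zero _) (Prod.ext (smul_zero _)
      (smul_single_eq_zero (fun j => (f j : Λ) ^ (m j : ℕ)) i.1))

theorem elementary_finrank (hf : ∀ j, Irreducible (f j) ∧ IsDistinguished p (f j)) :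
    Module.finrank Λ (ElementaryModule p r s t n m f) = r := by
  have h := finrank_eq_of_kernel_cokernel (R := Λ)
    (LinearMap.fst Λ (Fin r → Λ) (((i : Fin s) → Λ ⧸ Ideal.span {(p : Λ) ^ (n i : ℕ)}) ×
      ((j : Fin t) → Λ ⧸ Ideal.span {(f j : Λ) ^ (m j : ℕ)})))
    (g := (∏ i, (p : Λ) ^ (n i : ℕ)) * ∏ j, (f j : Λ) ^ (m j : ℕ)) ?_ ?_ ?_
  · rw [h]; simp
  · refine mul_ne_zero (Finset.prod_ne_zero_iff.2 fun i _ => pow_ne_zero _ prime_p.ne_zero)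
      (Finset.prod_ne_zero_iff.2 fun j _ => pow_ne_zero _ (prime_coe (hf j)).ne_zero)
  · rintro ⟨a, b, c⟩ ha
    have key : ∀ (g e : Λ) (x : Λ ⧸ Ideal.span {e}), e ∣ g → g • x = 0 := by
      rintro _ e x ⟨u, rfl⟩
      rw [mul_comm, ← smul_smul, smul_quotient_eq_zero, smul_zero]
    obtain rfl : a = 0 := ha
    refine Prod.ext (smul_zero _) (Prod.ext (funext fun i => key _ _ _ ?_)
      (funext fun j => key _ _ _ ?_))
    · exact Dvd.dvd.mul_right
        (Finset.dvd_prod_of_mem (fun i => (p : Λ) ^ (n i : ℕ)) (Finset.mem_univ i)) _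
    · exact Dvd.dvd.mul_left
        (Finset.dvd_prod_of_mem (fun j => (f j : Λ) ^ (m j : ℕ)) (Finset.mem_univ j)) _
  · exact fun y => ⟨(((∏ i, (p : Λ) ^ (n i : ℕ)) * ∏ j, (f j : Λ) ^ (m j : ℕ)) • y, 0), rfl⟩

end Elementary

end Iwasawa

end IwasawaUniqueness

open IwasawaUniqueness PowerSeries in
/-- **Structure theorem for finitely generated `ℤ_p[[T]]`-modules** (uniqueness part):
if a finitely generated `Λ`-module `M` admits pseudo-isomorphisms (maps with finite
kernel and cokernel) to two elementary modules, with all `f_j`, `f'_j` irreducible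
distinguished polynomials, then `r = r'`, `s = s'`, `t = t'`, the exponents `n_i` agree
up to a permutation, and there is a permutation `σ` matching `(f_j, m_j)` with
`(f'_{σ(j)}, m'_{σ(j)})`. -/
theorem structure_theorem_uniqueness (p : ℕ) [Fact p.Prime]
    (M : Type*) [AddCommGroup M] [Module (PowerSeries ℤ_[p]) M]
    [Module.Finite (PowerSeries ℤ_[p]) M]
    (r s t : ℕ) (n : Fin s → ℕ+) (m : Fin t → ℕ+) (f : Fin t → Polynomial ℤ_[p])
    (r' s' t' : ℕ) (n' : Fin s' → ℕ+) (m' : Fin t' → ℕ+) (f' : Fin t' → Polynomial ℤ_[p])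
    (hn : ∀ i, 0 < (n i : ℕ)) (hn' : ∀ i, 0 < (n' i : ℕ))
    (hm : ∀ j, 0 < (m j : ℕ)) (hm' : ∀ j, 0 < (m' j : ℕ))
    (hf : ∀ j, Irreducible (f j) ∧ IsDistinguished p (f j))
    (hf' : ∀ j, Irreducible (f' j) ∧ IsDistinguished p (f' j))
    (φ : M →ₗ[PowerSeries ℤ_[p]] ElementaryModule p r s t n m f)
    (φ' : M →ₗ[PowerSeries ℤ_[p]] ElementaryModule p r' s' t' n' m' f')
    (hkerφ : Finite (LinearMap.ker φ))
    (hcokφ : Finite (ElementaryModule p r s t n m f ⧸ LinearMap.range φ))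
    (hkerφ' : Finite (LinearMap.ker φ'))
    (hcokφ' : Finite (ElementaryModule p r' s' t' n' m' f' ⧸ LinearMap.range φ')) :
    r = r' ∧ s = s' ∧ t = t' ∧
    (∃ e : Fin s ≃ Fin s', ∀ i, n i = n' (e i)) ∧
    (∃ σ : Fin t ≃ Fin t', ∀ j, f j = f' (σ j) ∧ m j = m' (σ j)) := by
  have exp_p : ∀ k, Nat.card {i // k < (n i : ℕ)} = Nat.card {i // k < (n' i : ℕ)} := by
    intro k
    -- Powers of `T` are prime to `p`; below, powers of `p` are prime to each `f₀`.
    obtain ⟨a, ha, ha'⟩ := exists_pow_kernel_cokernel φ hkerφ hcokφ X not_isUnit_constantCoeff_X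
    obtain ⟨b, hb, hb'⟩ := exists_pow_kernel_cokernel φ' hkerφ' hcokφ' X not_isUnit_constantCoeff_X
    have hX : ∀ a, ¬ (p : PowerSeries ℤ_[p]) ∣ X ^ a :=
      fun a h => not_p_dvd_X (prime_p.dvd_of_dvd_pow h)
    refine eq_of_forall_le_iff fun d => ?_
    rw [← elementary_hasFamily_p (r := r) (m := m) hf,
      ← elementary_hasFamily_p (r := r') (m := m') hf',
      ← hasFamily_congr prime_p (hX a) φ ha ha', ← hasFamily_congr prime_p (hX b) φ' hb hb']
  obtain ⟨a, ha, ha'⟩ := exists_pow_kernel_cokernel φ hkerφ hcokφ _ not_isUnit_constantCoeff_p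
  obtain ⟨b, hb, hb'⟩ := exists_pow_kernel_cokernel φ' hkerφ' hcokφ' _ not_isUnit_constantCoeff_p
  have exp_f : ∀ f₀ k, Nat.card {j // f j = f₀ ∧ k < (m j : ℕ)} =
      Nat.card {j // f' j = f₀ ∧ k < (m' j : ℕ)} := by
    intro f₀ k
    by_cases hf₀ : Irreducible f₀ ∧ IsDistinguished p f₀
    · have hp : ∀ a, ¬ (f₀ : PowerSeries ℤ_[p]) ∣ (p : PowerSeries ℤ_[p]) ^ a :=
        fun a h => not_coe_dvd_p hf₀ ((prime_coe hf₀).dvd_of_dvd_pow h)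
      refine eq_of_forall_le_iff fun d => ?_
      rw [← elementary_hasFamily_coe (r := r) (n := n) hf hf₀,
        ← elementary_hasFamily_coe (r := r') (n := n') hf' hf₀,
        ← hasFamily_congr (prime_coe hf₀) (hp a) φ ha ha',
        ← hasFamily_congr (prime_coe hf₀) (hp b) φ' hb hb']
    -- Neither family contains such an `f₀`.
    · have : IsEmpty {j // f j = f₀ ∧ k < (m j : ℕ)} := ⟨fun j => hf₀ (j.2.1 ▸ hf j)⟩
      have : IsEmpty {j // f' j = f₀ ∧ k < (m' j : ℕ)} := ⟨fun j => hf₀ (j.2.1 ▸ hf' j)⟩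
      simp
  obtain ⟨e, he⟩ := exists_equiv_of_card (fun _ => ()) (fun i => (n i : ℕ)) (fun _ => ())
    (fun i => (n' i : ℕ)) hn hn' (by simpa using exp_p)
  obtain ⟨σ, hσ⟩ := exists_equiv_of_card f (fun j => (m j : ℕ)) f' (fun j => (m' j : ℕ))
    hm hm' exp_f
  have hr : r = r' := by
    rw [← elementary_finrank (r := r) (n := n) (m := m) hf,
      ← elementary_finrank (r := r') (n := n') (m := m') hf',
      ← finrank_eq_of_kernel_cokernel φ (pow_ne_zero a prime_p.ne_zero) ha ha',
      ← finrank_eq_of_kernel_cokernel φ' (pow_ne_zero b prime_p.ne_zero) hb hb']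
  exact ⟨hr, by simpa using Fintype.card_congr e, by simpa using Fintype.card_congr σ,
    ⟨e, fun i => PNat.coe_injective (he i).2⟩,
    ⟨σ, fun j => ⟨(hσ j).1, PNat.coe_injective (hσ j).2⟩⟩⟩
end

section
/- Let M be a finitely generated torsion R-module and let M(p) ⊆ M denote the submodule of elements annihilated by some power of p. Then there exist an integer s ≥ 0 and positive integers n_1,…,n_s, unique up to reordering, together with an R-module homomorphism from M(p) to ⊕_{i=1}^{s} R/p^{n_i}R whose kernel and cokernel are pseudo-null. -/
/-!
Write `R = ℤ_p⟦T_1, …, T_nv⟧`. The element `p` is prime and `R ⧸ (p) ≅ 𝔽_p⟦T_1, …, T_nv⟧` has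
Krull dimension exactly `nv`. Hence the annihilator of a pseudo-null module is not contained in
`(p)` (`not_le_span_p_of_ringKrullDim_le`). Conversely, a module killed by a power of `p` is
pseudo-null as soon as its annihilator is not contained in `(p)`
(`ringKrullDim_quotient_le_of_pow_mem`). The modules whose annihilator is not contained in `(p)`
become zero after localizing at `(p)`, so the question can be settled over the local ring `S` of `R`
at `(p)`, which is a discrete valuation ring with uniformizer `p`.

For existence, the localization of `M(p)` is a finitely generated torsion `S`-module, hence a finite
product of modules `S ⧸ (p ^ n_i)`, which is the localization of the product of the `R ⧸ (p ^ n_i)`.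
Since `M(p)` is finitely presented, this isomorphism comes, up to a denominator, from an `R`-linear
map, whose kernel and cokernel vanish after localization (`exists_pseudoIso`).

For uniqueness, a pseudo-isomorphism becomes an isomorphism over `S` (`bijective_localizedMap`), so
two such maps give an isomorphism between the two products over `S`. The length of the multiples of
`p ^ j` in such a product is `∑ i, (n_i - j)` with truncated subtraction, and these sums determine
the exponents up to order (`exists_equiv_of_sum_tsub_eq`).
-/

/-- A module `N` over `R = ℤ_p[[T_1,…,T_nv]]` is *pseudo-null* if the Krull dimension
of `R/Ann_R(N)` is at most `nv - 1`. -/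
def IsPseudoNull (p nv : ℕ) [Fact p.Prime]
    (N : Type*) [AddCommGroup N] [Module (MvPowerSeries (Fin nv) ℤ_[p]) N] : Prop :=
  ringKrullDim
      (MvPowerSeries (Fin nv) ℤ_[p] ⧸
        Module.annihilator (MvPowerSeries (Fin nv) ℤ_[p]) N) ≤
    ((nv - 1 : ℕ) : WithBot (WithTop ℕ))

/-- The `p`-primary submodule `M(p)` of a module `M`: the elements annihilated by some
power of `p`. -/
def pPrimarySubmodule (p nv : ℕ) [Fact p.Prime]
    (M : Type*) [AddCommGroup M] [Module (MvPowerSeries (Fin nv) ℤ_[p]) M] :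
    Submodule (MvPowerSeries (Fin nv) ℤ_[p]) M where
  carrier := {x | ∃ k : ℕ, (p : MvPowerSeries (Fin nv) ℤ_[p]) ^ k • x = 0}
  zero_mem' := ⟨0, smul_zero _⟩
  add_mem' := by
    rintro a b ⟨k, hk⟩ ⟨l, hl⟩
    refine ⟨k + l, ?_⟩
    have h1 : (p : MvPowerSeries (Fin nv) ℤ_[p]) ^ (k + l) • a = 0 := by
      rw [pow_add, mul_comm, mul_smul, hk, smul_zero]
    have h2 : (p : MvPowerSeries (Fin nv) ℤ_[p]) ^ (k + l) • b = 0 := by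
      rw [pow_add, mul_smul, hl, smul_zero]
    rw [smul_add, h1, h2, add_zero]
  smul_mem' := by
    rintro c x ⟨k, hk⟩
    exact ⟨k, by rw [smul_comm, hk, smul_zero]⟩

/-! ### Krull dimension of quotients of the power series ring -/

section Dim

/-- `X` is a regular element of the Jacobson radical of `A⟦X⟧` with quotient `A`. -/
lemma ringKrullDim_powerSeries {A : Type*} [CommRing A] [IsNoetherianRing A] :
    ringKrullDim (PowerSeries A) = ringKrullDim A + 1 := by
  have hX : (PowerSeries.X : PowerSeries A) ∈ nonZeroDivisors (PowerSeries A) :=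
    MvPowerSeries.X_mem_nonzeroDivisors
  have hreg : IsSMulRegular (PowerSeries A) (PowerSeries.X : PowerSeries A) :=
    Module.Flat.isSMulRegular_of_nonZeroDivisors hX
  have hjac : (PowerSeries.X : PowerSeries A) ∈ Ring.jacobson (PowerSeries A) := by
    rw [← Ideal.jacobson_bot, Ideal.mem_jacobson_bot]
    intro y
    rw [PowerSeries.isUnit_iff_constantCoeff]
    simp
  rw [← ringKrullDim_quotient_span_singleton_succ_eq_ringKrullDim_of_mem_jacobson hreg hjac]
  have hk : RingHom.ker (PowerSeries.constantCoeff (R := A)) = Ideal.span {PowerSeries.X} := by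
    ext x
    rw [RingHom.mem_ker, Ideal.mem_span_singleton, PowerSeries.X_dvd_iff]
  rw [← hk, ringKrullDim_eq_of_ringEquiv
    (RingHom.quotientKerEquivOfSurjective PowerSeries.constantCoeff_surj)]

lemma ringKrullDim_mvPowerSeries_field (k : Type*) [Field k] (n : ℕ) :
    ringKrullDim (MvPowerSeries (Fin n) k) = n := by
  induction n with
  | zero =>
    rw [ringKrullDim_eq_of_ringEquiv (MvPowerSeries.isEmptyEquiv (Fin 0) k).toRingEquiv,
      ringKrullDim_eq_zero_of_field, Nat.cast_zero]
  | succ n ih =>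
    rw [ringKrullDim_eq_of_ringEquiv (MvPowerSeries.finSuccEquiv k n).toRingEquiv,
      ringKrullDim_powerSeries, ih, Nat.cast_succ]

variable (p nv : ℕ) [Fact p.Prime]

lemma map_toZMod_surjective :
    Function.Surjective (MvPowerSeries.map (σ := Fin nv) (PadicInt.toZMod (p := p))) := by
  intro f
  choose g hg using fun d => ZMod.ringHom_surjective (PadicInt.toZMod (p := p))
    (MvPowerSeries.coeff d f)
  let G : MvPowerSeries (Fin nv) ℤ_[p] := g
  exact ⟨G, MvPowerSeries.ext fun d => by rw [MvPowerSeries.coeff_map]; exact hg d⟩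

lemma ker_map_toZMod :
    RingHom.ker (MvPowerSeries.map (σ := Fin nv) (PadicInt.toZMod (p := p))) =
      Ideal.span {(p : MvPowerSeries (Fin nv) ℤ_[p])} := by
  have hp : (p : MvPowerSeries (Fin nv) ℤ_[p]) = MvPowerSeries.C (p : ℤ_[p]) := by simp
  ext f
  rw [RingHom.mem_ker, Ideal.mem_span_singleton, hp]
  constructor
  · intro h
    have h1 : ∀ d, (p : ℤ_[p]) ∣ MvPowerSeries.coeff d f := fun d => by
      rw [← Ideal.mem_span_singleton, ← PadicInt.maximalIdeal_eq_span_p, ← PadicInt.ker_toZMod,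
        RingHom.mem_ker, ← MvPowerSeries.coeff_map, h, map_zero]
    choose g hg using h1
    let G : MvPowerSeries (Fin nv) ℤ_[p] := g
    refine ⟨G, MvPowerSeries.ext fun d => ?_⟩
    rw [MvPowerSeries.coeff_C_mul]
    exact hg d
  · rintro ⟨g, rfl⟩
    rw [map_mul, MvPowerSeries.map_C]
    simp

/-- `p` is a prime element: its quotient ring is `𝔽_p⟦T⟧`, a domain. -/
lemma prime_natCast_mvPowerSeries : Prime (p : MvPowerSeries (Fin nv) ℤ_[p]) := by
  have h0 : (p : MvPowerSeries (Fin nv) ℤ_[p]) ≠ 0 := by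
    have hp : (p : MvPowerSeries (Fin nv) ℤ_[p]) = MvPowerSeries.C (p : ℤ_[p]) := by simp
    rw [hp, Ne, map_eq_zero_iff _ MvPowerSeries.C_injective]
    exact_mod_cast (Fact.out : p.Prime).ne_zero
  rw [← Ideal.span_singleton_prime h0, ← ker_map_toZMod]
  have : IsDomain (MvPowerSeries (Fin nv) (ZMod p)) := NoZeroDivisors.to_isDomain _
  exact RingHom.ker_isPrime _

lemma ringKrullDim_quotient_span_p :
    ringKrullDim (MvPowerSeries (Fin nv) ℤ_[p] ⧸
      Ideal.span {(p : MvPowerSeries (Fin nv) ℤ_[p])}) = nv := by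
  rw [← ker_map_toZMod, ringKrullDim_eq_of_ringEquiv
    (RingHom.quotientKerEquivOfSurjective (map_toZMod_surjective p nv)),
    ringKrullDim_mvPowerSeries_field]

variable {p nv}

/-- A small quotient `R ⧸ I` cannot surject onto `R ⧸ (p) ≅ 𝔽_p⟦T⟧`, which has dimension `nv`. -/
lemma not_le_span_p_of_ringKrullDim_le (hnv : 1 ≤ nv) {I : Ideal (MvPowerSeries (Fin nv) ℤ_[p])}
    (hI : ringKrullDim (MvPowerSeries (Fin nv) ℤ_[p] ⧸ I) ≤ ((nv - 1 : ℕ) : WithBot (WithTop ℕ))) :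
    ¬ I ≤ Ideal.span {(p : MvPowerSeries (Fin nv) ℤ_[p])} := by
  intro h
  have h1 := ringKrullDim_le_of_surjective _ (Ideal.Quotient.factor_surjective h)
  rw [ringKrullDim_quotient_span_p] at h1
  have h2 : (nv : WithBot ℕ∞) ≤ ((nv - 1 : ℕ) : WithBot ℕ∞) := h1.trans hI
  have h3 : nv ≤ nv - 1 := by exact_mod_cast h2
  lia

/-- If `I` contains a power of `p`, then `R ⧸ √I` is a quotient of the domain `R ⧸ (p)` of
dimension `nv`; it is a proper one, of smaller dimension, when `I` is not contained in `(p)`. -/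
lemma ringKrullDim_quotient_le_of_pow_mem (hnv : 1 ≤ nv) {I : Ideal (MvPowerSeries (Fin nv) ℤ_[p])}
    {k : ℕ} (hk : (p : MvPowerSeries (Fin nv) ℤ_[p]) ^ k ∈ I)
    {t : MvPowerSeries (Fin nv) ℤ_[p]} (ht : t ∈ I)
    (htp : t ∉ Ideal.span {(p : MvPowerSeries (Fin nv) ℤ_[p])}) :
    ringKrullDim (MvPowerSeries (Fin nv) ℤ_[p] ⧸ I) ≤ ((nv - 1 : ℕ) : WithBot (WithTop ℕ)) := by
  have hrad : ringKrullDim (MvPowerSeries (Fin nv) ℤ_[p] ⧸ I) =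
      ringKrullDim (MvPowerSeries (Fin nv) ℤ_[p] ⧸ I.radical) := by
    rw [ringKrullDim_quotient, ringKrullDim_quotient, PrimeSpectrum.zeroLocus_radical]
  have hle : Ideal.span {(p : MvPowerSeries (Fin nv) ℤ_[p])} ≤ I.radical := by
    rw [Ideal.span_singleton_le_iff_mem]
    exact ⟨k, hk⟩
  have : (Ideal.span {(p : MvPowerSeries (Fin nv) ℤ_[p])}).IsPrime :=
    (Ideal.span_singleton_prime (prime_natCast_mvPowerSeries p nv).ne_zero).mpr
      (prime_natCast_mvPowerSeries p nv)
  have h := ringKrullDim_succ_le_of_surjective (Ideal.Quotient.factor hle)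
    (Ideal.Quotient.factor_surjective hle) (r := Ideal.Quotient.mk _ t)
    (mem_nonZeroDivisors_of_ne_zero (by rwa [Ne, Ideal.Quotient.eq_zero_iff_mem]))
    (by
      rw [Ideal.Quotient.factor_mk, Ideal.Quotient.eq_zero_iff_mem]
      exact Ideal.le_radical ht)
  rw [ringKrullDim_quotient_span_p, ← hrad] at h
  obtain ⟨m, rfl⟩ := Nat.exists_eq_add_of_le' hnv
  rw [Nat.add_sub_cancel]
  generalize ringKrullDim (MvPowerSeries (Fin (m+1)) ℤ_[p] ⧸ I) = d at h
  change d ≤ ((m : ℕ) : WithBot ℕ∞)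
  push_cast at h
  exact ENat.WithBot.add_le_add_one_right_iff.mp h

end Dim

/-! ### Elementary modules over a discrete valuation ring -/

section DVR
variable {S : Type*} [CommRing S] [IsDomain S] [IsDiscreteValuationRing S]

lemma length_quotient_span_pow {ϖ : S} (hϖ : Irreducible ϖ) (n : ℕ) :
    Module.length S (S ⧸ Ideal.span {ϖ ^ n}) = n := by
  rw [← Ideal.span_singleton_pow, ← hϖ.maximalIdeal_eq]
  exact IsDiscreteValuationRing.length_quotient_pow_maximalIdeal S n

lemma length_range_pow_smul {ϖ : S} (hϖ : Irreducible ϖ) (n j : ℕ) :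
    Module.length S
      (LinearMap.range (LinearMap.lsmul S (S ⧸ Ideal.span {ϖ ^ n}) (ϖ ^ j))) = (n - j : ℕ) := by
  let f : S →ₗ[S] S ⧸ Ideal.span {ϖ ^ n} :=
    (LinearMap.lsmul S (S ⧸ Ideal.span {ϖ ^ n}) (ϖ ^ j)) ∘ₗ Submodule.mkQ _
  have hr : LinearMap.range (LinearMap.lsmul S (S ⧸ Ideal.span {ϖ ^ n}) (ϖ ^ j)) =
      LinearMap.range f := by
    rw [LinearMap.range_comp_of_range_eq_top _ (Submodule.range_mkQ _)]
  have hk : LinearMap.ker f = Ideal.span {ϖ ^ (n - j)} := by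
    ext x
    have h1 : f x = Submodule.Quotient.mk (ϖ ^ j * x) := rfl
    rw [LinearMap.mem_ker, h1, Submodule.Quotient.mk_eq_zero, Ideal.mem_span_singleton,
      Ideal.mem_span_singleton]
    rcases le_total j n with h | h
    · obtain ⟨d, rfl⟩ := Nat.exists_eq_add_of_le h
      rw [pow_add, Nat.add_sub_cancel_left]
      exact mul_dvd_mul_iff_left (pow_ne_zero _ hϖ.ne_zero)
    · rw [Nat.sub_eq_zero_of_le h, pow_zero]
      exact ⟨fun _ => one_dvd _, fun _ => (pow_dvd_pow _ h).mul_right _⟩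
  rw [hr, ← f.quotKerEquivRange.length_eq, hk, length_quotient_span_pow hϖ]

lemma length_range_pow_smul_pi {ϖ : S} (hϖ : Irreducible ϖ) {ι : Type*} [Fintype ι] (n : ι → ℕ)
    (j : ℕ) :
    Module.length S
      (LinearMap.range (LinearMap.lsmul S (∀ i, S ⧸ Ideal.span {ϖ ^ n i}) (ϖ ^ j))) =
      (∑ i, (n i - j) : ℕ) := by
  let N : ι → Type _ := fun i => S ⧸ Ideal.span {ϖ ^ n i}
  let r : ∀ i, Submodule S (N i) := fun i => LinearMap.range (LinearMap.lsmul S (N i) (ϖ ^ j))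
  let f : (∀ i, r i) →ₗ[S] (∀ i, N i) := LinearMap.pi fun i => (r i).subtype ∘ₗ LinearMap.proj i
  have hf : Function.Injective f := by
    intro x y h
    funext i
    exact Subtype.ext (congrFun h i)
  have hr : LinearMap.range (LinearMap.lsmul S (∀ i, S ⧸ Ideal.span {ϖ ^ n i}) (ϖ ^ j)) =
      LinearMap.range f := by
    ext y
    constructor
    · rintro ⟨x, rfl⟩
      exact ⟨fun i => ⟨ϖ ^ j • x i, x i, rfl⟩, rfl⟩
    · rintro ⟨x, rfl⟩
      choose z hz using fun i => (x i).2
      exact ⟨z, funext hz⟩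
  rw [hr, ← (LinearEquiv.ofInjective f hf).length_eq, Module.length_pi_of_fintype]
  push_cast
  exact Finset.sum_congr rfl fun i _ => length_range_pow_smul hϖ (n i) j

/-- An isomorphism matches the submodules of multiples of `ϖ ^ j`, so these have equal length. -/
lemma sum_tsub_eq_of_linearEquiv {ϖ : S} (hϖ : Irreducible ϖ) {ι ι' : Type*} [Fintype ι]
    [Fintype ι'] (n : ι → ℕ) (n' : ι' → ℕ)
    (e : (∀ i, S ⧸ Ideal.span {ϖ ^ n i}) ≃ₗ[S] (∀ i, S ⧸ Ideal.span {ϖ ^ n' i})) (j : ℕ) :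
    ∑ i, (n i - j) = ∑ i, (n' i - j) := by
  have h1 := length_range_pow_smul_pi hϖ n j
  have h2 := length_range_pow_smul_pi hϖ n' j
  have h : (LinearMap.range (LinearMap.lsmul S (∀ i, S ⧸ Ideal.span {ϖ ^ n i}) (ϖ ^ j))).map
      e.toLinearMap =
      LinearMap.range (LinearMap.lsmul S (∀ i, S ⧸ Ideal.span {ϖ ^ n' i}) (ϖ ^ j)) := by
    ext y
    constructor
    · rintro ⟨_, ⟨x, rfl⟩, rfl⟩
      exact ⟨e x, (e.map_smul _ _).symm⟩
    · rintro ⟨x, rfl⟩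
      exact ⟨_, ⟨e.symm x, rfl⟩, by simp⟩
  rw [← h, ← (e.submoduleMap _).length_eq, h1] at h2
  exact_mod_cast h2

/-- Over a DVR with uniformizer `ϖ` every finitely generated torsion module is a finite product of
modules `S ⧸ (ϖ ^ n)` with `n > 0`. -/
lemma exists_equiv_pi_quotient {ϖ : S} (hϖ : Irreducible ϖ) (N : Type*) [AddCommGroup N]
    [Module S N] [Module.Finite S N] (hN : Module.IsTorsion S N) :
    ∃ (s : ℕ) (n : Fin s → ℕ+),
      Nonempty (N ≃ₗ[S] (∀ i, S ⧸ Ideal.span {ϖ ^ (n i : ℕ)})) := by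
  classical
  obtain ⟨ι, _, q, hq, e, ⟨E⟩⟩ := Module.equiv_directSum_of_isTorsion hN
  -- `σ` numbers the summands with a positive exponent; the others are zero modules.
  let σ := Fintype.equivFin {i // 0 < e i}
  have hspan : ∀ i, (Ideal.span {q i ^ e i} : Ideal S) = Ideal.span {ϖ ^ e i} := fun i => by
    rw [← Ideal.span_singleton_pow, ← Ideal.span_singleton_pow, ← hϖ.maximalIdeal_eq,
      (hq i).maximalIdeal_eq]
  let ψ : (∀ i, S ⧸ Ideal.span {q i ^ e i}) →ₗ[S]
      (∀ j, S ⧸ Ideal.span {ϖ ^ e (σ.symm j).1}) :=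
    LinearMap.pi fun j => (Submodule.quotEquivOfEq _ _ (hspan (σ.symm j).1)).toLinearMap ∘ₗ
      LinearMap.proj (σ.symm j).1
  have hψ : Function.Bijective ψ := by
    constructor
    · rw [← LinearMap.ker_eq_bot, LinearMap.ker_eq_bot']
      intro x hx
      funext i
      by_cases h : 0 < e i
      · have h1 := congrFun hx (σ ⟨i, h⟩)
        have h2 : (Submodule.quotEquivOfEq _ _ (hspan (σ.symm (σ ⟨i, h⟩)).1))
          (x (σ.symm (σ ⟨i, h⟩)).1) = 0 := h1
        rw [LinearEquiv.map_eq_zero_iff, Equiv.symm_apply_apply] at h2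
        exact h2
      · have : e i = 0 := by lia
        have : Subsingleton (S ⧸ Ideal.span {q i ^ e i}) := by
          rw [this, pow_zero]
          exact Ideal.Quotient.subsingleton_iff.mpr Ideal.span_singleton_one
        exact Subsingleton.elim _ _
    · intro y
      refine ⟨fun i => if h : 0 < e i then
        (Submodule.quotEquivOfEq _ _ (hspan i)).symm
          (cast (by rw [Equiv.symm_apply_apply]) (y (σ ⟨i, h⟩))) else 0, ?_⟩
      funext j
      obtain ⟨⟨i, h⟩, rfl⟩ := σ.surjective j
      change (Submodule.quotEquivOfEq _ _ (hspan (σ.symm (σ ⟨i, h⟩)).1)) (dite _ _ _) = _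
      rw [dif_pos (σ.symm (σ ⟨i, h⟩)).2, LinearEquiv.apply_symm_apply]
      generalize_proofs _ h2 h3
      apply eq_of_heq
      refine (cast_heq _ _).trans ?_
      congr 1
      exact congrArg σ (σ.symm_apply_apply _)
  refine ⟨_, fun j => ⟨e (σ.symm j).1, (σ.symm j).2⟩, ⟨E.trans <|
    (DirectSum.linearEquivFunOnFintype S ι fun i => S ⧸ Ideal.span {q i ^ e i}).trans
      (LinearEquiv.ofBijective ψ hψ)⟩⟩

end DVR

/-- A finite family of positive integers is determined up to order by the truncated sums
`∑ i, (n i - j)`: their second difference at `k` counts the indices with `n i = k`. -/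
lemma exists_equiv_of_sum_tsub_eq {s s' : ℕ} (n : Fin s → ℕ+) (n' : Fin s' → ℕ+)
    (h : ∀ j : ℕ, ∑ i, ((n i : ℕ) - j) = ∑ i, ((n' i : ℕ) - j)) :
    ∃ e : Fin s ≃ Fin s', ∀ i, n i = n' (e i) := by
  classical
  have key : ∀ {t : ℕ} (m : Fin t → ℕ+) (k : ℕ+),
      Fintype.card {i // m i = k} + 2 * ∑ i, ((m i : ℕ) - k) =
        ∑ i, ((m i : ℕ) - (k - 1)) + ∑ i, ((m i : ℕ) - (k + 1)) := by
    intro t m k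
    rw [Fintype.card_subtype, Finset.card_filter, Finset.mul_sum, ← Finset.sum_add_distrib,
      ← Finset.sum_add_distrib]
    refine Finset.sum_congr rfl fun i _ => ?_
    have hk := k.pos
    split_ifs with hi
    · rw [hi]; lia
    · have : (m i : ℕ) ≠ k := fun h => hi (PNat.eq h)
      lia
  have hc : ∀ k, Nonempty ({i // n i = k} ≃ {i // n' i = k}) := fun k => by
    refine ⟨Fintype.equivOfCardEq ?_⟩
    have h1 := key n k
    have h2 := key n' k
    simp only [h] at h1
    lia
  let e := (Equiv.sigmaFiberEquiv n).symm.trans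
    ((Equiv.sigmaCongrRight fun k => (hc k).some).trans (Equiv.sigmaFiberEquiv n'))
  refine ⟨e, fun i => ?_⟩
  exact (((hc (n i)).some ⟨i, rfl⟩).2).symm

/-! ### Localization at a principal prime -/

section Localization

/-- A homomorphism whose kernel and cokernel are killed by elements of `T` becomes an isomorphism
after inverting `T`. -/
lemma bijective_localizedMap {R : Type*} [CommRing R] (T : Submonoid R)
    {N N' Y Y' : Type*} [AddCommGroup N] [AddCommGroup N'] [AddCommGroup Y] [AddCommGroup Y']
    [Module R N] [Module R N'] [Module R Y] [Module R Y'] (f : N →ₗ[R] N') (g : Y →ₗ[R] Y')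
    [IsLocalizedModule T f] [IsLocalizedModule T g] (φ : N →ₗ[R] Y)
    {t : R} (ht : t ∈ T) (hker : t ∈ Module.annihilator R (LinearMap.ker φ))
    {u : R} (hu : u ∈ T) (hcoker : u ∈ Module.annihilator R (Y ⧸ LinearMap.range φ)) :
    Function.Bijective (IsLocalizedModule.map T f g φ) := by
  constructor
  · rw [← LinearMap.ker_eq_bot, LinearMap.ker_eq_bot']
    intro z hz
    obtain ⟨⟨x, s⟩, hx⟩ := IsLocalizedModule.surj T f z
    have hx : s • z = f x := hx
    have h1 : g (φ x) = 0 := by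
      rw [← IsLocalizedModule.map_apply T f g, ← hx, LinearMap.map_smul_of_tower, hz, smul_zero]
    obtain ⟨c, hc⟩ := (IsLocalizedModule.eq_zero_iff T g).mp h1
    have hc' : φ (c • x) = 0 := by rw [LinearMap.map_smul_of_tower, hc]
    have h2 := Module.mem_annihilator.mp hker ⟨c • x, hc'⟩
    have h3 : t • c • x = 0 := congrArg Subtype.val h2
    have h4 : f x = 0 := (IsLocalizedModule.eq_zero_iff T f).mpr ⟨⟨t, ht⟩ * c, by
      rw [mul_smul]; exact h3⟩
    apply IsLocalizedModule.smul_injective f s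
    simp only [hx, h4, smul_zero]
  · intro z
    obtain ⟨⟨y, s⟩, hy⟩ := IsLocalizedModule.surj T g z
    have hy : s • z = g y := hy
    have h1 := Module.mem_annihilator.mp hcoker (Submodule.Quotient.mk y)
    rw [← Submodule.Quotient.mk_smul, Submodule.Quotient.mk_eq_zero] at h1
    obtain ⟨x, hx⟩ := h1
    let v : T := ⟨u, hu⟩ * s
    obtain ⟨w, hw⟩ := ((Module.End.isUnit_iff _).mp (IsLocalizedModule.map_units f v)).2 (f x)
    have hw : v • w = f x := hw
    refine ⟨w, IsLocalizedModule.smul_injective g v ?_⟩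
    simp only
    rw [← LinearMap.map_smul_of_tower, hw, IsLocalizedModule.map_apply, hx, mul_smul, hy,
      map_smul]
    rfl

/-- A finitely generated module that is elementwise `T`-torsion is killed by one element of `T`. -/
lemma exists_mem_annihilator {R : Type*} [CommRing R] (T : Submonoid R)
    (X : Type*) [AddCommGroup X] [Module R X] [Module.Finite R X]
    (h : ∀ x : X, ∃ t : T, t • x = 0) : ∃ t ∈ T, t ∈ Module.annihilator R X := by
  classical
  obtain ⟨G, hG⟩ := Module.Finite.fg_top (R := R) (M := X)
  choose t ht using h
  refine ⟨(∏ x ∈ G, t x : T), SetLike.coe_mem _, Module.mem_annihilator.mpr fun x => ?_⟩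
  have hx : x ∈ Submodule.span R (G : Set X) := hG ▸ Submodule.mem_top
  induction hx using Submodule.span_induction with
  | mem y hy =>
    change (∏ x ∈ G, t x) • y = 0
    rw [← Finset.prod_erase_mul _ _ (Finset.mem_coe.mp hy), mul_smul, ht, smul_zero]
  | zero => exact smul_zero _
  | add y z _ _ hy hz => rw [smul_add, hy, hz, add_zero]
  | smul a y _ hy => rw [smul_comm, hy, smul_zero]

/-- Clearing denominators: an isomorphism after localization comes from a homomorphism whose
kernel and cokernel are killed by elements of the multiplicative set. -/
lemma exists_map_of_localizedEquiv {R : Type*} [CommRing R] [IsNoetherianRing R] (T : Submonoid R)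
    {N N' Y Y' : Type*} [AddCommGroup N] [AddCommGroup N'] [AddCommGroup Y] [AddCommGroup Y']
    [Module R N] [Module R N'] [Module R Y] [Module R Y'] (f : N →ₗ[R] N') (g : Y →ₗ[R] Y')
    [IsLocalizedModule T f] [IsLocalizedModule T g] [Module.Finite R N] [Module.Finite R Y]
    (ψ : N' ≃ₗ[R] Y') :
    ∃ φ : N →ₗ[R] Y, (∃ t ∈ T, t ∈ Module.annihilator R (LinearMap.ker φ)) ∧
      ∃ t ∈ T, t ∈ Module.annihilator R (Y ⧸ LinearMap.range φ) := by
  have := Module.finitePresentation_of_finite R N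
  obtain ⟨φ, s, hφ⟩ := Module.FinitePresentation.exists_lift_of_isLocalizedModule T g
    (ψ.toLinearMap ∘ₗ f)
  have hφ' : ∀ x, g (φ x) = s • ψ (f x) := fun x => LinearMap.congr_fun hφ x
  refine ⟨φ, exists_mem_annihilator T _ fun x => ?_, exists_mem_annihilator T _ fun y => ?_⟩
  · have h1 := hφ' x
    rw [LinearMap.mem_ker.mp x.2, map_zero] at h1
    have h2 : ψ (f x) = 0 := IsLocalizedModule.smul_injective g s <| by
      simp only [← h1, smul_zero]
    rw [LinearEquiv.map_eq_zero_iff] at h2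
    obtain ⟨c, hc⟩ := (IsLocalizedModule.eq_zero_iff T f).mp h2
    exact ⟨c, Subtype.ext hc⟩
  · obtain ⟨y, rfl⟩ := Submodule.Quotient.mk_surjective _ y
    obtain ⟨⟨x, r⟩, hx⟩ := IsLocalizedModule.surj T f (ψ.symm (g y))
    have hx : r • ψ.symm (g y) = f x := hx
    have h1 : g (φ x) = g ((s * r) • y) := by
      rw [hφ', ← hx, LinearMap.map_smul_of_tower, mul_smul]
      congr 1
      change ψ ((r : R) • ψ.symm (g y)) = (r : R) • g y
      rw [map_smul, LinearEquiv.apply_symm_apply]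
    obtain ⟨c, hc⟩ := IsLocalizedModule.exists_of_eq (S := T) h1
    refine ⟨c * (s * r), ?_⟩
    rw [← Submodule.Quotient.mk_smul, Submodule.Quotient.mk_eq_zero, mul_smul, ← hc]
    exact ⟨c • x, LinearMap.map_smul_of_tower _ _ _⟩

variable {R : Type*} [CommRing R]

lemma exists_isLocalizedModule_quotient (T : Submonoid R) (S : Type*) [CommRing S] [Algebra R S]
    [IsLocalization T S] (π : R) (n : ℕ) :
    ∃ g : (R ⧸ Ideal.span {π ^ n}) →ₗ[R] (S ⧸ Ideal.span {algebraMap R S π ^ n}),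
      IsLocalizedModule T g := by
  have h : (Ideal.span {π ^ n}).localized' S T (Algebra.linearMap R S) =
      Ideal.span {algebraMap R S π ^ n} := by
    rw [Ideal.localized'_eq_map, Ideal.map_span, Set.image_singleton, map_pow]
  rw [← h]
  exact ⟨_, IsLocalizedModule.toLocalizedQuotient' S T (Algebra.linearMap R S) _⟩

lemma exists_isLocalizedModule_pi (T : Submonoid R) (S : Type*) [CommRing S] [Algebra R S]
    [IsLocalization T S] (π : R) {s : ℕ} (n : Fin s → ℕ) :
    ∃ g : (∀ i, R ⧸ Ideal.span {π ^ n i}) →ₗ[R] (∀ i, S ⧸ Ideal.span {algebraMap R S π ^ n i}),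
      IsLocalizedModule T g := by
  choose g hg using fun i => exists_isLocalizedModule_quotient T S π (n i)
  exact ⟨_, IsLocalizedModule.pi T g⟩

/-- Localizing a Noetherian domain at a nonzero principal prime `(π)` gives a discrete valuation
ring with uniformizer `π`. -/
lemma isDiscreteValuationRing_localization [IsDomain R] [IsNoetherianRing R] {π : R} (hπ : Prime π)
    [hP : (Ideal.span {π}).IsPrime] (S : Type*) [CommRing S] [IsDomain S] [Algebra R S]
    [IsLocalization.AtPrime S (Ideal.span {π})] :
    IsDiscreteValuationRing S ∧ Irreducible (algebraMap R S π) := by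
  have : IsNoetherianRing S :=
    IsLocalization.isNoetherianRing (Ideal.span {π}).primeCompl _ inferInstance
  have : IsLocalRing S := IsLocalization.AtPrime.isLocalRing S (Ideal.span {π})
  have hm : IsLocalRing.maximalIdeal S = Ideal.span {algebraMap R S π} := by
    rw [← IsLocalization.AtPrime.map_eq_maximalIdeal (Ideal.span {π}) S, Ideal.map_span,
      Set.image_singleton]
  have h0 : algebraMap R S π ≠ 0 := by
    rw [Ne, IsLocalization.to_map_eq_zero_iff S
      (Ideal.primeCompl_le_nonZeroDivisors (Ideal.span {π}))]
    exact hπ.ne_zero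
  have hf : ¬ IsField S := by
    rw [IsLocalRing.isField_iff_maximalIdeal_eq, hm, Ideal.span_singleton_eq_bot]
    exact h0
  have hpr : (IsLocalRing.maximalIdeal S).IsPrincipal := ⟨_, hm⟩
  have hD : IsDiscreteValuationRing S := ((IsDiscreteValuationRing.TFAE S hf).out 4 0).mp hpr
  exact ⟨hD, (IsDiscreteValuationRing.irreducible_iff_uniformizer _).mpr hm⟩

/-- Existence, with pseudo-nullity replaced by having an annihilator outside `(π)`: the structure
theorem over the localization at `(π)`, with denominators cleared. -/
lemma exists_pseudoIso_s3 [IsDomain R] [IsNoetherianRing R] {π : R} (hπ : Prime π)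
    (N : Type*) [AddCommGroup N] [Module R N] [Module.Finite R N] {k : ℕ}
    (hN : ∀ x : N, π ^ k • x = 0) :
    ∃ (s : ℕ) (n : Fin s → ℕ+) (φ : N →ₗ[R] (∀ i, R ⧸ Ideal.span {π ^ (n i : ℕ)})),
      (∃ t ∈ Module.annihilator R (LinearMap.ker φ), t ∉ Ideal.span {π}) ∧
      ∃ t ∈ Module.annihilator R ((∀ i, R ⧸ Ideal.span {π ^ (n i : ℕ)}) ⧸ LinearMap.range φ),
        t ∉ Ideal.span {π} := by
  have hP : (Ideal.span {π}).IsPrime := (Ideal.span_singleton_prime hπ.ne_zero).mpr hπ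
  let T := (Ideal.span {π}).primeCompl
  let S := Localization T
  have : IsDomain S :=
    IsLocalization.isDomain_localization (Ideal.primeCompl_le_nonZeroDivisors _)
  have : IsLocalization.AtPrime S (Ideal.span {π}) := inferInstanceAs (IsLocalization T S)
  obtain ⟨hD, hirr⟩ := isDiscreteValuationRing_localization hπ S
  let f := LocalizedModule.mkLinearMap T N
  have hfin : Module.Finite S (LocalizedModule T N) := Module.Finite.of_isLocalizedModule T f
  have htors : Module.IsTorsion S (LocalizedModule T N) := by
    intro z
    refine ⟨⟨algebraMap R S π ^ k,
      mem_nonZeroDivisors_of_ne_zero (pow_ne_zero _ hirr.ne_zero)⟩, ?_⟩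
    change algebraMap R S π ^ k • z = 0
    rw [← map_pow, algebraMap_smul]
    obtain ⟨⟨x, s⟩, hx⟩ := IsLocalizedModule.surj T f z
    have hx : s • z = f x := hx
    apply IsLocalizedModule.smul_injective f s
    change s • π ^ k • z = s • (0 : LocalizedModule T N)
    rw [smul_comm, hx, ← map_smul, hN, map_zero, smul_zero]
  obtain ⟨s, n, ⟨E⟩⟩ := exists_equiv_pi_quotient hirr _ htors
  obtain ⟨g, hg⟩ := exists_isLocalizedModule_pi T S π fun i => (n i : ℕ)
  obtain ⟨φ, ⟨t, ht, ht'⟩, u, hu, hu'⟩ :=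
    exists_map_of_localizedEquiv T f g (E.restrictScalars R)
  exact ⟨s, n, φ, ⟨t, ht', ht⟩, u, hu', hu⟩

/-- Uniqueness: both maps become isomorphisms over the localization at `(π)`, where the exponents are
determined by lengths. -/
lemma pseudoIso_unique [IsDomain R] [IsNoetherianRing R] {π : R} (hπ : Prime π)
    (N : Type*) [AddCommGroup N] [Module R N]
    {s s' : ℕ} (n : Fin s → ℕ+) (n' : Fin s' → ℕ+)
    (φ : N →ₗ[R] (∀ i, R ⧸ Ideal.span {π ^ (n i : ℕ)}))
    (φ' : N →ₗ[R] (∀ i, R ⧸ Ideal.span {π ^ (n' i : ℕ)}))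
    (h1 : ∃ t ∈ Module.annihilator R (LinearMap.ker φ), t ∉ Ideal.span {π})
    (h2 : ∃ t ∈ Module.annihilator R ((∀ i, R ⧸ Ideal.span {π ^ (n i : ℕ)}) ⧸ LinearMap.range φ),
      t ∉ Ideal.span {π})
    (h3 : ∃ t ∈ Module.annihilator R (LinearMap.ker φ'), t ∉ Ideal.span {π})
    (h4 : ∃ t ∈ Module.annihilator R
      ((∀ i, R ⧸ Ideal.span {π ^ (n' i : ℕ)}) ⧸ LinearMap.range φ'), t ∉ Ideal.span {π}) :
    ∃ e : Fin s ≃ Fin s', ∀ i, n i = n' (e i) := by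
  have hP : (Ideal.span {π}).IsPrime := (Ideal.span_singleton_prime hπ.ne_zero).mpr hπ
  let T := (Ideal.span {π}).primeCompl
  let S := Localization T
  have : IsDomain S :=
    IsLocalization.isDomain_localization (Ideal.primeCompl_le_nonZeroDivisors _)
  have : IsLocalization.AtPrime S (Ideal.span {π}) := inferInstanceAs (IsLocalization T S)
  obtain ⟨hD, hirr⟩ := isDiscreteValuationRing_localization hπ S
  obtain ⟨g, hg⟩ := exists_isLocalizedModule_pi T S π fun i => (n i : ℕ)
  obtain ⟨g', hg'⟩ := exists_isLocalizedModule_pi T S π fun i => (n' i : ℕ)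
  let f := LocalizedModule.mkLinearMap T N
  obtain ⟨t, ht, ht'⟩ := h1
  obtain ⟨u, hu, hu'⟩ := h2
  obtain ⟨v, hv, hv'⟩ := h3
  obtain ⟨w, hw, hw'⟩ := h4
  let E := LinearEquiv.ofBijective _ (bijective_localizedMap T f g φ ht' ht hu' hu)
  let E' := LinearEquiv.ofBijective _ (bijective_localizedMap T f g' φ' hv' hv hw' hw)
  exact exists_equiv_of_sum_tsub_eq n n' <| sum_tsub_eq_of_linearEquiv hirr _ _
    ((E.symm.trans E').extendScalarsOfIsLocalization T S)

end Localization

/-! ### The structure theorem -/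

lemma exists_pow_smul_eq_zero {R : Type*} [CommRing R] (π : R) (X : Type*) [AddCommGroup X]
    [Module R X] [Module.Finite R X] (h : ∀ x : X, ∃ k : ℕ, π ^ k • x = 0) :
    ∃ k : ℕ, ∀ x : X, π ^ k • x = 0 := by
  obtain ⟨_, ⟨k, rfl⟩, hk⟩ := exists_mem_annihilator (Submonoid.powers π) X fun x => by
    obtain ⟨k, hk⟩ := h x
    exact ⟨⟨π ^ k, k, rfl⟩, hk⟩
  exact ⟨k, Module.mem_annihilator.mp hk⟩

lemma pow_sum_smul_pi_eq_zero {R : Type*} [CommRing R] (π : R) {s : ℕ} (n : Fin s → ℕ)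
    (y : ∀ i, R ⧸ Ideal.span {π ^ n i}) : π ^ (∑ i, n i) • y = 0 := by
  funext i
  obtain ⟨r, hr⟩ := Submodule.Quotient.mk_surjective _ (y i)
  rw [Pi.smul_apply, ← hr, ← Submodule.Quotient.mk_smul]
  refine (Submodule.Quotient.mk_eq_zero _).mpr (Ideal.mem_span_singleton.mpr ?_)
  exact (pow_dvd_pow π (Finset.single_le_sum (fun _ _ => Nat.zero_le _)
    (Finset.mem_univ i))).mul_right r

lemma IsPseudoNull.exists_mem_annihilator {p nv : ℕ} [Fact p.Prime] (hnv : 1 ≤ nv)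
    {N : Type*} [AddCommGroup N] [Module (MvPowerSeries (Fin nv) ℤ_[p]) N]
    (h : IsPseudoNull p nv N) :
    ∃ t ∈ Module.annihilator (MvPowerSeries (Fin nv) ℤ_[p]) N,
      t ∉ Ideal.span {(p : MvPowerSeries (Fin nv) ℤ_[p])} :=
  SetLike.not_le_iff_exists.mp (not_le_span_p_of_ringKrullDim_le hnv h)

/-- **Structure theorem for the `p`-primary part** over `R = ℤ_p[[T_1,…,T_nv]]`: for a
finitely generated torsion `R`-module `M`, there exist `s ≥ 0` and positive integers
`n_1,…,n_s`, unique up to reordering, together with a pseudo-isomorphism (an `R`-linear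
map with pseudo-null kernel and cokernel) from `M(p)` to `⊕_{i=1}^{s} R/p^{n_i}R`. -/
theorem pPrimary_structure_theorem (p nv : ℕ) [Fact p.Prime] (hnv : 1 ≤ nv)
    (M : Type*) [AddCommGroup M] [Module (MvPowerSeries (Fin nv) ℤ_[p]) M]
    [Module.Finite (MvPowerSeries (Fin nv) ℤ_[p]) M]
    (hM : Module.IsTorsion (MvPowerSeries (Fin nv) ℤ_[p]) M) :
    ∃ (s : ℕ) (n : Fin s → ℕ+)
      (φ : pPrimarySubmodule p nv M →ₗ[MvPowerSeries (Fin nv) ℤ_[p]]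
        ((i : Fin s) → MvPowerSeries (Fin nv) ℤ_[p] ⧸
          Ideal.span {(p : MvPowerSeries (Fin nv) ℤ_[p]) ^ (n i : ℕ)})),
      IsPseudoNull p nv (LinearMap.ker φ) ∧
      IsPseudoNull p nv
        (((i : Fin s) → MvPowerSeries (Fin nv) ℤ_[p] ⧸
          Ideal.span {(p : MvPowerSeries (Fin nv) ℤ_[p]) ^ (n i : ℕ)})
          ⧸ LinearMap.range φ) ∧
      (∀ (s' : ℕ) (n' : Fin s' → ℕ+)
        (φ' : pPrimarySubmodule p nv M →ₗ[MvPowerSeries (Fin nv) ℤ_[p]]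
          ((i : Fin s') → MvPowerSeries (Fin nv) ℤ_[p] ⧸
            Ideal.span {(p : MvPowerSeries (Fin nv) ℤ_[p]) ^ (n' i : ℕ)})),
        IsPseudoNull p nv (LinearMap.ker φ') →
        IsPseudoNull p nv
          (((i : Fin s') → MvPowerSeries (Fin nv) ℤ_[p] ⧸
            Ideal.span {(p : MvPowerSeries (Fin nv) ℤ_[p]) ^ (n' i : ℕ)})
            ⧸ LinearMap.range φ') →
        ∃ e : Fin s ≃ Fin s', ∀ i, n i = n' (e i)) := by
  have : IsDomain (MvPowerSeries (Fin nv) ℤ_[p]) := NoZeroDivisors.to_isDomain _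
  have hp := prime_natCast_mvPowerSeries p nv
  obtain ⟨k, hk⟩ := exists_pow_smul_eq_zero (p : MvPowerSeries (Fin nv) ℤ_[p])
    (pPrimarySubmodule p nv M) fun x => by
      obtain ⟨k, hk⟩ := x.2
      exact ⟨k, Subtype.ext hk⟩
  obtain ⟨s, n, φ, ⟨t, ht, htp⟩, u, hu, hup⟩ := exists_pseudoIso_s3 hp (pPrimarySubmodule p nv M) hk
  refine ⟨s, n, φ, ?_, ?_, ?_⟩
  · refine ringKrullDim_quotient_le_of_pow_mem hnv (k := k) ?_ ht htp
    exact Module.mem_annihilator.mpr fun x => Subtype.ext (hk x.1)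
  · refine ringKrullDim_quotient_le_of_pow_mem hnv (k := ∑ i, (n i : ℕ)) ?_ hu hup
    refine Module.mem_annihilator.mpr fun y => ?_
    obtain ⟨y, rfl⟩ := Submodule.Quotient.mk_surjective _ y
    rw [← Submodule.Quotient.mk_smul, pow_sum_smul_pi_eq_zero, Submodule.Quotient.mk_zero]
  · intro s' n' φ' h3 h4
    exact pseudoIso_unique hp _ n n' φ φ' ⟨t, ht, htp⟩ ⟨u, hu, hup⟩
      (h3.exists_mem_annihilator hnv) (h4.exists_mem_annihilator hnv)
end

section
/- Let M be a finitely generated torsion R-module. Then M is pseudo-isomorphic to its Iwasawa adjoint Ext^1_R(M, R): there exists an R-module homomorphism from M to Ext^1_R(M, R) whose kernel and cokernel are pseudo-null. -/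
/-!
Write `R = ℤ_p[[T_1,…,T_nv]]`, a Noetherian integrally closed local domain of dimension at most
`nv + 1`, and let `a` be a nonzero nonunit killing `M`.

If `a` kills `M`, then `Ext¹(M, R) ≅ Hom(M, R/a)`: on a projective resolution `P` of `M`,
multiplication by `a` on `P₀` factors through `P₁`, and composing a `1`-cocycle `P₁ → R` with this
factorization and reducing modulo `a` gives a map `P₀ → R/a` that descends to `M`
(`nonempty_cohomology_equiv_hom_quotient`, `nonempty_extOne_equiv_hom_quotient`).

Let `S` be the set of elements outside all minimal primes over `(a)`. These primes have height one
by Krull's principal ideal theorem, so `D = S⁻¹R` is a semilocal Dedekind domain, hence a principal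
ideal domain (`isPrincipalIdealRing_of_avoidMinimalPrimes`). The structure theorem for
`S⁻¹M` over `D`, together with the self-duality of `D/b` with respect to `Hom(-, D/a)` for `b ∣ a`,
yields an isomorphism `S⁻¹M ≅ Hom_D(S⁻¹M, D/a) = S⁻¹ Hom_R(M, R/a)` (`selfdual_of_pid`). Clearing
denominators gives `φ : M → Hom(M, R/a)` whose kernel and cokernel are killed by elements of `S`
(`exists_hom_quotient_of_avoidMinimalPrimes`). A finitely generated module killed by both `a` and
some `s ∈ S` is pseudo-null, because `a, s` cuts the dimension down twice
(`ringKrullDim_quotient_le_of_codim_two`).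

Integral closedness of `R` is obtained one variable at a time. For a Noetherian domain it is
equivalent to: if `d ≠ 0`, `g ≠ 0` and `g ^ n ∣ d * f ^ n` for all `n`, then `g ∣ f`
(complete integral closedness, `DivClosed`). This passes from `A` to `A⟦X⟧`
(`DivClosed.powerSeries`): comparing lowest-order coefficients, one removes the leading term of `f`
by a multiple of `g`, repeatedly, and Krull's intersection theorem shows that `f` lies in the
`X`-adically closed ideal `(g)`.
-/

set_option synthInstance.maxHeartbeats 1000000
set_option maxHeartbeats 1000000

/-- `Ext¹_R(M, R)`, the first Ext group of `M` against `R` in the category of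
`R`-modules, for `R = ℤ_p[[T_1,…,T_nv]]`. -/
noncomputable abbrev ExtOne (p nv : ℕ) [Fact p.Prime]
    (M : Type) [AddCommGroup M] [Module (MvPowerSeries (Fin nv) ℤ_[p]) M] :
    ModuleCat (MvPowerSeries (Fin nv) ℤ_[p]) :=
  ((Ext (MvPowerSeries (Fin nv) ℤ_[p]) (ModuleCat (MvPowerSeries (Fin nv) ℤ_[p])) 1).obj
      (Opposite.op (ModuleCat.of (MvPowerSeries (Fin nv) ℤ_[p]) M))).obj
    (ModuleCat.of (MvPowerSeries (Fin nv) ℤ_[p])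
      (MvPowerSeries (Fin nv) ℤ_[p]))

/-! ### Integral closedness and dimension of power series rings -/

/-- Complete integral closedness, phrased as divisibility in the ring: a fraction `f / g` all of
whose powers have a common denominator `d` already lies in `A`. -/
def DivClosed (A : Type*) [CommRing A] : Prop :=
  ∀ d f g : A, d ≠ 0 → g ≠ 0 → (∀ n : ℕ, g ^ n ∣ d * f ^ n) → g ∣ f

/-- Over a Noetherian ring, almost integral elements are integral. -/
theorem divClosed_of_isIntegrallyClosed (A : Type*) [CommRing A] [IsDomain A]
    [IsNoetherianRing A] [IsIntegrallyClosed A] : DivClosed A := by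
  intro d f g hd hg h
  let K := FractionRing A
  have hgK : algebraMap A K g ≠ 0 := by simpa using hg
  have hai : IsAlmostIntegral A (algebraMap A K f / algebraMap A K g) := by
    refine ⟨d, mem_nonZeroDivisors_of_ne_zero hd, fun n => ?_⟩
    obtain ⟨w, hw⟩ := h n
    refine ⟨w, ?_⟩
    rw [Algebra.smul_def, div_pow, mul_div_assoc', eq_div_iff (pow_ne_zero _ hgK)]
    simp only [← map_pow, ← map_mul]
    rw [hw, mul_comm]
  obtain ⟨y, hy⟩ := IsIntegrallyClosed.isIntegral_iff.mp hai.isIntegral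
  refine ⟨y, ?_⟩
  apply FaithfulSMul.algebraMap_injective A K
  rw [map_mul, hy, mul_div_cancel₀ _ hgK]

theorem DivClosed.isIntegrallyClosed {A : Type*} [CommRing A] [IsDomain A]
    (h : DivClosed A) : IsIntegrallyClosed A := by
  rw [isIntegrallyClosed_iff (FractionRing A)]
  intro x hx
  obtain ⟨d, hd, hdx⟩ := hx.isAlmostIntegral
  obtain ⟨f, g, hg, rfl⟩ := IsFractionRing.div_surjective (A := A) x
  have hg0 : g ≠ 0 := nonZeroDivisors.ne_zero hg
  have hgK : algebraMap A (FractionRing A) g ≠ 0 := by simpa using hg0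
  obtain ⟨y, rfl⟩ := h d f g (nonZeroDivisors.ne_zero hd) hg0 fun n => by
    obtain ⟨w, hw⟩ := hdx n
    refine ⟨w, ?_⟩
    rw [Algebra.smul_def, div_pow, mul_div_assoc', eq_div_iff (pow_ne_zero _ hgK)] at hw
    simp only [← map_pow, ← map_mul] at hw
    rw [← FaithfulSMul.algebraMap_injective A _ hw, mul_comm]
  exact ⟨y, by rw [map_mul, mul_div_cancel_left₀ _ hgK]⟩

section
open PowerSeries
variable {A : Type*} [CommRing A] [IsDomain A]

/-- The divisibility hypothesis in `DivClosed` is insensitive to changing `f` by a multiple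
of `g`. -/
theorem dvd_sub_mul_pow {B : Type*} [CommRing B] {d f g : B} (h : ∀ n : ℕ, g ^ n ∣ d * f ^ n)
    (q : B) (n : ℕ) : g ^ n ∣ d * (f - g * q) ^ n := by
  rw [sub_eq_add_neg, add_pow, Finset.mul_sum]
  refine Finset.dvd_sum fun i hi => ?_
  have hi' : i ≤ n := Nat.lt_succ_iff.mp (Finset.mem_range.mp hi)
  have : g ^ n = g ^ i * g ^ (n - i) := by rw [← pow_add, Nat.add_sub_cancel' hi']
  rw [this]
  have h2 : g ^ (n - i) ∣ (-(g * q)) ^ (n - i) := pow_dvd_pow_of_dvd (by simp) _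
  obtain ⟨u, hu⟩ := h i
  obtain ⟨v, hv⟩ := h2
  exact ⟨u * v * (n.choose i), by rw [hv]; linear_combination (g ^ (n - i) * v * (n.choose i)) * hu⟩

/-- One step of the division of `f` by `g`: lowest-order coefficients satisfy the divisibility
hypothesis over `A`, so the leading term of `f` is a multiple of that of `g`. -/
theorem exists_X_pow_succ_dvd (hA : DivClosed A) {d f g : A⟦X⟧} (hd : d ≠ 0) (hg : g ≠ 0)
    (h : ∀ n : ℕ, g ^ n ∣ d * f ^ n) (k : ℕ) (hk : X ^ k ∣ f) :
    ∃ q, X ^ (k + 1) ∣ f - g * q := by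
  rcases eq_or_ne f 0 with rfl | hf
  · exact ⟨0, by simp⟩
  have hlc : constantCoeff (divXPowOrder g) ∣ constantCoeff (divXPowOrder f) := by
    apply hA (constantCoeff (divXPowOrder d))
    · rwa [Ne, constantCoeff_divXPowOrder_eq_zero_iff]
    · rwa [Ne, constantCoeff_divXPowOrder_eq_zero_iff]
    · intro n
      obtain ⟨w, hw⟩ := h n
      refine ⟨constantCoeff (divXPowOrder w), ?_⟩
      simp only [← map_pow, ← map_mul, ← divXPowOrder_pow, ← divXPowOrder_mul, hw]
  have hord (x : A⟦X⟧) (hx : x ≠ 0) : ((x.order.toNat : ℕ) : ℕ∞) = x.order :=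
    ENat.natCast_toNat (by rwa [Ne, order_eq_top])
  -- if `g` had larger order than `f`, then `order g * n ≤ order d + order f * n` would fail at
  -- `n = order d + 1`
  have hle : g.order.toNat ≤ f.order.toNat := by
    by_contra! hlt
    obtain ⟨w, hw⟩ := h (d.order.toNat + 1)
    have hw0 : w ≠ 0 := by
      rintro rfl
      rw [mul_zero] at hw
      exact mul_ne_zero hd (pow_ne_zero _ hf) hw
    have := congrArg order hw
    rw [order_mul, order_mul, order_pow, order_pow, ← hord d hd, ← hord f hf, ← hord g hg,
      ← hord w hw0] at this
    simp only [nsmul_eq_mul] at this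
    norm_cast at this
    simp only [ENat.toNat_natCast] at this
    nlinarith
  have hkf : k ≤ f.order.toNat := by
    have := nat_le_order f k (X_pow_dvd_iff.mp hk)
    rw [← hord f hf] at this
    exact_mod_cast this
  obtain ⟨t, ht⟩ := hlc
  refine ⟨X ^ (f.order.toNat - g.order.toNat) * C t, ?_⟩
  have hX : X ∣ divXPowOrder f - divXPowOrder g * C t := by
    rw [X_dvd_iff]
    simp [ht]
  have e1 : f - g * (X ^ (f.order.toNat - g.order.toNat) * C t)
      = X ^ f.order.toNat * (divXPowOrder f - divXPowOrder g * C t) := by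
    have h1 : X ^ f.order.toNat * divXPowOrder f = f := X_pow_order_mul_divXPowOrder
    have h2 : X ^ g.order.toNat * divXPowOrder g = g := X_pow_order_mul_divXPowOrder
    have h3 : (X : A⟦X⟧) ^ f.order.toNat
        = X ^ (f.order.toNat - g.order.toNat) * X ^ g.order.toNat := by
      rw [← pow_add, Nat.sub_add_cancel hle]
    calc _ = X ^ f.order.toNat * divXPowOrder f - (X ^ g.order.toNat * divXPowOrder g) *
          (X ^ (f.order.toNat - g.order.toNat) * C t) := by rw [h1, h2]
      _ = _ := by linear_combination (divXPowOrder g * C t) * h3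
  rw [e1]
  exact (pow_dvd_pow X (Nat.succ_le_succ hkf)).trans (by
    rw [pow_succ]; exact mul_dvd_mul_left _ hX)

/-- Successive division shows that `f` is an `X`-adic limit of multiples of `g`; the ideal `(g)` is
closed. -/
theorem DivClosed.powerSeries [IsNoetherianRing A] [IsLocalRing A] (hA : DivClosed A) :
    DivClosed A⟦X⟧ := by
  intro d f g hd hg h
  have key (k : ℕ) : ∃ q, X ^ k ∣ f - g * q := by
    induction k with
    | zero => exact ⟨0, by simp⟩
    | succ k ih =>
      obtain ⟨q, hq⟩ := ih
      obtain ⟨r, hr⟩ := exists_X_pow_succ_dvd hA hd hg (dvd_sub_mul_pow h q) k hq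
      exact ⟨q + r, by convert hr using 1; ring⟩
  have hX : (Ideal.span {(X : A⟦X⟧)}) ≠ ⊤ := by
    rw [Ne, Ideal.span_singleton_eq_top]
    exact X_prime.not_isUnit
  -- Krull's intersection theorem in the quotient by `g`
  have hloc : IsLocalRing A⟦X⟧ := inferInstanceAs (IsLocalRing (MvPowerSeries Unit A))
  have hbot := Ideal.iInf_pow_smul_eq_bot_of_isLocalRing (M := A⟦X⟧ ⧸ Ideal.span {g}) _ hX
  rw [← Ideal.mem_span_singleton, ← Ideal.Quotient.eq_zero_iff_mem, ← Submodule.mem_bot A⟦X⟧,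
    ← hbot, Submodule.mem_iInf]
  intro k
  obtain ⟨q, w, hw⟩ := key k
  have : Ideal.Quotient.mk (Ideal.span {g}) f =
      (X : A⟦X⟧) ^ k • Ideal.Quotient.mk (Ideal.span {g}) w := by
    change _ = Ideal.Quotient.mk (Ideal.span {g}) ((X : A⟦X⟧) ^ k * w)
    rw [← sub_eq_zero, ← map_sub, Ideal.Quotient.eq_zero_iff_mem, Ideal.mem_span_singleton]
    exact ⟨q, by linear_combination hw⟩
  rw [this]
  exact Submodule.smul_mem_smul (Ideal.pow_mem_pow (Ideal.mem_span_singleton_self X) k) trivial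
end

instance MvPowerSeries.isDomain' (σ A : Type*) [CommRing A] [IsDomain A] :
    IsDomain (MvPowerSeries σ A) :=
  NoZeroDivisors.to_isDomain _

theorem MvPowerSeries.isIntegrallyClosed_fin (A : Type*) [CommRing A] [IsDomain A]
    [IsNoetherianRing A] [IsLocalRing A] [IsIntegrallyClosed A] (n : ℕ) :
    IsIntegrallyClosed (MvPowerSeries (Fin n) A) := by
  induction n with
  | zero => exact .of_equiv (MvPowerSeries.isEmptyEquiv (σ := Fin 0) (R := A)).symm.toRingEquiv
  | succ n ih =>
    have := (divClosed_of_isIntegrallyClosed (MvPowerSeries (Fin n) A)).powerSeries.isIntegrallyClosed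
    exact .of_equiv (MvPowerSeries.finSuccEquiv A n).symm.toRingEquiv

theorem MvPowerSeries.ringKrullDim_fin_le (A : Type*) [CommRing A]
    [IsNoetherianRing A] [IsLocalRing A] (n : ℕ) :
    ringKrullDim (MvPowerSeries (Fin n) A) ≤ ringKrullDim A + n := by
  induction n with
  | zero =>
    simpa using (ringKrullDim_eq_of_ringEquiv
      (MvPowerSeries.isEmptyEquiv (σ := Fin 0) (R := A)).toRingEquiv).le
  | succ n ih =>
    rw [ringKrullDim_eq_of_ringEquiv (MvPowerSeries.finSuccEquiv A n).toRingEquiv]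
    set B := MvPowerSeries (Fin n) A
    have hloc : IsLocalRing (PowerSeries B) := inferInstanceAs (IsLocalRing (MvPowerSeries Unit B))
    have hX : (PowerSeries.X : PowerSeries B) ∈ IsLocalRing.maximalIdeal (PowerSeries B) := by
      rw [IsLocalRing.mem_maximalIdeal, mem_nonunits_iff, PowerSeries.isUnit_iff_constantCoeff]
      simp
    have hX0 : (PowerSeries.X : PowerSeries B) ∈ nonZeroDivisors (PowerSeries B) :=
      MvPowerSeries.X_mem_nonzeroDivisors
    rw [← ringKrullDim_quotient_span_singleton_succ_eq_ringKrullDim_of_mem_nonZeroDivisors hX0 hX]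
    have hker : RingHom.ker (PowerSeries.constantCoeff (R := B)) =
        Ideal.span {PowerSeries.X} := by
      ext f
      rw [RingHom.mem_ker, Ideal.mem_span_singleton, PowerSeries.X_dvd_iff]
    have e := (Ideal.quotEquivOfEq hker.symm).trans
      (RingHom.quotientKerEquivOfSurjective (PowerSeries.constantCoeff_surj (R := B)))
    rw [ringKrullDim_eq_of_ringEquiv e, Nat.cast_succ, ← add_assoc]
    gcongr

/-! ### A codimension two criterion -/

open scoped Pointwise in
/-- In a domain of dimension at most `n + 1`, an ideal containing `a ≠ 0` together with an element
outside every minimal prime over `(a)` has quotient of dimension at most `n - 1`: passing to `R/a`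
and then to `R/(a, s)` lowers the dimension by one each time. -/
theorem ringKrullDim_quotient_le_of_codim_two {R : Type*} [CommRing R] [IsDomain R]
    [IsNoetherianRing R]
    {n : ℕ} (hn : 1 ≤ n) (hR : ringKrullDim R ≤ (n + 1 : ℕ)) {I : Ideal R} {a s : R}
    (ha : a ≠ 0) (haI : a ∈ I) (hsI : s ∈ I)
    (hs : ∀ P ∈ (Ideal.span {a}).minimalPrimes, s ∉ P) :
    ringKrullDim (R ⧸ I) ≤ ((n - 1 : ℕ) : WithBot (WithTop ℕ)) := by
  have h1 : ringKrullDim (R ⧸ Ideal.span {a}) + 1 ≤ ringKrullDim R :=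
    ringKrullDim_quotient_succ_le_of_nonZeroDivisor (mem_nonZeroDivisors_of_ne_zero ha)
  have h2 := Module.supportDim_quotSMulTop_succ_le_of_notMem_minimalPrimes
    (R := R) (M := R ⧸ Ideal.span {a}) (x := s) (by rwa [Ideal.annihilator_quotient])
  have hle : Ideal.span {a} ≤ I := (Ideal.span_singleton_le_iff_mem _).mpr haI
  let π : (R ⧸ Ideal.span {a}) →ₗ[R] R ⧸ I := Submodule.factor hle
  have hπ : Function.Surjective π := Submodule.factor_surjective hle
  have hker : s • (⊤ : Submodule R (R ⧸ Ideal.span {a})) ≤ LinearMap.ker π := by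
    rintro _ ⟨x, -, rfl⟩
    obtain ⟨y, rfl⟩ := Submodule.Quotient.mk_surjective _ x
    change π (s • Submodule.Quotient.mk y) = 0
    rw [map_smul]
    change Submodule.Quotient.mk (s • y) = (0 : R ⧸ I)
    rw [Submodule.Quotient.mk_eq_zero]
    exact I.mul_mem_right _ hsI
  have h3 : Module.supportDim R (R ⧸ I) ≤
      Module.supportDim R (QuotSMulTop s (R ⧸ Ideal.span {a})) :=
    Module.supportDim_le_of_surjective (Submodule.liftQ _ π hker) fun y => by
      obtain ⟨x, rfl⟩ := hπ y
      exact ⟨Submodule.Quotient.mk x, rfl⟩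
  rw [Module.supportDim_quotient_eq_ringKrullDim] at h2 h3
  have h4 : ringKrullDim (R ⧸ I) + 1 + 1 ≤ (n + 1 : ℕ) :=
    (add_le_add_left ((add_le_add_left h3 1).trans h2) 1).trans (h1.trans hR)
  obtain ⟨m, rfl⟩ := Nat.exists_eq_add_of_le' hn
  revert h4
  generalize ringKrullDim (R ⧸ I) = x
  intro h4
  rw [Nat.add_sub_cancel]
  push_cast at h4
  exact ENat.WithBot.add_le_add_one_right_iff.mp (ENat.WithBot.add_le_add_one_right_iff.mp h4)

/-! ### Self-duality over a principal ideal domain -/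

section
variable {D : Type*} [CommRing D] [IsDomain D]

/-- If `a` kills `D/b`, then `a = b * c`, and `Hom(D/b, D/a)` is generated by multiplication
by `c`, with annihilator `(b)`. -/
theorem cyclic_selfdual (a b : D) (ha : a ≠ 0)
    (h : ∀ x : D ⧸ Ideal.span {b}, a • x = 0) :
    Nonempty ((D ⧸ Ideal.span {b}) ≃ₗ[D] ((D ⧸ Ideal.span {b}) →ₗ[D] D ⧸ Ideal.span {a})) := by
  have hba : b ∣ a := by
    have := h (Submodule.Quotient.mk 1)
    rwa [← Submodule.Quotient.mk_smul, Submodule.Quotient.mk_eq_zero, smul_eq_mul, mul_one,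
      Ideal.mem_span_singleton] at this
  obtain ⟨c, rfl⟩ := hba
  have hb : b ≠ 0 := left_ne_zero_of_mul ha
  have hc : c ≠ 0 := right_ne_zero_of_mul ha
  let f₀ : (D ⧸ Ideal.span {b}) →ₗ[D] D ⧸ Ideal.span {b * c} :=
    Submodule.mapQ (Ideal.span {b}) (Ideal.span {b * c}) (LinearMap.lsmul D D c) (by
      intro x hx
      rw [Ideal.mem_span_singleton] at hx
      obtain ⟨y, rfl⟩ := hx
      simp only [Submodule.mem_comap, LinearMap.lsmul_apply, smul_eq_mul,
        Ideal.mem_span_singleton]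
      exact ⟨y, by ring⟩)
  have hf₀ (x : D) : f₀ (Submodule.Quotient.mk x) = Submodule.Quotient.mk (c * x) := rfl
  let T := LinearMap.toSpanSingleton D ((D ⧸ Ideal.span {b}) →ₗ[D] D ⧸ Ideal.span {b * c}) f₀
  have hT (x y : D) : T x (Submodule.Quotient.mk y) = Submodule.Quotient.mk (x * (c * y)) := rfl
  have hker : LinearMap.ker T = Ideal.span {b} := by
    ext x
    rw [LinearMap.mem_ker, Ideal.mem_span_singleton]
    constructor
    · intro hx
      have := hT x 1
      rw [hx, LinearMap.zero_apply, eq_comm, Submodule.Quotient.mk_eq_zero,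
        Ideal.mem_span_singleton, mul_one, mul_dvd_mul_iff_right hc] at this
      exact this
    · rintro ⟨z, rfl⟩
      refine LinearMap.ext fun y => ?_
      obtain ⟨y, rfl⟩ := Submodule.Quotient.mk_surjective _ y
      rw [hT, LinearMap.zero_apply, Submodule.Quotient.mk_eq_zero, Ideal.mem_span_singleton]
      exact ⟨z * y, by ring⟩
  have hsurj : Function.Surjective T := by
    intro f
    obtain ⟨z, hz⟩ := Submodule.Quotient.mk_surjective _ (f (Submodule.Quotient.mk 1))
    have hb0 : b • f (Submodule.Quotient.mk 1) = 0 := by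
      rw [← map_smul, ← Submodule.Quotient.mk_smul, (Submodule.Quotient.mk_eq_zero _).mpr, map_zero]
      simp
    rw [← hz, ← Submodule.Quotient.mk_smul, Submodule.Quotient.mk_eq_zero, smul_eq_mul,
      Ideal.mem_span_singleton, mul_dvd_mul_iff_left hb] at hb0
    obtain ⟨w, rfl⟩ := hb0
    refine ⟨w, LinearMap.ext fun y => ?_⟩
    obtain ⟨y, rfl⟩ := Submodule.Quotient.mk_surjective _ y
    have : (Submodule.Quotient.mk y : D ⧸ Ideal.span {b}) = y • Submodule.Quotient.mk 1 := by
      rw [← Submodule.Quotient.mk_smul, smul_eq_mul, mul_one]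
    rw [hT, this, map_smul, ← hz, ← Submodule.Quotient.mk_smul, smul_eq_mul]
    congr 1
    ring
  exact ⟨(Submodule.quotEquivOfEq _ _ hker.symm).trans (T.quotKerEquivOfSurjective hsurj)⟩

/-- A finitely generated module over a principal ideal domain killed by `a ≠ 0` is (non-canonically)
isomorphic to its dual with values in `D/a`, by the structure theorem and the cyclic case. -/
theorem selfdual_of_pid [IsPrincipalIdealRing D] (N : Type*) [AddCommGroup N] [Module D N]
    [Module.Finite D N] (a : D) (ha : a ≠ 0) (h : ∀ x : N, a • x = 0) :
    Nonempty (N ≃ₗ[D] (N →ₗ[D] D ⧸ Ideal.span {a})) := by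
  classical
  obtain ⟨ι, _, p, -, k, ⟨e⟩⟩ := Module.equiv_directSum_of_isTorsion (R := D) (M := N)
    fun {x} => ⟨⟨a, mem_nonZeroDivisors_of_ne_zero ha⟩, h x⟩
  let e' := e.trans (DirectSum.linearEquivFunOnFintype D ι fun i => D ⧸ Ideal.span {p i ^ k i})
  have hc (i : ι) := cyclic_selfdual a (p i ^ k i) ha fun x => by
    have := h (e'.symm (Pi.single i x))
    rw [← map_smul, LinearEquiv.map_eq_zero_iff, ← Pi.single_smul] at this
    simpa using congrFun this i
  exact ⟨e'.trans <| (LinearEquiv.piCongrRight fun i => (hc i).some).trans <|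
    (LinearMap.lsum D (fun i => D ⧸ Ideal.span {p i ^ k i}) D).trans
      (LinearEquiv.congrLeft _ D e'.symm)⟩
end

/-! ### Localization at the minimal primes over an element -/

section
variable {R : Type*} [CommRing R]

/-- The multiplicative set of elements lying in no minimal prime over the principal ideal `(a)`. -/
def avoidMinimalPrimes (a : R) : Submonoid R where
  carrier := {s | ∀ P ∈ (Ideal.span {a}).minimalPrimes, s ∉ P}
  one_mem' P hP h := hP.1.1.ne_top ((Ideal.eq_top_iff_one P).mpr h)
  mul_mem' hs ht P hP h := (hP.1.1.mem_or_mem h).elim (hs P hP) (ht P hP)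

theorem mem_avoidMinimalPrimes {a s : R} :
    s ∈ avoidMinimalPrimes a ↔ ∀ P ∈ (Ideal.span {a}).minimalPrimes, s ∉ P := Iff.rfl

theorem avoidMinimalPrimes_le_nonZeroDivisors [IsDomain R] {a : R} (ha : ¬ IsUnit a) :
    avoidMinimalPrimes a ≤ nonZeroDivisors R := by
  obtain ⟨P, hP⟩ := Ideal.nonempty_minimalPrimes (I := Ideal.span {a})
    (by rwa [Ne, Ideal.span_singleton_eq_top])
  refine fun s hs => mem_nonZeroDivisors_of_ne_zero ?_
  rintro rfl
  exact hs P hP P.zero_mem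

/-- By prime avoidance and Krull's principal ideal theorem, a nonzero prime missing
`avoidMinimalPrimes a` is itself minimal over `(a)`. -/
theorem mem_minimalPrimes_of_disjoint [IsDomain R] [IsNoetherianRing R] {a : R} {q : Ideal R}
    (hq : q.IsPrime) (h0 : q ≠ ⊥) (hd : Disjoint (avoidMinimalPrimes a : Set R) q) :
    q ∈ (Ideal.span {a}).minimalPrimes := by
  have hfin := Ideal.finite_minimalPrimes_of_isNoetherianRing R (Ideal.span {a})
  have hsub : (q : Set R) ⊆ ⋃ P ∈ (↑hfin.toFinset : Set (Ideal R)), (id P : Ideal R) := by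
    intro x hx
    have := Set.disjoint_right.mp hd hx
    simp only [SetLike.mem_coe, mem_avoidMinimalPrimes, not_forall, not_not] at this
    obtain ⟨P, hP, hxP⟩ := this
    exact Set.mem_biUnion (by simpa using hP) hxP
  obtain ⟨P, hP, hle⟩ := (Ideal.subset_union_prime ⊥ ⊥ fun i hi _ _ =>
    ((hfin.mem_toFinset.mp hi).1.1 : (id i : Ideal R).IsPrime)).mp hsub
  rw [Set.Finite.mem_toFinset] at hP
  change q ≤ P at hle
  have := hP.1.1
  have hht := Ideal.height_le_one_of_isPrincipal_of_mem_minimalPrimes _ P hP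
  obtain rfl | hlt := hle.eq_or_lt
  · exact hP
  · have := (Ideal.height_le_iff (n := 1)).mp hht q hq hlt
    exact absurd (Ideal.height_eq_zero_iff_eq_bot.mp (Order.lt_one_iff.mp this)) h0

/-- The localization of a Noetherian integrally closed domain at the minimal primes over a nonunit
is a Dedekind domain with finitely many primes. -/
theorem isPrincipalIdealRing_of_avoidMinimalPrimes [IsDomain R] [IsNoetherianRing R]
    [IsIntegrallyClosed R] {a : R} (ha : ¬ IsUnit a) (D : Type*) [CommRing D] [IsDomain D]
    [Algebra R D]
    [IsLocalization (avoidMinimalPrimes a) D] : IsPrincipalIdealRing D := by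
  set S := avoidMinimalPrimes a
  have hS : S ≤ nonZeroDivisors R := avoidMinimalPrimes_le_nonZeroDivisors ha
  have key {J : Ideal D} (hJ : J.IsPrime) (h0 : J ≠ ⊥) :
      J.under R ∈ (Ideal.span {a}).minimalPrimes := by
    have h := (IsLocalization.isPrime_iff_isPrime_disjoint S D J).mp hJ
    exact mem_minimalPrimes_of_disjoint h.1 (IsLocalization.bot_lt_under_prime S D hS J h0).ne' h.2
  have : IsNoetherianRing D := IsLocalization.isNoetherianRing S D inferInstance
  have : IsIntegrallyClosed D := isIntegrallyClosed_of_isLocalization D S hS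
  have : Ring.DimensionLEOne D := by
    refine ⟨fun {J} h0 hJ => ?_⟩
    obtain ⟨K, hK, hJK⟩ := J.exists_le_maximal hJ.ne_top
    have hK0 : K ≠ ⊥ := fun h => h0 (le_bot_iff.mp (h ▸ hJK))
    have h1 := (key hK.isPrime hK0).2 (key hJ h0).1 (Ideal.comap_mono hJK)
    rwa [le_antisymm hJK ((IsLocalization.under_le_under_iff S D).mp h1)]
  have : IsDedekindDomain D := { }
  refine IsPrincipalIdealRing.of_finite_primes ?_
  refine Set.Finite.of_injOn (f := fun J : Ideal D => J.under R)
    (t := insert ⊥ (Ideal.span {a}).minimalPrimes) ?_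
    (IsLocalization.orderEmbedding S D).injective.injOn
    ((Ideal.finite_minimalPrimes_of_isNoetherianRing R _).insert _)
  intro J hJ
  by_cases h0 : J = ⊥
  · subst h0
    exact Or.inl (Ideal.comap_bot_of_injective (algebraMap R D) (IsLocalization.injective D hS))
  · exact Or.inr (key hJ h0)

end

section
variable {R : Type*} [CommRing R] [IsDomain R] [IsNoetherianRing R] [IsIntegrallyClosed R]

/-- Up to kernel and cokernel that vanish after inverting `avoidMinimalPrimes a`, a finitely
generated module killed by `a` is isomorphic to its dual with values in `R/a`: the isomorphism
provided by `selfdual_of_pid` after localization lifts to `R`, up to a denominator. -/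
theorem exists_hom_quotient_of_avoidMinimalPrimes (M : Type*) [AddCommGroup M] [Module R M]
    [Module.Finite R M] {a : R} (ha : a ≠ 0) (hu : ¬ IsUnit a) (h : ∀ x : M, a • x = 0) :
    ∃ φ : M →ₗ[R] (M →ₗ[R] R ⧸ Ideal.span {a}),
      (∀ x, φ x = 0 → ∃ s ∈ avoidMinimalPrimes a, s • x = 0) ∧
      ∀ y, ∃ s ∈ avoidMinimalPrimes a, ∃ x, φ x = s • y := by
  let S := avoidMinimalPrimes a
  have hS : S ≤ nonZeroDivisors R := avoidMinimalPrimes_le_nonZeroDivisors hu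
  let D := Localization S
  have : IsDomain D := IsLocalization.isDomain_localization hS
  have : IsPrincipalIdealRing D := isPrincipalIdealRing_of_avoidMinimalPrimes hu D
  let N := LocalizedModule S M
  let μ : M →ₗ[R] N := LocalizedModule.mkLinearMap S M
  have : Module.Finite D N := Module.Finite.of_isLocalizedModule S μ
  let I : Ideal D := (Ideal.span {a} : Submodule R R).localized' D S (Algebra.linearMap R D)
  have hI : I = Ideal.span {algebraMap R D a} := by
    change Submodule.localized' D S (Algebra.linearMap R D) (Submodule.span R {a}) = _
    rw [Submodule.localized'_span, Set.image_singleton]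
    rfl
  let π : (R ⧸ Ideal.span {a}) →ₗ[R] D ⧸ I :=
    Submodule.toLocalizedQuotient' D S (Algebra.linearMap R D) (Ideal.span {a})
  have hπ : IsLocalizedModule S π := IsLocalizedModule.toLocalizedQuotient' D S _ _
  obtain ⟨e⟩ : Nonempty (N ≃ₗ[D] (N →ₗ[D] D ⧸ I)) := by
    rw [hI]
    refine selfdual_of_pid N _ ?_ fun x => ?_
    · rwa [Ne, IsLocalization.to_map_eq_zero_iff D hS]
    · obtain ⟨⟨x, s⟩, rfl⟩ := IsLocalizedModule.mk'_surjective S μ x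
      rw [Function.uncurry_apply_pair, algebraMap_smul, ← IsLocalizedModule.mk'_smul, h,
        IsLocalizedModule.mk'_zero]
  have : Module.FinitePresentation R M := Module.finitePresentation_of_finite R M
  let l := IsLocalizedModule.mapExtendScalars S μ π D
  have hl : IsLocalizedModule S l :=
    Module.FinitePresentation.isLocalizedModule_mapExtendScalars S μ π D
  obtain ⟨φ, s, hφ⟩ := Module.FinitePresentation.exists_lift_of_isLocalizedModule S l
    ((e.toLinearMap.restrictScalars R) ∘ₗ μ)
  have hφ' (x : M) : l (φ x) = s.1 • e (μ x) := LinearMap.congr_fun hφ x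
  refine ⟨φ, fun x hx => ?_, fun y => ?_⟩
  · have h1 := hφ' x
    rw [hx, map_zero, ← algebraMap_smul D, ← map_smul, eq_comm, e.map_eq_zero_iff, algebraMap_smul,
      ← map_smul, IsLocalizedModule.eq_zero_iff S μ] at h1
    obtain ⟨c, hc⟩ := h1
    exact ⟨c * s, (c * s).2, by rw [mul_smul]; exact hc⟩
  · obtain ⟨⟨x, t⟩, hxt⟩ := IsLocalizedModule.surj S μ (e.symm (l y))
    have h1 : l (φ x) = l (s.1 • t.1 • y) := by
      rw [hφ', ← hxt, map_smul l, map_smul l, Submonoid.smul_def, ← algebraMap_smul D t.1 (e.symm (l y)),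
        map_smul e, e.apply_symm_apply, algebraMap_smul]
    obtain ⟨c, hc⟩ := IsLocalizedModule.exists_of_eq (S := S) h1
    refine ⟨c * s * t, (c * s * t).2, c.1 • x, ?_⟩
    rw [map_smul, mul_smul, mul_smul]
    exact hc

end

/-- Elementwise annihilation of a finitely generated module by a submonoid is uniform. -/
theorem exists_mem_annihilator_of_forall {R : Type*} [CommRing R] (S : Submonoid R) (N : Type*)
    [AddCommGroup N] [Module R N] [Module.Finite R N] (h : ∀ x : N, ∃ s ∈ S, s • x = 0) :
    ∃ s ∈ S, s ∈ Module.annihilator R N := by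
  obtain ⟨t, ht⟩ := Module.Finite.fg_top (R := R) (M := N)
  choose f hf hf0 using h
  refine ⟨∏ x ∈ t, f x, S.prod_mem fun x _ => hf x, ?_⟩
  rw [← Submodule.annihilator_top, ← ht, Submodule.mem_annihilator_span]
  rintro ⟨x, hx⟩
  obtain ⟨c, hc⟩ := Finset.dvd_prod_of_mem f hx
  rw [hc, mul_comm, mul_smul, hf0, smul_zero]

/-! ### Computation of the Ext group -/

section
variable {R : Type*} [CommRing R] [IsDomain R]

theorem LinearMap.exists_smul_eq_of_forall_dvd {N : Type*} [AddCommGroup N] [Module R N] {a : R}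
    (ha : a ≠ 0) (g : N →ₗ[R] R) (h : ∀ y, a ∣ g y) : ∃ f : N →ₗ[R] R, ∀ y, g y = a * f y := by
  choose f hf using h
  refine ⟨⟨⟨f, fun x y => ?_⟩, fun r x => ?_⟩, hf⟩
  · refine mul_left_cancel₀ ha ?_
    rw [mul_add, ← hf, ← hf, ← hf, map_add]
  · refine mul_left_cancel₀ ha ?_
    change a * f (r • x) = a * (r * f x)
    rw [mul_left_comm, ← hf, ← hf, map_smul, smul_eq_mul]

/-- If `P₂ → P₁ → P₀ → M → 0` is exact with `P₀` projective and the nonzero element `a` kills `M`,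
the first cohomology of `Hom(P_•, R)` is `Hom(M, R/a)`. Here `Z`, embedded by `i`, is the module of
cocycles and `H`, via `π`, its quotient by the coboundaries. Projectivity gives a contraction
`t : P₀ → P₁` of multiplication by `a` along `d₁`; a cocycle `f` is sent to the map `M → R/a`
induced by `f ∘ t`. -/
theorem nonempty_cohomology_equiv_hom_quotient {P₂ P₁ P₀ M Z H : Type*}
    [AddCommGroup P₂] [Module R P₂] [AddCommGroup P₁] [Module R P₁] [AddCommGroup P₀] [Module R P₀]
    [AddCommGroup M] [Module R M] [AddCommGroup Z] [Module R Z] [AddCommGroup H] [Module R H]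
    [Module.Projective R P₀]
    {d₂ : P₂ →ₗ[R] P₁} {d₁ : P₁ →ₗ[R] P₀} {ε : P₀ →ₗ[R] M}
    (h₁ : Function.Exact d₂ d₁) (h₀ : Function.Exact d₁ ε) (hε : Function.Surjective ε)
    (i : Z →ₗ[R] P₁ →ₗ[R] R)
    (hi : ∀ f, (∃ z, i z = f) ↔ f ∘ₗ d₂ = 0)
    (π : Z →ₗ[R] H) (hπ : Function.Surjective π) (hπ0 : ∀ z, π z = 0 ↔ ∃ g, i z = g ∘ₗ d₁)
    {a : R} (ha : a ≠ 0) (haM : ∀ x : M, a • x = 0) :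
    Nonempty (H ≃ₗ[R] (M →ₗ[R] R ⧸ Ideal.span {a})) := by
  obtain ⟨t, ht⟩ := Module.projective_lifting_property d₁.rangeRestrict
    ((LinearMap.lsmul R P₀ a).codRestrict (LinearMap.range d₁) fun x => by
      rw [LinearMap.mem_range]
      refine (h₀ _).mp ?_
      rw [LinearMap.lsmul_apply, map_smul, haM]) d₁.surjective_rangeRestrict
  have ht (x : P₀) : d₁ (t x) = a • x := congrArg Subtype.val (LinearMap.congr_fun ht x)
  have hit (z : Z) (y : P₁) : i z (t (d₁ y)) = a * i z y := by
    have : d₁ (t (d₁ y) - a • y) = 0 := by rw [map_sub, ht, map_smul, sub_self]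
    obtain ⟨w, hw⟩ := (h₁ _).mp this
    have := LinearMap.congr_fun ((hi _).mp ⟨z, rfl⟩) w
    rw [LinearMap.comp_apply, hw, map_sub, map_smul, LinearMap.zero_apply, sub_eq_zero] at this
    exact this
  let q : R →ₗ[R] R ⧸ Ideal.span {a} := Submodule.mkQ _
  have hq (r : R) : q r = 0 ↔ a ∣ r := by
    rw [← Ideal.mem_span_singleton]
    exact Submodule.Quotient.mk_eq_zero _
  let Θ : Z →ₗ[R] P₀ →ₗ[R] R ⧸ Ideal.span {a} :=
    (q.compRight R) ∘ₗ (t.lcomp R R) ∘ₗ i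
  have hΘ (z : Z) (x : P₀) : Θ z x = q (i z (t x)) := rfl
  let E : (M →ₗ[R] R ⧸ Ideal.span {a}) →ₗ[R] P₀ →ₗ[R] R ⧸ Ideal.span {a} := ε.lcomp R _
  have hE : Function.Injective E := fun ψ ψ' h => LinearMap.ext fun x => by
    obtain ⟨x, rfl⟩ := hε x
    exact LinearMap.congr_fun h x
  have hker : LinearMap.ker π = LinearMap.ker Θ := by
    ext z
    rw [LinearMap.mem_ker, LinearMap.mem_ker, hπ0]
    constructor
    · rintro ⟨g, hg⟩
      ext x
      rw [hΘ, hg, LinearMap.comp_apply, ht, LinearMap.zero_apply, hq, map_smul]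
      exact dvd_mul_right _ _
    · intro hz
      obtain ⟨g, hg⟩ := LinearMap.exists_smul_eq_of_forall_dvd ha (i z ∘ₗ t) fun y => by
        rw [← hq]
        exact LinearMap.congr_fun hz y
      refine ⟨g, LinearMap.ext fun y => mul_left_cancel₀ ha ?_⟩
      rw [← hit, LinearMap.comp_apply, ← hg, LinearMap.comp_apply]
  have hrange : LinearMap.range Θ = LinearMap.range E := by
    apply le_antisymm
    · rintro _ ⟨z, rfl⟩
      have hle : LinearMap.ker ε ≤ LinearMap.ker (Θ z) := by
        intro x hx
        obtain ⟨y, rfl⟩ := (h₀ x).mp hx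
        rw [LinearMap.mem_ker, hΘ, hit, hq]
        exact dvd_mul_right _ _
      refine ⟨(LinearMap.ker ε).liftQ (Θ z) hle ∘ₗ (ε.quotKerEquivOfSurjective hε).symm, ?_⟩
      ext x
      change (LinearMap.ker ε).liftQ (Θ z) hle ((ε.quotKerEquivOfSurjective hε).symm (ε x)) = Θ z x
      rw [show (ε.quotKerEquivOfSurjective hε).symm (ε x) = Submodule.Quotient.mk x from
        (LinearEquiv.symm_apply_eq _).mpr rfl]
      rfl
    · rintro _ ⟨ψ, rfl⟩
      obtain ⟨g, hg⟩ := Module.projective_lifting_property q (ψ ∘ₗ ε) (Submodule.mkQ_surjective _)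
      have hg (x : P₀) : q (g x) = ψ (ε x) := LinearMap.congr_fun hg x
      obtain ⟨f, hf⟩ := LinearMap.exists_smul_eq_of_forall_dvd ha (g ∘ₗ d₁) fun y => by
        rw [← hq, LinearMap.comp_apply, hg, h₀.apply_apply_eq_zero, map_zero]
      obtain ⟨z, hz⟩ := (hi f).mpr <| LinearMap.ext fun w => mul_left_cancel₀ ha <| by
        rw [LinearMap.comp_apply, ← hf, LinearMap.comp_apply, h₁.apply_apply_eq_zero, map_zero,
          LinearMap.zero_apply, mul_zero]
      refine ⟨z, LinearMap.ext fun x => ?_⟩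
      rw [hΘ, hz]
      change _ = ψ (ε x)
      rw [← hg]
      congr 1
      refine mul_left_cancel₀ ha ?_
      rw [← hf, LinearMap.comp_apply, ht, map_smul, smul_eq_mul]
  exact ⟨(π.quotKerEquivOfSurjective hπ).symm ≪≫ₗ Submodule.quotEquivOfEq _ _ hker ≪≫ₗ
    Θ.quotKerEquivRange ≪≫ₗ LinearEquiv.ofEq _ _ hrange ≪≫ₗ (LinearEquiv.ofInjective E hE).symm⟩
end

section
open CategoryTheory

variable {R : Type} [CommRing R] [IsDomain R]

theorem nonempty_extOne_equiv_hom_quotient (M : Type) [AddCommGroup M] [Module R M] {a : R}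
    (ha : a ≠ 0) (haM : ∀ x : M, a • x = 0) :
    Nonempty ((((Ext R (ModuleCat R) 1).obj (Opposite.op (ModuleCat.of R M))).obj
      (ModuleCat.of R R)) ≃ₗ[R] (M →ₗ[R] R ⧸ Ideal.span {a})) := by
  let P := projectiveResolution (ModuleCat.of R M)
  let K := P.complex.linearYonedaObj R (ModuleCat.of R R)
  let S := K.sc' 0 1 2
  let α : (((Ext R (ModuleCat R) 1).obj (Opposite.op (ModuleCat.of R M))).obj (ModuleCat.of R R)) ≅
      ModuleCat.of R (LinearMap.ker S.g.hom ⧸ LinearMap.range S.moduleCatToCycles) :=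
    P.isoExt 1 (ModuleCat.of R R) ≪≫
      ShortComplex.homologyMapIso (K.isoSc' 0 1 2 (by simp) (by simp)) ≪≫ S.moduleCatHomologyIso
  let σ := HomologicalComplex.singleObjXSelf (ComplexShape.down ℕ) 0 (ModuleCat.of R M)
  let ε : P.complex.X 0 ⟶ ModuleCat.of R M := P.π.f 0 ≫ σ.hom
  have hε : Epi ε := epi_comp _ _
  have h₁ := (ShortComplex.ShortExact.moduleCat_exact_iff_function_exact _).mp (P.exact_succ 0)
  have h₀ := (ShortComplex.ShortExact.moduleCat_exact_iff_function_exact _).mp P.exact₀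
  have hproj : Module.Projective R (P.complex.X 0) :=
    (IsProjective.iff_projective _).mpr (P.projective 0)
  let i : LinearMap.ker S.g.hom →ₗ[R] (P.complex.X 1 →ₗ[R] R) :=
    (ModuleCat.homLinearEquiv (S := R) (M := P.complex.X 1)
      (N := ModuleCat.of R R)).toLinearMap ∘ₗ (LinearMap.ker S.g.hom).subtype
  have h₀' : Function.Exact (P.complex.d 1 0).hom ε.hom := by
    intro x
    refine Iff.trans ?_ (h₀ x)
    exact map_eq_zero_iff σ.hom.hom ((ModuleCat.mono_iff_injective σ.hom).mp inferInstance)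
  have hi (f : P.complex.X 1 →ₗ[R] R) : (∃ z, i z = f) ↔ f ∘ₗ (P.complex.d 2 1).hom = 0 := by
    constructor
    · rintro ⟨z, rfl⟩
      exact congrArg ModuleCat.Hom.hom z.2
    · intro h
      exact ⟨⟨ModuleCat.ofHom f, ModuleCat.hom_ext h⟩, rfl⟩
  have hπ (z : LinearMap.ker S.g.hom) : (LinearMap.range S.moduleCatToCycles).mkQ z = 0 ↔
      ∃ g, i z = g ∘ₗ (P.complex.d 1 0).hom := by
    rw [Submodule.mkQ_apply, Submodule.Quotient.mk_eq_zero]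
    constructor
    · rintro ⟨g, rfl⟩
      exact ⟨ModuleCat.Hom.hom (show P.complex.X 0 ⟶ ModuleCat.of R R from g), rfl⟩
    · rintro ⟨g, hg⟩
      exact ⟨ModuleCat.ofHom g, Subtype.ext (ModuleCat.hom_ext hg.symm)⟩
  obtain ⟨e⟩ := nonempty_cohomology_equiv_hom_quotient h₁ h₀' ((ModuleCat.epi_iff_surjective _).mp hε)
    i hi (LinearMap.range S.moduleCatToCycles).mkQ (Submodule.mkQ_surjective _) hπ ha haM
  exact ⟨α.toLinearEquiv ≪≫ₗ e⟩

end

/-! ### The pseudo-isomorphism -/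

section
variable {p nv : ℕ} [Fact p.Prime]

theorem ringKrullDim_mvPowerSeries_padicInt_le :
    ringKrullDim (MvPowerSeries (Fin nv) ℤ_[p]) ≤ (nv + 1 : ℕ) := by
  refine (MvPowerSeries.ringKrullDim_fin_le ℤ_[p] nv).trans ?_
  have h : ringKrullDim ℤ_[p] ≤ 1 := Ring.krullDimLE_iff.mp inferInstance
  rw [add_comm nv 1, Nat.cast_add]
  exact add_le_add_left h _

theorem isPseudoNull_of_avoidMinimalPrimes (hnv : 1 ≤ nv) (N : Type*) [AddCommGroup N]
    [Module (MvPowerSeries (Fin nv) ℤ_[p]) N] [Module.Finite (MvPowerSeries (Fin nv) ℤ_[p]) N]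
    {a : MvPowerSeries (Fin nv) ℤ_[p]} (ha : a ≠ 0) (haN : ∀ x : N, a • x = 0)
    (h : ∀ x : N, ∃ s ∈ avoidMinimalPrimes a, s • x = 0) : IsPseudoNull p nv N := by
  obtain ⟨s, hs, hsN⟩ := exists_mem_annihilator_of_forall _ N h
  exact ringKrullDim_quotient_le_of_codim_two hnv ringKrullDim_mvPowerSeries_padicInt_le ha
    (Module.mem_annihilator.mpr haN) hsN hs

end

/-- A finitely generated torsion module `M` over `R = ℤ_p[[T_1,…,T_nv]]` is
pseudo-isomorphic to its Iwasawa adjoint `Ext¹_R(M, R)`: there is an `R`-linear map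
`M → Ext¹_R(M, R)` with pseudo-null kernel and cokernel. -/
theorem pseudo_isomorphic_to_iwasawa_adjoint (p nv : ℕ) [Fact p.Prime] (hnv : 1 ≤ nv)
    (M : Type) [AddCommGroup M] [Module (MvPowerSeries (Fin nv) ℤ_[p]) M]
    [Module.Finite (MvPowerSeries (Fin nv) ℤ_[p]) M]
    (hM : Module.IsTorsion (MvPowerSeries (Fin nv) ℤ_[p]) M) :
    ∃ φ : M →ₗ[MvPowerSeries (Fin nv) ℤ_[p]] ExtOne p nv M,
      IsPseudoNull p nv (LinearMap.ker φ) ∧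
      IsPseudoNull p nv ((ExtOne p nv M) ⧸ LinearMap.range φ) := by
  let R := MvPowerSeries (Fin nv) ℤ_[p]
  have hic : IsIntegrallyClosed R := MvPowerSeries.isIntegrallyClosed_fin ℤ_[p] nv
  obtain ⟨b, hb, hbM⟩ := exists_mem_annihilator_of_forall (nonZeroDivisors R) M
    fun x => by
      obtain ⟨s, hs⟩ := @hM x
      exact ⟨s, s.2, hs⟩
  let t : R := MvPowerSeries.X ⟨0, hnv⟩
  have ht : t ≠ 0 := nonZeroDivisors.ne_zero MvPowerSeries.X_mem_nonzeroDivisors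
  have htu : ¬ IsUnit t := fun h => by
    have := h.map (MvPowerSeries.constantCoeff (σ := Fin nv) (R := ℤ_[p]))
    rw [MvPowerSeries.constantCoeff_X] at this
    exact not_isUnit_zero this
  -- multiplying the annihilating element by a variable makes it a nonunit
  obtain ⟨a, ha, hau, haM⟩ : ∃ a : R, a ≠ 0 ∧ ¬ IsUnit a ∧ ∀ x : M, a • x = 0 :=
    ⟨t * b, mul_ne_zero ht (nonZeroDivisors.ne_zero hb), fun h => htu (isUnit_of_mul_isUnit_left h),
      fun x => by rw [mul_smul, Module.mem_annihilator.mp hbM, smul_zero]⟩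
  obtain ⟨φ, hker, hcoker⟩ := exists_hom_quotient_of_avoidMinimalPrimes M ha hau haM
  obtain ⟨e⟩ := nonempty_extOne_equiv_hom_quotient M ha haM
  have hfin : Module.Finite R (ExtOne p nv M) := Module.Finite.equiv e.symm
  have haE (y : ExtOne p nv M) : a • y = 0 := by
    rw [← e.map_eq_zero_iff, map_smul]
    ext x
    rw [LinearMap.smul_apply, ← map_smul, haM, map_zero, LinearMap.zero_apply]
  refine ⟨e.symm.toLinearMap ∘ₗ φ, ?_, ?_⟩
  · refine isPseudoNull_of_avoidMinimalPrimes hnv _ ha (fun x => Subtype.ext (haM x)) ?_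
    rintro ⟨x, hx⟩
    obtain ⟨s, hs, hsx⟩ := hker x (e.symm.map_eq_zero_iff.mp hx)
    exact ⟨s, hs, Subtype.ext hsx⟩
  · refine isPseudoNull_of_avoidMinimalPrimes hnv _ ha (fun y => ?_) fun y => ?_
    · obtain ⟨y, rfl⟩ := Submodule.Quotient.mk_surjective _ y
      rw [← Submodule.Quotient.mk_smul, haE, Submodule.Quotient.mk_zero]
    · obtain ⟨y, rfl⟩ := Submodule.Quotient.mk_surjective _ y
      obtain ⟨s, hs, x, hx⟩ := hcoker (e y)
      refine ⟨s, hs, ?_⟩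
      rw [← Submodule.Quotient.mk_smul, Submodule.Quotient.mk_eq_zero]
      refine ⟨x, ?_⟩
      change e.symm (φ x) = s • y
      rw [hx, map_smul, e.symm_apply_apply]
end

section
/- Let α = (α_i)_{i≥0} be a sequence with α_i ∈ O_K/ϖO_K and α_{i+1}^q = α_i for all i ≥ 0, and for each i choose a_i ∈ O_K with a_i mod ϖO_K = α_i. Then the sequence (a_i^{q^i})_{i≥0} converges in K to a limit α^♯ ∈ O_K; this limit is independent of the choice of the lifts a_i; it satisfies α^♯ ≡ α_0 (mod ϖO_K); and the resulting map α ↦ α^♯ from O_{K^♭} to O_K is multiplicative, i.e., (αβ)^♯ = α^♯ β^♯ and 1^♯ = 1. -/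
/-!
The quotient of `x ^ q - y ^ q` by `x - y` is `∑ x ^ i * y ^ (q - 1 - i)`, which modulo `ϖ` is
`q * y ^ (q - 1) = 0` as soon as `x ≡ y (mod ϖ)`, because `ϖ ∣ p ∣ q`. So raising to the `q`-th
power gains one factor `ϖ` in a congruence, and congruent elements have `q ^ n`-th powers that are
congruent modulo `ϖ ^ (n + 1)` (`pow_dvd_pow_sub_pow`). Two lifts of `α_i`, namely `a_i` and
`a_{i+1} ^ q`, or `a_i` and `b_i`, are congruent modulo `ϖ`; this makes `a_i ^ (q ^ i)` a Cauchy
sequence and its limit independent of the lifts. Every term of the sequence lies in the closed ball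
of radius `‖ϖ‖` around `a_0`, hence so does the limit. Multiplicativity is continuity of the
product.
-/

open Filter Topology

noncomputable section

/-- The valuation ring `O_K = {x : K | ‖x‖ ≤ 1}` of a nonarchimedean normed field. -/
def valRing (K : Type*) [NormedField K]
    (hna : IsNonarchimedean fun x : K => ‖x‖) : Subring K where
  carrier := {x : K | ‖x‖ ≤ 1}
  mul_mem' := by
    intro a b ha hb
    simp only [Set.mem_setOf_eq, norm_mul] at *
    exact mul_le_one₀ ha (norm_nonneg b) hb
  one_mem' := by simp
  add_mem' := by
    intro a b ha hb
    exact le_trans (hna a b) (max_le ha hb)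
  zero_mem' := by simp
  neg_mem' := by intro a ha; simpa using ha

/-- Divisibility in the valuation ring is comparison of norms. -/
theorem valRing_dvd_iff {K : Type*} [NormedField K] {hna : IsNonarchimedean fun x : K => ‖x‖}
    {d x : valRing K hna} : d ∣ x ↔ ‖(x : K)‖ ≤ ‖(d : K)‖ := by
  constructor
  · rintro ⟨c, rfl⟩
    have hc : ‖(c : K)‖ ≤ 1 := c.2
    simpa using mul_le_of_le_one_right (norm_nonneg (d : K)) hc
  · intro h
    by_cases hd : (d : K) = 0
    · have hx : (x : K) = 0 := by simpa [hd] using h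
      exact ⟨0, Subtype.ext (by simp [hx])⟩
    · have hc : ‖(x : K) / d‖ ≤ 1 := by
        rw [norm_div]
        exact div_le_one_of_le₀ h (norm_nonneg _)
      exact ⟨⟨(x : K) / d, hc⟩, Subtype.ext (mul_div_cancel₀ (x : K) hd).symm⟩

/-- Each `q`-th power gains one factor `ϖ` in a congruence between elements congruent modulo `ϖ`,
provided `ϖ ∣ q`. -/
theorem pow_dvd_pow_sub_pow {R : Type*} [CommRing R] {ϖ x y : R} {q : ℕ} (hq : ϖ ∣ (q : R))
    (h : ϖ ∣ x - y) (n : ℕ) : ϖ ^ (n + 1) ∣ x ^ q ^ n - y ^ q ^ n := by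
  induction n with
  | zero => simpa using h
  | succ n ih =>
    have h1 : ϖ ∣ x ^ q ^ n - y ^ q ^ n := (dvd_pow_self ϖ n.succ_ne_zero).trans ih
    have h2 := (dvd_geom_sum₂_iff_of_dvd_sub (n := q) h1).2 (hq.mul_right _)
    rw [pow_succ q n, pow_mul, pow_mul, ← geom_sum₂_mul, pow_succ' ϖ (n + 1)]
    exact mul_dvd_mul h2 ih

/-- **Existence and properties of the sharp map.**  Let `K` be a complete
nonarchimedean normed field extending `ℚ_p`, `O_K` its valuation ring,
`ϖ ∈ O_K` with `|p| ≤ |ϖ| < 1`, and `q = p^f`.  For a sequence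
`α = (α_i)` in `O_K/ϖO_K` with `α_{i+1}^q = α_i`, and any choice of lifts
`a_i ∈ O_K` of `α_i`, the sequence `(a_i^{q^i})` converges in `K` to a limit
`α^♯ ∈ O_K`; the limit is independent of the choice of lifts; it satisfies
`α^♯ ≡ α_0 (mod ϖO_K)`; and the map `α ↦ α^♯` is multiplicative, with `1^♯ = 1`. -/
theorem sharp_exists_and_multiplicative
    (p : ℕ) [Fact p.Prime] (K : Type*) [NormedField K] [CompleteSpace K]
    [Algebra ℚ_[p] K]
    (hna : IsNonarchimedean fun x : K => ‖x‖)
    (hext : ∀ c : ℚ_[p], ‖algebraMap ℚ_[p] K c‖ = ‖c‖)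
    (q f : ℕ) (hf : 0 < f) (hq : q = p ^ f)
    (ϖ : valRing K hna) (hϖp : ‖(p : K)‖ ≤ ‖(ϖ : K)‖) (hϖ1 : ‖(ϖ : K)‖ < 1)
    (α : ℕ → (valRing K hna ⧸ Ideal.span {ϖ}))
    (hα : ∀ i, α (i + 1) ^ q = α i)
    (a : ℕ → valRing K hna)
    (ha : ∀ i, Ideal.Quotient.mk (Ideal.span {ϖ}) (a i) = α i) :
    ∃ L : valRing K hna,
      -- the limit `α^♯` exists in `O_K`
      Tendsto (fun i => ((a i : K)) ^ q ^ i) atTop (nhds (L : K)) ∧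
      -- `α^♯ ≡ α_0 (mod ϖ O_K)`
      Ideal.Quotient.mk (Ideal.span {ϖ}) L = α 0 ∧
      -- the limit is independent of the choice of lifts
      (∀ b : ℕ → valRing K hna,
        (∀ i, Ideal.Quotient.mk (Ideal.span {ϖ}) (b i) = α i) →
        Tendsto (fun i => ((b i : K)) ^ q ^ i) atTop (nhds (L : K))) ∧
      -- the map `α ↦ α^♯` is multiplicative
      (∀ (β γ : ℕ → (valRing K hna ⧸ Ideal.span {ϖ})),
        (∀ i, β (i + 1) ^ q = β i) → (∀ i, γ (i + 1) ^ q = γ i) →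
        ∀ (b c : ℕ → valRing K hna),
        (∀ i, Ideal.Quotient.mk (Ideal.span {ϖ}) (b i) = β i) →
        (∀ i, Ideal.Quotient.mk (Ideal.span {ϖ}) (c i) = γ i) →
        ∀ (Lβ Lγ : valRing K hna),
        Tendsto (fun i => ((b i : K)) ^ q ^ i) atTop (nhds (Lβ : K)) →
        Tendsto (fun i => ((c i : K)) ^ q ^ i) atTop (nhds (Lγ : K)) →
        Tendsto (fun i => ((b i * c i : valRing K hna) : K) ^ q ^ i) atTop
          (nhds ((Lβ * Lγ : valRing K hna) : K))) ∧
      -- `1^♯ = 1`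
      Tendsto (fun i => ((1 : valRing K hna) : K) ^ q ^ i) atTop
        (nhds ((1 : valRing K hna) : K)) := by
  have hdvd : ∀ {x y : valRing K hna},
      Ideal.Quotient.mk (Ideal.span {ϖ}) x = Ideal.Quotient.mk (Ideal.span {ϖ}) y ↔ ϖ ∣ x - y := by
    intro x y
    rw [Ideal.Quotient.eq, Ideal.mem_span_singleton]
  have hϖq : ϖ ∣ (q : valRing K hna) := by
    have hp : ϖ ∣ (p : valRing K hna) := valRing_dvd_iff.2 (by simpa using hϖp)
    rw [hq, Nat.cast_pow]
    exact dvd_pow hp hf.ne'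
  have hclose : ∀ {x y : valRing K hna}, ϖ ∣ x - y → ∀ n : ℕ,
      ‖(x : K) ^ q ^ n - (y : K) ^ q ^ n‖ ≤ ‖(ϖ : K)‖ * ‖(ϖ : K)‖ ^ n := by
    intro x y h n
    simpa [pow_succ'] using valRing_dvd_iff.1 (pow_dvd_pow_sub_pow hϖq h n)
  have hcauchy : CauchySeq fun i => (a i : K) ^ q ^ i := by
    refine cauchySeq_of_le_geometric _ ‖(ϖ : K)‖ hϖ1 fun n => ?_
    have h : ϖ ∣ a n - a (n + 1) ^ q := hdvd.1 (by rw [map_pow, ha, ha, hα])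
    rw [dist_eq_norm, pow_succ' q n, pow_mul]
    simpa using hclose h n
  obtain ⟨L, hL⟩ := cauchySeq_tendsto_of_complete hcauchy
  have hL1 : ‖L‖ ≤ 1 :=
    le_of_tendsto hL.norm (Eventually.of_forall fun i => (a i ^ q ^ i).2)
  have hα0 : ∀ i, α i ^ q ^ i = α 0 := by
    intro i
    induction i with
    | zero => simp
    | succ i ih => rw [pow_succ' q i, pow_mul, hα, ih]
  have hL0 : ‖L - a 0‖ ≤ ‖(ϖ : K)‖ := by
    refine le_of_tendsto (hL.sub_const (a 0 : K)).norm (Eventually.of_forall fun i => ?_)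
    have h : ϖ ∣ a i ^ q ^ i - a 0 := hdvd.1 (by rw [map_pow, ha, ha, hα0])
    simpa using valRing_dvd_iff.1 h
  refine ⟨⟨L, hL1⟩, hL, ?_, ?_, ?_, ?_⟩
  · rw [← ha 0, hdvd, valRing_dvd_iff]
    simpa using hL0
  · intro b hb
    have h0 : Tendsto (fun i => (b i : K) ^ q ^ i - (a i : K) ^ q ^ i) atTop (𝓝 0) := by
      refine squeeze_zero_norm (fun i => hclose (hdvd.1 (by rw [hb, ha])) i) ?_
      simpa using (tendsto_pow_atTop_nhds_zero_of_lt_one (norm_nonneg _) hϖ1).const_mul ‖(ϖ : K)‖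
    simpa using h0.add hL
  · intro β γ _ _ b c _ _ Lβ Lγ hb hc
    simpa [mul_pow] using hb.mul hc
  · simp
end
end

section
/- The reduction map from lim_{x ↦ x^q} O_K (the set of sequences (b_i)_{i≥0} in O_K with b_{i+1}^q = b_i, a monoid under componentwise multiplication) to O_{K^♭} = lim_{x ↦ x^q} O_K/ϖO_K, sending (b_i) to (b_i mod ϖO_K), is a multiplicative bijection; its inverse sends α ∈ O_{K^♭} to the sequence (((α_j)_{j≥i})^♯)_{i≥0}, i.e., the i-th component of the inverse is the sharp of the i-fold shift of α. In particular O_{K^♭} does not depend on the choice of ϖ. -/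
/-!
Raising to the `p`-th power improves congruences: if `ϖ ∣ p` and `a ≡ b mod ϖ ^ n` with `n ≥ 1`,
then `a ^ p ≡ b ^ p mod ϖ ^ (n + 1)`.  Hence `a ≡ b mod ϖ` implies
`‖a ^ q ^ j - b ^ q ^ j‖ ≤ ‖ϖ‖ ^ (j + 1)` (`norm_pow_sub_pow_le`), which tends to `0` with `j`.
Two consequences give the theorem.

* If `b` reduces to `α` and `a j` lifts `α (i + j)`, then `a j ≡ b (i + j) mod ϖ`, so `a j ^ q ^ j`
  has the same limit as the constant sequence `b (i + j) ^ q ^ j = b i`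
  (`tendsto_of_reductionMap_eq`).  This is the formula for the inverse, and injectivity follows by
  uniqueness of limits.
* If `a j` lifts `α j`, then `a (j + 1) ^ q ≡ a j mod ϖ`, so `j ↦ a (i + j) ^ q ^ j` is Cauchy for
  every `i`.  All its terms are congruent to `a i` modulo `ϖ`, a closed condition, so its limit
  `b i` reduces to `α i`; and `b (i + 1) ^ q = b i` since the two sequences agree up to a shift of
  the index (`exists_reductionMap_eq`, surjectivity).
-/

open Filter Topology

noncomputable section

/-- The tilt `O_{K^♭} = lim_{x ↦ x^q} R` of a ring `R` of characteristic `p`,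
`q = p^f`: sequences `α` with `α (i+1) ^ q = α i`, a subring of `ℕ → R`. -/
def tiltSubring (R : Type*) [CommRing R] (p q f : ℕ) (hp : p.Prime)
    (hchar : CharP R p) (hq : q = p ^ f) : Subring (ℕ → R) where
  carrier := {α : ℕ → R | ∀ i, α (i + 1) ^ q = α i}
  mul_mem' := by
    intro a b ha hb i
    rw [Pi.mul_apply, Pi.mul_apply, mul_pow, ha i, hb i]
  one_mem' := by
    intro i
    rw [Pi.one_apply, Pi.one_apply, one_pow]
  add_mem' := by
    intro a b ha hb i
    haveI := hchar
    haveI : ExpChar R p := ExpChar.prime hp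
    subst hq
    rw [Pi.add_apply, Pi.add_apply, add_pow_expChar_pow, ha i, hb i]
  zero_mem' := by
    intro i
    rw [Pi.zero_apply, Pi.zero_apply, zero_pow (by subst hq; exact pow_ne_zero _ hp.ne_zero)]
  neg_mem' := by
    intro a ha i
    haveI := hchar
    haveI : ExpChar R p := ExpChar.prime hp
    subst hq
    rw [Pi.neg_apply, Pi.neg_apply, neg_eq_neg_one_mul, mul_pow, neg_one_pow_expChar_pow,
      neg_one_mul, ha i]

/-- The multiplicative monoid `lim_{x ↦ x^q} O` of sequences `b : ℕ → O` with
`b (i+1) ^ q = b i`, under componentwise multiplication. -/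
def limMonoid (O : Type*) [CommMonoid O] (q : ℕ) : Submonoid (ℕ → O) where
  carrier := {b : ℕ → O | ∀ i, b (i + 1) ^ q = b i}
  mul_mem' := by
    intro a b ha hb i
    rw [Pi.mul_apply, Pi.mul_apply, mul_pow, ha i, hb i]
  one_mem' := by
    intro i
    rw [Pi.one_apply, Pi.one_apply, one_pow]

/-- The reduction map `lim_{x ↦ x^q} O_K → O_{K^♭} = lim_{x ↦ x^q} O_K/ϖO_K`,
sending `(b_i)` to `(b_i mod ϖO_K)`. -/
def reductionMap (K : Type*) [NormedField K]
    (hna : IsNonarchimedean fun x : K => ‖x‖) (ϖ : valRing K hna)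
    (p q f : ℕ) (hp : p.Prime)
    (hchar : CharP (valRing K hna ⧸ Ideal.span {ϖ}) p) (hq : q = p ^ f)
    (b : limMonoid (valRing K hna) q) :
    tiltSubring (valRing K hna ⧸ Ideal.span {ϖ}) p q f hp hchar hq :=
  ⟨fun i => Ideal.Quotient.mk (Ideal.span {ϖ}) (b.1 i),
   fun i => by rw [← map_pow, b.2 i]⟩

section Aux

/-- If `ϖ ∣ p`, each `p`-th power raises the exponent of `ϖ` in a congruence by at least one:
in `(b + c) ^ p = b ^ p + c ^ p + p * b * c * r` with `c` divisible by `ϖ ^ (n + 1)`, both error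
terms are divisible by `ϖ ^ (n + 2)`. -/
lemma pow_succ_dvd_pow_sub_pow {R : Type*} [CommRing R] {p : ℕ} (hp : p.Prime) {ϖ a b : R}
    (hϖ : ϖ ∣ (p : R)) (h : ϖ ∣ a - b) (n : ℕ) : ϖ ^ (n + 1) ∣ a ^ p ^ n - b ^ p ^ n := by
  induction n with
  | zero => simpa using h
  | succ n ih =>
    obtain ⟨c, hc⟩ := ih
    obtain ⟨d, hd⟩ := hϖ
    obtain ⟨r, hr⟩ := exists_add_pow_prime_eq hp (b ^ p ^ n) (ϖ ^ (n + 1) * c)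
    have ha : a ^ p ^ n = b ^ p ^ n + ϖ ^ (n + 1) * c := by rw [← hc]; ring
    have h1 : ϖ ^ (n + 1 + 1) ∣ (ϖ ^ (n + 1) * c) ^ p := by
      rw [mul_pow, ← pow_mul]
      refine Dvd.dvd.mul_right (pow_dvd_pow _ ?_) _
      nlinarith [hp.two_le]
    have h2 : ϖ ^ (n + 1 + 1) ∣ (p : R) * b ^ p ^ n * (ϖ ^ (n + 1) * c) * r :=
      ⟨d * b ^ p ^ n * c * r, by rw [hd]; ring⟩
    have h3 : a ^ p ^ (n + 1) - b ^ p ^ (n + 1)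
        = (ϖ ^ (n + 1) * c) ^ p + (p : R) * b ^ p ^ n * (ϖ ^ (n + 1) * c) * r := by
      rw [pow_succ p n, pow_mul, pow_mul, ha, hr]; ring
    rw [h3]
    exact dvd_add h1 h2

variable {K : Type*} [NormedField K] {hna : IsNonarchimedean fun x : K => ‖x‖}

lemma valRing_norm_le (x : valRing K hna) : ‖(x : K)‖ ≤ 1 := x.2

lemma valRing_norm_le_of_dvd {x y : valRing K hna} (h : x ∣ y) : ‖(y : K)‖ ≤ ‖(x : K)‖ := by
  obtain ⟨c, rfl⟩ := h
  rw [Subring.coe_mul, norm_mul]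
  exact mul_le_of_le_one_right (norm_nonneg _) (valRing_norm_le c)

lemma valRing_dvd_of_norm_le {x y : valRing K hna} (hx : (x : K) ≠ 0)
    (h : ‖(y : K)‖ ≤ ‖(x : K)‖) : x ∣ y := by
  refine ⟨⟨(y : K) / x, ?_⟩, ?_⟩
  · change ‖(y : K) / x‖ ≤ 1
    rw [norm_div]
    exact div_le_one_of_le₀ h (norm_nonneg _)
  · ext
    change (y : K) = x * (y / x)
    field_simp

lemma mk_eq_mk_iff_dvd {R : Type*} [CommRing R] {ϖ x y : R} :
    Ideal.Quotient.mk (Ideal.span {ϖ}) x = Ideal.Quotient.mk (Ideal.span {ϖ}) y ↔ ϖ ∣ x - y := by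
  rw [Ideal.Quotient.eq, Ideal.mem_span_singleton]

lemma dvd_natCast_of_charP {R : Type*} [CommRing R] {ϖ : R} {p : ℕ}
    (hchar : CharP (R ⧸ Ideal.span {ϖ}) p) : ϖ ∣ (p : R) := by
  rw [← Ideal.mem_span_singleton, ← Ideal.Quotient.eq_zero_iff_mem, map_natCast]
  exact CharP.cast_eq_zero _ _

/-- The congruence `a ^ q ^ j ≡ b ^ q ^ j` modulo `ϖ ^ (f * j + 1)` in terms of norms; the exponent
is only used through `f * j + 1 ≥ j + 1`, which is where `0 < f` enters. -/
lemma norm_pow_sub_pow_le {p q f : ℕ} (hp : p.Prime) (hf : 0 < f) (hq : q = p ^ f)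
    {ϖ : valRing K hna} (hϖ : ϖ ∣ (p : valRing K hna)) {a b : valRing K hna} (h : ϖ ∣ a - b)
    (j : ℕ) : ‖(a : K) ^ q ^ j - (b : K) ^ q ^ j‖ ≤ ‖(ϖ : K)‖ ^ (j + 1) := by
  have h1 := pow_succ_dvd_pow_sub_pow hp hϖ h (f * j)
  rw [pow_mul, ← hq] at h1
  have h2 := valRing_norm_le_of_dvd
    ((pow_dvd_pow ϖ (show j + 1 ≤ f * j + 1 by nlinarith)).trans h1)
  simpa using h2

lemma limMonoid_pow {O : Type*} [CommMonoid O] {q : ℕ} (b : limMonoid O q) (i j : ℕ) :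
    b.1 (i + j) ^ q ^ j = b.1 i := by
  induction j with
  | zero => simp
  | succ j ih => rw [pow_succ', pow_mul, ← add_assoc, b.2 (i + j), ih]

lemma tiltSubring_pow {R : Type*} [CommRing R] {p q f : ℕ} {hp : p.Prime} {hchar : CharP R p}
    {hq : q = p ^ f} (α : tiltSubring R p q f hp hchar hq) (i j : ℕ) :
    α.1 (i + j) ^ q ^ j = α.1 i := by
  induction j with
  | zero => simp
  | succ j ih => rw [pow_succ', pow_mul, ← add_assoc, α.2 (i + j), ih]

/-- If `b` reduces to `α`, then `b i` is the sharp of the `i`-fold shift of `α`. -/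
lemma tendsto_of_reductionMap_eq {p q f : ℕ} {hp : p.Prime} (hf : 0 < f) {hq : q = p ^ f}
    {ϖ : valRing K hna} (hϖ1 : ‖(ϖ : K)‖ < 1)
    {hchar : CharP (valRing K hna ⧸ Ideal.span {ϖ}) p}
    {α : tiltSubring (valRing K hna ⧸ Ideal.span {ϖ}) p q f hp hchar hq}
    {b : limMonoid (valRing K hna) q} (hb : reductionMap K hna ϖ p q f hp hchar hq b = α)
    (i : ℕ) (a : ℕ → valRing K hna)
    (ha : ∀ j, Ideal.Quotient.mk (Ideal.span {ϖ}) (a j) = α.1 (i + j)) :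
    Tendsto (fun j => ((a j : K)) ^ q ^ j) atTop (𝓝 (b.1 i : K)) := by
  have key : ∀ j, ‖(a j : K) ^ q ^ j - (b.1 i : K)‖ ≤ ‖(ϖ : K)‖ ^ (j + 1) := fun j => by
    have h1 : ϖ ∣ a j - b.1 (i + j) := by
      rw [← mk_eq_mk_iff_dvd, ha j, ← hb]
      rfl
    have h2 := norm_pow_sub_pow_le hp hf hq (dvd_natCast_of_charP hchar) h1 j
    rwa [← Subring.coe_pow _ (b.1 (i + j)), limMonoid_pow] at h2
  rw [tendsto_iff_norm_sub_tendsto_zero]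
  exact squeeze_zero (fun _ => norm_nonneg _) key
    ((tendsto_pow_atTop_nhds_zero_of_lt_one (norm_nonneg _) hϖ1).comp (tendsto_add_atTop_nat 1))

/-- Surjectivity of the reduction map: the sharps of the shifts of `α` form a preimage of `α`. -/
lemma exists_reductionMap_eq [CompleteSpace K] {p q f : ℕ} {hp : p.Prime} (hf : 0 < f)
    {hq : q = p ^ f} {ϖ : valRing K hna} (hϖ0 : (ϖ : K) ≠ 0) (hϖ1 : ‖(ϖ : K)‖ < 1)
    {hchar : CharP (valRing K hna ⧸ Ideal.span {ϖ}) p}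
    (α : tiltSubring (valRing K hna ⧸ Ideal.span {ϖ}) p q f hp hchar hq) :
    ∃ b, reductionMap K hna ϖ p q f hp hchar hq b = α := by
  choose a ha using fun i => Ideal.Quotient.mk_surjective (α.1 i)
  let s : ℕ → ℕ → K := fun i j => (a (i + j) : K) ^ q ^ j
  have hcauchy : ∀ i, CauchySeq (s i) := fun i => by
    refine cauchySeq_of_le_geometric ‖(ϖ : K)‖ ‖(ϖ : K)‖ hϖ1 fun j => ?_
    have h1 : ϖ ∣ a (i + j) - a (i + (j + 1)) ^ q := by
      rw [← mk_eq_mk_iff_dvd, map_pow, ha, ha, ← add_assoc, α.2 (i + j)]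
    have h2 := norm_pow_sub_pow_le hp hf hq (dvd_natCast_of_charP hchar) h1 j
    rwa [Subring.coe_pow, ← pow_mul, ← pow_succ', pow_succ' ‖(ϖ : K)‖, ← dist_eq_norm] at h2
  choose L hL using fun i => cauchySeq_tendsto_of_complete (hcauchy i)
  have hL1 : ∀ i, ‖L i‖ ≤ 1 := fun i =>
    le_of_tendsto (hL i).norm (Eventually.of_forall fun j => valRing_norm_le (a (i + j) ^ q ^ j))
  have hLpow : ∀ i, L (i + 1) ^ q = L i := fun i => by
    refine tendsto_nhds_unique ((hL (i + 1)).pow q) ?_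
    refine ((hL i).comp (tendsto_add_atTop_nat 1)).congr fun j => ?_
    simp only [s, Function.comp_apply]
    rw [← pow_mul, ← pow_succ, add_assoc i 1 j, add_comm 1 j]
  -- Every term of the sequence `s i` is congruent to `a i` modulo `ϖ`, hence so is its limit.
  have hLa : ∀ i, ‖L i - a i‖ ≤ ‖(ϖ : K)‖ := fun i => by
    refine le_of_tendsto ((hL i).sub_const (a i : K)).norm (Eventually.of_forall fun j => ?_)
    have h1 : ϖ ∣ a (i + j) ^ q ^ j - a i := by
      rw [← mk_eq_mk_iff_dvd, map_pow, ha, ha, tiltSubring_pow]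
    exact valRing_norm_le_of_dvd h1
  refine ⟨⟨fun i => ⟨L i, hL1 i⟩, fun i => Subtype.ext (hLpow i)⟩, Subtype.ext (funext fun i => ?_)⟩
  change Ideal.Quotient.mk (Ideal.span {ϖ}) (⟨L i, hL1 i⟩ : valRing K hna) = α.1 i
  rw [← ha i, mk_eq_mk_iff_dvd]
  exact valRing_dvd_of_norm_le hϖ0 (hLa i)

end Aux

/-- **The multiplicative bijection `lim_{x ↦ x^q} O_K ≃ O_{K^♭}`.**  The reduction map
is a multiplicative bijection, and its inverse sends `α` to the sequence whose `i`-th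
component is the sharp of the `i`-fold shift of `α` (i.e. the limit of `a_j^{q^j}` over
lifts `a_j` of `α_{i+j}`). -/
theorem reductionMap_bijective
    (p : ℕ) [Fact p.Prime] (K : Type*) [NormedField K] [CompleteSpace K]
    [Algebra ℚ_[p] K]
    (hna : IsNonarchimedean fun x : K => ‖x‖)
    (hext : ∀ c : ℚ_[p], ‖algebraMap ℚ_[p] K c‖ = ‖c‖)
    (q f : ℕ) (hf : 0 < f) (hq : q = p ^ f)
    (ϖ : valRing K hna) (hϖp : ‖(p : K)‖ ≤ ‖(ϖ : K)‖) (hϖ1 : ‖(ϖ : K)‖ < 1)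
    (hchar : CharP (valRing K hna ⧸ Ideal.span {ϖ}) p) :
    Function.Bijective (reductionMap K hna ϖ p q f Fact.out hchar hq) ∧
    (∀ b c : limMonoid (valRing K hna) q,
      reductionMap K hna ϖ p q f Fact.out hchar hq (b * c) =
        reductionMap K hna ϖ p q f Fact.out hchar hq b *
          reductionMap K hna ϖ p q f Fact.out hchar hq c) ∧
    (∀ (α : tiltSubring (valRing K hna ⧸ Ideal.span {ϖ}) p q f Fact.out hchar hq)
      (b : limMonoid (valRing K hna) q),
      reductionMap K hna ϖ p q f Fact.out hchar hq b = α →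
      ∀ (i : ℕ) (a : ℕ → valRing K hna),
        (∀ j, Ideal.Quotient.mk (Ideal.span {ϖ}) (a j) = (α : ℕ → _) (i + j)) →
        Tendsto (fun j => ((a j : K)) ^ q ^ j) atTop (nhds (((b : ℕ → valRing K hna) i : K)))) := by
  have hp : p.Prime := Fact.out
  have hϖ0 : (ϖ : K) ≠ 0 := by
    have hpK : ‖(p : K)‖ = ‖(p : ℚ_[p])‖ := by rw [← hext, map_natCast]
    have hp0 : 0 < ‖(p : K)‖ := by
      rw [hpK, norm_pos_iff]
      exact_mod_cast hp.ne_zero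
    exact norm_pos_iff.mp (hp0.trans_le hϖp)
  refine ⟨⟨fun b c hbc => ?_, exists_reductionMap_eq hf hϖ0 hϖ1⟩, fun b c => ?_,
    fun α b hb i a ha => tendsto_of_reductionMap_eq hf hϖ1 hb i a ha⟩
  · -- With `c (i + j)` as lifts, both `b i` and `c i` are limits of `c (i + j) ^ q ^ j`.
    refine Subtype.ext (funext fun i => Subtype.ext ?_)
    exact tendsto_nhds_unique
      (tendsto_of_reductionMap_eq hf hϖ1 hbc i (fun j => c.1 (i + j)) fun _ => rfl)
      (tendsto_of_reductionMap_eq (hp := hp) (hchar := hchar) (hq := hq)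
        hf hϖ1 rfl i (fun j => c.1 (i + j)) fun _ => rfl)
  · exact Subtype.ext (funext fun i => map_mul _ (b.1 i) (c.1 i))
end
end
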